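/- arXiv:1910.00980 — 10 statements merged into one kernel-verified Lean document; each statement's English description precedes it below -/
import Mathlib

section
/- Let N > 2 and let θ = (θ_1, …, θ_N) be a global classical solution of the delayed Kuramoto system satisfying (H1)–(H3). If in addition the time delay satisfies τ < ln(1 + ζ̄/(κ(2 + ζ̄))), where ζ̄ := cos(D_* + R_ω τ̄) and τ̄ := min{δ/(2R_ω), (π/2 − D_*)/R_ω}, then the oscillators achieve complete frequency synchronization exponentially fast: there exist t_* > 0 and positive constants C, γ (independent of t) such that D(ω(t)) ≤ C e^{−γ t} for all t ≥ t_*. -/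
open Real Filter Set

/-! The proof has two stages, both resting on a first-exit argument for finitely many functions.

*Phases enter the dual arc.* Because `|θ k (t - τ) - θ k t| ≤ Rω τ < δ / 2`, whenever the phase
diameter takes a value `D` between `Dstar` and slightly above `Dθ0`, the extremal pair is pulled
together: the `N - 2` other oscillators contribute
`-(κ / N) (N - 2) * 2 sin (D / 2) cos ((D + δ) / 2)`, which beats `DΩ` by (H2), and the two mutual
terms have the right sign.  Hence `D(θ(t))` stays below the barrier
`Dstar + A * exp (-lam * t)`, and from some time on all delayed phase differences
`θ k (t - τ) - θ i t` lie in a compact subset of `(-π / 2, π / 2)`.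

*Frequencies contract.* Differentiating the equation gives the delayed linear consensus system
`ω i' = ∑ k ≠ i, a i k (ω k (t - τ) - ω i)` with coefficients `a i k` bounded below by a positive
constant.  An interval `[m, M]` containing all frequencies on a window of length `τ` is
invariant (`consensus_upper`).  One fixed oscillator lies in the lower (or upper) half of `[m, M]`;
it stays away from the opposite endpoint for a bounded time, and pulls all the others away from
it, so after time `2 τ + 1` the interval shrinks by a fixed factor (`consensus_shrink_upper`,
`consensus_shrink`).  Iteration gives exponential decay (`consensus_exp_decay`). -/

/-! ### First exit and a differential inequality -/

/-- First-exit principle: finitely many continuous functions, negative at time `a`, stay negative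
provided that any of them reaching `0` for the first time does so with negative derivative. -/
lemma first_exit {ι : Type*} [Finite ι] (f : ι → ℝ → ℝ) (a : ℝ)
    (hc : ∀ i, Continuous (f i)) (h0 : ∀ i, f i a < 0)
    (h : ∀ t > a, ∀ i, (∀ s ∈ Icc a t, ∀ k, f k s ≤ 0) → f i t = 0 →
      ∃ d < 0, HasDerivAt (f i) d t) :
    ∀ t ≥ a, ∀ i, f i t < 0 := by
  by_contra hcon
  push Not at hcon
  obtain ⟨t', ht', i', hi'⟩ := hcon
  set S : Set ℝ := Ici a ∩ ⋃ i, {t | 0 ≤ f i t} with hS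
  have hSc : IsClosed S :=
    isClosed_Ici.inter (isClosed_iUnion_of_finite fun i => isClosed_le continuous_const (hc i))
  have hne : S.Nonempty := ⟨t', ht', mem_iUnion.2 ⟨i', hi'⟩⟩
  have hbd : BddBelow S := ⟨a, fun x hx => hx.1⟩
  have hmem := hSc.csInf_mem hne hbd
  set t1 := sInf S with ht1
  obtain ⟨hat, hex⟩ := hmem
  obtain ⟨i, hi⟩ := mem_iUnion.1 hex
  have hi : 0 ≤ f i t1 := hi
  have hat : a ≤ t1 := hat
  have hlt : a < t1 := by
    rcases hat.lt_or_eq with h1 | h1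
    · exact h1
    · rw [← h1] at hi; exact absurd (h0 i) (not_lt.2 hi)
  have hbefore : ∀ s, a ≤ s → s < t1 → ∀ k, f k s < 0 := by
    intro s hs hs1 k
    by_contra hk
    exact notMem_of_lt_csInf hs1 hbd ⟨hs, mem_iUnion.2 ⟨k, not_lt.1 hk⟩⟩
  have hev : ∀ᶠ s in nhdsWithin t1 (Iio t1), a < s ∧ s < t1 :=
    Ioo_mem_nhdsLT hlt
  have hat1 : ∀ k, f k t1 ≤ 0 := by
    intro k
    refine le_of_tendsto ((hc k).continuousAt.tendsto.mono_left
      (nhdsWithin_le_nhds (s := Iio t1))) ?_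
    filter_upwards [hev] with s hs
    exact (hbefore s hs.1.le hs.2 k).le
  have hz : f i t1 = 0 := le_antisymm (hat1 i) hi
  obtain ⟨d, hd, hder⟩ := h t1 hlt i (fun s hs k => by
    rcases hs.2.lt_or_eq with h1 | h1
    · exact (hbefore s hs.1 h1 k).le
    · rw [h1]; exact hat1 k) hz
  have hsl := (hasDerivAt_iff_tendsto_slope.1 hder).mono_left
    (nhdsWithin_mono t1 (show Iio t1 ⊆ {t1}ᶜ from fun _ hx => ne_of_lt hx))
  have hneg := hsl.eventually (gt_mem_nhds hd)
  obtain ⟨s, hs, hs1, hs2⟩ := (hneg.and hev).exists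
  rw [slope_def_field, hz, sub_zero] at hs
  have := hbefore s hs1.le hs2 i
  have h3 : 0 < f i s / (s - t1) := div_pos_of_neg_of_neg this (by linarith)
  linarith

/-- Integrated form of `u' ≥ -K u + h` with `h ≥ 0`. -/
lemma lower_gronwall (u : ℝ → ℝ) (a b K h : ℝ) (hab : a ≤ b) (hK : 0 ≤ K) (hh : 0 ≤ h)
    (hd : ∀ t ∈ Icc a b, ∃ d, HasDerivAt u d t ∧ h - K * u t ≤ d) :
    exp (-K * (b - a)) * (u a + h * (b - a)) ≤ u b := by
  choose! d hd1 hd2 using hd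
  have hder : ∀ t ∈ Icc a b, HasDerivAt (fun t => u t * exp (K * (t - a)) - h * (t - a))
      (d t * exp (K * (t - a)) + u t * (exp (K * (t - a)) * K) - h) t := by
    intro t ht
    have h1 : HasDerivAt (fun t : ℝ => t - a) 1 t := (hasDerivAt_id t).sub_const a
    have h2 := (h1.const_mul K).exp
    have h3 := ((hd1 t ht).mul h2).sub (h1.const_mul h)
    have e : d t * exp (K * (t - a)) + u t * (exp (K * (t - a)) * K) - h
        = d t * exp (K * (t - a)) + u t * (exp (K * (t - a)) * (K * 1)) - h * 1 := by ring
    rw [e]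
    exact h3
  have hmono : MonotoneOn (fun t => u t * exp (K * (t - a)) - h * (t - a)) (Icc a b) := by
    refine monotoneOn_of_hasDerivWithinAt_nonneg (convex_Icc a b)
      (f' := fun t => d t * exp (K * (t - a)) + u t * (exp (K * (t - a)) * K) - h)
      (fun t ht => (hder t ht).continuousAt.continuousWithinAt)
      (fun t ht => (hder t (interior_subset ht)).hasDerivWithinAt) ?_
    intro t ht
    have ht := interior_subset ht
    have h1 := hd2 t ht
    have h2 : 1 ≤ exp (K * (t - a)) := one_le_exp (mul_nonneg hK (by linarith [ht.1]))
    have h3 : 0 ≤ (d t + K * u t - h) * exp (K * (t - a)) :=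
      mul_nonneg (by linarith) (exp_pos _).le
    have h4 : 0 ≤ h * (exp (K * (t - a)) - 1) := mul_nonneg hh (by linarith)
    show 0 ≤ d t * exp (K * (t - a)) + u t * (exp (K * (t - a)) * K) - h
    nlinarith
  have h1 := hmono (left_mem_Icc.2 hab) (right_mem_Icc.2 hab) hab
  simp only [sub_self, mul_zero, exp_zero, mul_one, sub_zero] at h1
  have h2 : u b = exp (-K * (b - a)) * (u b * exp (K * (b - a))) := by
    rw [mul_left_comm, ← exp_add]; simp
  rw [h2]
  exact mul_le_mul_of_nonneg_left (by linarith) (exp_pos _).le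

/-! ### Delayed linear consensus -/

/-- The delayed linear consensus system `ω i' = ∑ k ≠ i, a i k (ω k (t - τ) - ω i)` from time `T0`
on, with off-diagonal coefficients at least `a0` and row sums at most `K`. -/
structure Consensus {N : ℕ} (ω : Fin N → ℝ → ℝ) (a : Fin N → Fin N → ℝ → ℝ)
    (τ T0 a0 K : ℝ) : Prop where
  cont : ∀ i, Continuous (ω i)
  deriv : ∀ i, ∀ t ≥ T0, HasDerivAt (ω i)
    (∑ k ∈ Finset.univ.erase i, a i k t * (ω k (t - τ) - ω i t)) t
  lower : ∀ i k, ∀ t ≥ T0, a0 ≤ a i k t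
  upper : ∀ i, ∀ t ≥ T0, ∑ k ∈ Finset.univ.erase i, a i k t ≤ K

lemma Consensus.neg {N : ℕ} {ω : Fin N → ℝ → ℝ} {a : Fin N → Fin N → ℝ → ℝ}
    {τ T0 a0 K : ℝ} (h : Consensus ω a τ T0 a0 K) :
    Consensus (fun i t => -ω i t) a τ T0 a0 K where
  cont i := (h.cont i).neg
  deriv i t ht := by
    have e : ∑ k ∈ Finset.univ.erase i, a i k t * (-ω k (t - τ) - -ω i t)
        = -∑ k ∈ Finset.univ.erase i, a i k t * (ω k (t - τ) - ω i t) := by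
      rw [← Finset.sum_neg_distrib]
      exact Finset.sum_congr rfl fun k _ => by ring
    rw [e]
    exact (h.deriv i t ht).neg
  lower := h.lower
  upper := h.upper

/-- An upper bound valid on a window of length `τ` persists for all later times. -/
lemma consensus_upper {N : ℕ} {ω : Fin N → ℝ → ℝ} {a : Fin N → Fin N → ℝ → ℝ}
    {τ T0 a0 K : ℝ} (h : Consensus ω a τ T0 a0 K) (ha0 : 0 ≤ a0) (hτ : 0 ≤ τ)
    {t0 M : ℝ} (ht0 : T0 ≤ t0) (hM : ∀ i, ∀ s ∈ Icc (t0 - τ) t0, ω i s ≤ M) :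
    ∀ i, ∀ s ≥ t0 - τ, ω i s ≤ M := by
  -- The barrier `M + ε (1 + (t - t0))` has positive slope, so it cannot be touched.
  have key : ∀ ε > 0, ∀ t ≥ t0, ∀ i, ω i t - (M + ε * (1 + (t - t0))) < 0 := by
    intro ε hε
    refine first_exit (fun i t => ω i t - (M + ε * (1 + (t - t0)))) t0
      (fun i => (h.cont i).sub (by fun_prop)) ?_ ?_
    · intro i
      have := hM i t0 ⟨by linarith, le_refl _⟩
      simp only [sub_self, add_zero, mul_one]
      linarith
    · intro t ht i hall hi
      have h1 := h.deriv i t (by linarith)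
      have h2 : HasDerivAt (fun t => M + ε * (1 + (t - t0))) ε t := by
        have := (((((hasDerivAt_id t).sub_const t0).const_add 1).const_mul ε).const_add M)
        simpa using this
      refine ⟨_, ?_, h1.sub h2⟩
      have : ∑ k ∈ Finset.univ.erase i, a i k t * (ω k (t - τ) - ω i t) ≤ 0 := by
        refine Finset.sum_nonpos fun k _ => ?_
        refine mul_nonpos_of_nonneg_of_nonpos (ha0.trans (h.lower i k t (by linarith))) ?_
        have hw : ω k (t - τ) ≤ M + ε * (1 + (t - t0)) := by
          rcases le_total t0 (t - τ) with h3 | h3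
          · have := hall (t - τ) ⟨h3, by linarith⟩ k
            nlinarith
          · have := hM k (t - τ) ⟨by linarith, h3⟩
            nlinarith
        linarith
      linarith
  intro i s hs
  rcases le_total t0 s with h1 | h1
  · refine le_of_forall_pos_le_add fun η hη => ?_
    have hp : 0 < 1 + (s - t0) := by linarith
    have := key (η / (1 + (s - t0))) (div_pos hη hp) s h1 i
    rw [div_mul_cancel₀ _ hp.ne'] at this
    linarith
  · exact hM i s ⟨hs, h1⟩

/-- If all frequencies lie in `[m, M]` and oscillator `p` is in the lower half at time `t0`, then
after time `2 τ + 1` the upper endpoint can be lowered by a fixed fraction of `M - m`. -/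
lemma consensus_shrink_upper {N : ℕ} {ω : Fin N → ℝ → ℝ} {a : Fin N → Fin N → ℝ → ℝ}
    {τ T0 a0 K : ℝ} (h : Consensus ω a τ T0 a0 K) (ha0 : 0 ≤ a0) (ha1 : a0 ≤ 1) (hK : 0 ≤ K)
    (hτ : 0 ≤ τ) {t0 m M : ℝ} (ht0 : T0 ≤ t0) (hmM : m ≤ M)
    (hM : ∀ i, ∀ s ≥ t0 - τ, ω i s ≤ M) (p : Fin N) (hp : ω p t0 ≤ (M + m) / 2) :
    ∀ i, ∀ s ≥ t0 + (2 * τ + 1) - τ,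
      ω i s ≤ M - a0 * exp (-K * (2 * τ + 1)) ^ 2 / 2 * (M - m) := by
  set E := exp (-K * (2 * τ + 1)) with hE
  have hEpos : 0 < E := exp_pos _
  have hE1 : E ≤ 1 := by
    rw [hE]; exact exp_le_one_iff.2 (by nlinarith)
  have hexp : ∀ x, x ≤ 2 * τ + 1 → E ≤ exp (-K * x) := fun x hx =>
    exp_le_exp.2 (by nlinarith)
  have hu : ∀ i, ∀ t ≥ t0, HasDerivAt (fun t => M - ω i t)
      (-∑ k ∈ Finset.univ.erase i, a i k t * (ω k (t - τ) - ω i t)) t := fun i t ht => by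
    simpa using (h.deriv i t (by linarith)).const_sub M
  have hsum : ∀ i, ∀ t ≥ t0, ∑ k ∈ Finset.univ.erase i, a i k t * (M - ω k (t - τ))
      - K * (M - ω i t) ≤ -∑ k ∈ Finset.univ.erase i, a i k t * (ω k (t - τ) - ω i t) := by
    intro i t ht
    have e : -∑ k ∈ Finset.univ.erase i, a i k t * (ω k (t - τ) - ω i t)
        = ∑ k ∈ Finset.univ.erase i, a i k t * (M - ω k (t - τ))
          - (∑ k ∈ Finset.univ.erase i, a i k t) * (M - ω i t) := by
      rw [Finset.sum_mul, ← Finset.sum_sub_distrib, ← Finset.sum_neg_distrib]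
      exact Finset.sum_congr rfl fun k _ => by ring
    rw [e]
    have := mul_le_mul_of_nonneg_right (h.upper i t (by linarith))
      (sub_nonneg.2 (hM i t (by linarith)))
    linarith
  have hnn : ∀ i k, ∀ t ≥ t0, 0 ≤ a i k t * (M - ω k (t - τ)) := fun i k t ht =>
    mul_nonneg (ha0.trans (h.lower i k t (by linarith)))
      (sub_nonneg.2 (hM k (t - τ) (by linarith)))
  -- Oscillator `p` keeps a definite distance from `M` on `[t0, t0 + 2 τ + 1]`.
  have hpb : ∀ s ∈ Icc t0 (t0 + (2 * τ + 1)), E * ((M - m) / 2) ≤ M - ω p s := by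
    intro s hs
    have := lower_gronwall (fun t => M - ω p t) t0 s K 0 hs.1 hK le_rfl (fun t ht =>
      ⟨_, hu p t ht.1, by
        have h1 := hsum p t ht.1
        have h2 := Finset.sum_nonneg (fun k (_ : k ∈ Finset.univ.erase p) => hnn p k t ht.1)
        show 0 - K * (M - ω p t) ≤ _
        linarith⟩)
    simp only [zero_mul, add_zero] at this
    refine le_trans ?_ this
    exact mul_le_mul (hexp _ (by linarith [hs.2])) (by linarith) (by linarith) (exp_pos _).le
  have ht1 : T0 ≤ t0 + (2 * τ + 1) := by linarith
  refine consensus_upper h ha0 hτ ht1 ?_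
  intro i s hs
  have hs1 : t0 + τ + 1 ≤ s := by linarith [hs.1]
  have hs2 := hs.2
  suffices hfin : a0 * E ^ 2 / 2 * (M - m) ≤ M - ω i s by linarith
  by_cases hip : i = p
  · rw [hip]
    refine le_trans ?_ (hpb s ⟨by linarith, hs2⟩)
    have : a0 * E ≤ 1 := mul_le_one₀ ha1 hEpos.le hE1
    have h2 : 0 ≤ E * ((M - m) / 2) := mul_nonneg hEpos.le (by linarith)
    nlinarith
  · set c := a0 * (E * ((M - m) / 2)) with hc
    have hc0 : 0 ≤ c := mul_nonneg ha0 (mul_nonneg hEpos.le (by linarith))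
    have := lower_gronwall (fun t => M - ω i t) (t0 + τ) s K c (by linarith) hK hc0
      (fun t ht => ⟨_, hu i t (by linarith [ht.1]), by
        have htt : t0 ≤ t := by linarith [ht.1]
        have h1 := hsum i t htt
        have h2 := Finset.single_le_sum (f := fun k => a i k t * (M - ω k (t - τ)))
          (fun k (_ : k ∈ Finset.univ.erase i) => hnn i k t htt)
          (Finset.mem_erase.2 ⟨Ne.symm hip, Finset.mem_univ p⟩)
        have h3 : c ≤ a i p t * (M - ω p (t - τ)) :=
          mul_le_mul (h.lower i p t (by linarith))
            (hpb (t - τ) ⟨by linarith [ht.1], by linarith [ht.2]⟩)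
            (mul_nonneg hEpos.le (by linarith)) (ha0.trans (h.lower i p t (by linarith)))
        show c - K * (M - ω i t) ≤ _
        linarith⟩)
    refine le_trans ?_ this
    have hMi : 0 ≤ M - ω i (t0 + τ) := sub_nonneg.2 (hM i _ (by linarith))
    have h4 : c ≤ (M - ω i (t0 + τ)) + c * (s - (t0 + τ)) := by nlinarith
    calc a0 * E ^ 2 / 2 * (M - m) = E * c := by rw [hc]; ring
      _ ≤ _ := mul_le_mul (hexp _ (by linarith)) h4 hc0 (exp_pos _).le

/-- One contraction step for the interval containing all frequencies. -/
lemma consensus_shrink {N : ℕ} {ω : Fin N → ℝ → ℝ} {a : Fin N → Fin N → ℝ → ℝ}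
    {τ T0 a0 K : ℝ} (h : Consensus ω a τ T0 a0 K) (ha0 : 0 ≤ a0) (ha1 : a0 ≤ 1) (hK : 0 ≤ K)
    (hτ : 0 ≤ τ) (p : Fin N) {t0 m M : ℝ} (ht0 : T0 ≤ t0)
    (hb : ∀ i, ∀ s ≥ t0 - τ, m ≤ ω i s ∧ ω i s ≤ M) :
    ∃ m' M', M' - m' = (1 - a0 * exp (-K * (2 * τ + 1)) ^ 2 / 2) * (M - m) ∧
      ∀ i, ∀ s ≥ t0 + (2 * τ + 1) - τ, m' ≤ ω i s ∧ ω i s ≤ M' := by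
  have hmM : m ≤ M := (hb p t0 (by linarith)).1.trans (hb p t0 (by linarith)).2
  rcases le_total (ω p t0) ((M + m) / 2) with hp | hp
  · refine ⟨m, _, ?_, fun i s hs => ⟨(hb i s (by linarith)).1,
      consensus_shrink_upper h ha0 ha1 hK hτ ht0 hmM (fun i s hs => (hb i s hs).2) p hp i s hs⟩⟩
    ring
  · have := consensus_shrink_upper h.neg ha0 ha1 hK hτ ht0 (neg_le_neg hmM)
      (fun i s hs => neg_le_neg (hb i s hs).1) p (by linarith)
    refine ⟨m + a0 * exp (-K * (2 * τ + 1)) ^ 2 / 2 * (M - m), M, by ring,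
      fun i s hs => ⟨?_, (hb i s (by linarith)).2⟩⟩
    have := this i s hs
    linarith

lemma consensus_exp_decay {N : ℕ} {ω : Fin N → ℝ → ℝ} {a : Fin N → Fin N → ℝ → ℝ}
    {τ T0 a0 K R : ℝ} (h : Consensus ω a τ T0 a0 K) (ha0 : 0 < a0) (ha1 : a0 ≤ 1) (hK : 0 ≤ K)
    (hτ : 0 ≤ τ) (p : Fin N) (hR : 0 < R) (hb : ∀ i, ∀ s ≥ T0 - τ, |ω i s| ≤ R) :
    ∃ C > (0 : ℝ), ∃ γ > (0 : ℝ), ∀ t ≥ T0, ∀ i j, |ω i t - ω j t| ≤ C * exp (-γ * t) := by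
  set q := 1 - a0 * exp (-K * (2 * τ + 1)) ^ 2 / 2 with hq
  have hE1 : exp (-K * (2 * τ + 1)) ≤ 1 := exp_le_one_iff.2 (by nlinarith)
  have hE0 : 0 < exp (-K * (2 * τ + 1)) := exp_pos _
  have hEsq : exp (-K * (2 * τ + 1)) ^ 2 ≤ 1 := pow_le_one₀ hE0.le hE1
  have hq1 : q < 1 := by
    have : 0 < a0 * exp (-K * (2 * τ + 1)) ^ 2 / 2 := by positivity
    linarith
  have hq0 : 0 < q := by
    have : a0 * exp (-K * (2 * τ + 1)) ^ 2 ≤ 1 := mul_le_one₀ ha1 (by positivity) hEsq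
    linarith
  set L := 2 * τ + 1 with hL
  have hLpos : 0 < L := by linarith
  have hiter : ∀ n : ℕ, ∃ m M, M - m = q ^ n * (2 * R) ∧
      ∀ i, ∀ s ≥ (T0 + n * L) - τ, m ≤ ω i s ∧ ω i s ≤ M := by
    intro n
    induction n with
    | zero =>
      refine ⟨-R, R, by ring, fun i s hs => abs_le.1 (hb i s ?_)⟩
      simpa using hs
    | succ n ih =>
      obtain ⟨m, M, hMm, hbd⟩ := ih
      obtain ⟨m', M', h1, h2⟩ := consensus_shrink h ha0.le ha1 hK hτ p
        (t0 := T0 + n * L) (by have : 0 ≤ (n : ℝ) * L := by positivity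
                               linarith) hbd
      refine ⟨m', M', ?_, fun i s hs => h2 i s ?_⟩
      · rw [h1, hMm, pow_succ, hq]; ring
      · push_cast at hs
        linarith
  have hlog : log q < 0 := log_neg hq0 hq1
  refine ⟨2 * R * exp (-log q * (T0 / L + 1)), by positivity, -log q / L,
    div_pos (by linarith) hLpos, ?_⟩
  intro t ht i j
  obtain ⟨m, M, hMm, hbd⟩ := hiter ⌊(t - T0) / L⌋₊
  have hfl := Nat.floor_le (div_nonneg (sub_nonneg.2 ht) hLpos.le)
  have hfl2 := Nat.lt_floor_add_one ((t - T0) / L)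
  set n := ⌊(t - T0) / L⌋₊
  have hn : (n : ℝ) * L ≤ t - T0 := by rwa [le_div_iff₀ hLpos] at hfl
  have hi := hbd i t (by linarith)
  have hj := hbd j t (by linarith)
  have h1 : |ω i t - ω j t| ≤ M - m := abs_le.2 ⟨by linarith, by linarith⟩
  refine h1.trans ?_
  rw [hMm, mul_comm (q ^ n), mul_assoc (2 * R), ← exp_add, ← rpow_natCast, rpow_def_of_pos hq0]
  refine mul_le_mul_of_nonneg_left (exp_le_exp.2 ?_) (by linarith)
  have e : -log q * (T0 / L + 1) + -(-log q / L) * t = log q * ((t - T0) / L - 1) := by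
    field_simp; ring
  rw [e]
  exact mul_le_mul_of_nonpos_left (by linarith) hlog.le

/-! ### Phases -/

/-- `sin y` is the minimum of `sin` on `[π - y, y]`. -/
lemma sin_min_symm {x y : ℝ} (h1 : π - y ≤ x) (h2 : x ≤ y) (hy : y ≤ π) : sin y ≤ sin x := by
  rw [← cos_sub_pi_div_two, ← cos_sub_pi_div_two x, ← cos_abs (x - π / 2)]
  exact cos_le_cos_of_nonneg_of_le_pi (abs_nonneg _) (by linarith [pi_pos])
    (abs_le.2 ⟨by linarith, by linarith⟩)

/-- At an instant when the phases lie in an arc of length `D` with endpoints `x i` (top) and `x j`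
(bottom), and the delayed phases `y` are within `δ / 2` of them, the coupling pulls `i` and `j`
together. -/
lemma coupling_contract {N : ℕ} (x y : Fin N → ℝ) (i j : Fin N) (hij : i ≠ j) (D δ : ℝ)
    (hδ : 0 ≤ δ) (hD : x i - x j = D) (hDδ : δ ≤ D) (hDπ : D + δ / 2 ≤ π)
    (hup : ∀ k, x k ≤ x i) (hlo : ∀ k, x j ≤ x k) (hy : ∀ k, |y k - x k| ≤ δ / 2) :
    ∑ k ∈ Finset.univ.erase i, sin (y k - x i) - ∑ k ∈ Finset.univ.erase j, sin (y k - x j)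
      ≤ -(((N : ℝ) - 2) * (sin (D + δ / 2) - sin (δ / 2))) := by
  have hji : j ∈ Finset.univ.erase i := Finset.mem_erase.2 ⟨hij.symm, Finset.mem_univ j⟩
  have hij' : i ∈ Finset.univ.erase j := Finset.mem_erase.2 ⟨hij, Finset.mem_univ i⟩
  rw [← Finset.add_sum_erase _ _ hji, ← Finset.add_sum_erase _ _ hij', Finset.erase_right_comm]
  have yi := abs_le.1 (hy i)
  have yj := abs_le.1 (hy j)
  have h1 : sin (y j - x i) ≤ 0 := by
    apply sin_nonpos_of_nonpos_of_neg_pi_le <;> linarith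
  have h2 : 0 ≤ sin (y i - x j) := by
    apply sin_nonneg_of_nonneg_of_le_pi <;> linarith
  have hcard : (((Finset.univ.erase j).erase i).card : ℝ) = (N : ℝ) - 2 := by
    have h3 := Finset.card_erase_add_one hij'
    have h4 := Finset.card_erase_add_one (Finset.mem_univ j)
    rw [Finset.card_univ, Fintype.card_fin] at h4
    have : ((Finset.univ.erase j).erase i).card + 2 = N := by omega
    rw [eq_sub_iff_add_eq]
    exact_mod_cast this
  have h5 : ∑ k ∈ (Finset.univ.erase j).erase i, (sin (y k - x i) - sin (y k - x j))
      ≤ ∑ k ∈ (Finset.univ.erase j).erase i, -(sin (D + δ / 2) - sin (δ / 2)) := by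
    refine Finset.sum_le_sum fun k _ => ?_
    have yk := abs_le.1 (hy k)
    have e1 : sin (y k - x i) - sin (y k - x j)
        = -(2 * sin (D / 2) * cos (y k - (x i + x j) / 2)) := by
      rw [sin_sub_sin, ← hD, ← mul_neg_one, show (y k - x i - (y k - x j)) / 2
        = -((x i - x j) / 2) by ring, sin_neg,
        show (y k - x i + (y k - x j)) / 2 = y k - (x i + x j) / 2 by ring]
      ring
    have e2 : sin (D + δ / 2) - sin (δ / 2) = 2 * sin (D / 2) * cos ((D + δ) / 2) := by
      rw [sin_sub_sin, show (D + δ / 2 - δ / 2) / 2 = D / 2 by ring,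
        show (D + δ / 2 + δ / 2) / 2 = (D + δ) / 2 by ring]
    rw [e1, e2]
    have hs : 0 ≤ sin (D / 2) := sin_nonneg_of_nonneg_of_le_pi (by linarith) (by linarith)
    have hc : cos ((D + δ) / 2) ≤ cos (y k - (x i + x j) / 2) := by
      rw [← cos_abs (y k - (x i + x j) / 2)]
      refine cos_le_cos_of_nonneg_of_le_pi (abs_nonneg _) (by linarith) ?_
      have := hup k
      have := hlo k
      exact abs_le.2 ⟨by linarith, by linarith⟩
    have := mul_le_mul_of_nonneg_left hc (mul_nonneg zero_le_two hs)
    linarith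
  rw [Finset.sum_const, nsmul_eq_mul, hcard, Finset.sum_sub_distrib] at h5
  linarith

/-- Phases enter every neighbourhood of the dual arc `D(θ) ≤ Dstar` and stay there. -/
lemma phase_entry {N : ℕ} (hN : 2 < N)
    (θ : Fin N → ℝ → ℝ) (Ω : Fin N → ℝ) (κ τ δ Dθ0 DΩ η : ℝ) (hκ : 0 < κ)
    (hC1 : ∀ i, ContDiff ℝ 1 (θ i))
    (hODE : ∀ i, ∀ t : ℝ, 0 < t →
      deriv (θ i) t = Ω i + (κ / (N : ℝ)) *
        ∑ k ∈ Finset.univ.erase i, Real.sin (θ k (t - τ) - θ i t))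
    (hD0 : ∀ i j, θ i 0 - θ j 0 ≤ Dθ0) (hΩ : ∀ i j, Ω i - Ω j ≤ DΩ)
    (hlag : ∀ k, ∀ t ≥ 0, |θ k (t - τ) - θ k t| ≤ δ / 2)
    (hδ : 0 < δ) (hH1 : π / 2 < Dθ0 ∧ Dθ0 < π - δ)
    (hH2 : DΩ < κ / N * (((N : ℝ) - 2) * (sin (Dθ0 + δ / 2) - sin (δ / 2)))) (hη : 0 < η) :
    ∃ T > 0, ∀ t ≥ T, ∀ i j, θ i t - θ j t ≤ π - Dθ0 + η := by
  have hNpos : (0 : ℝ) < N := by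
    have : 0 < N := by omega
    exact_mod_cast this
  have hN2 : (0 : ℝ) < (N : ℝ) - 2 := by
    have : (2 : ℝ) < N := by exact_mod_cast hN
    linarith
  -- Some room above `Dθ0`, up to `b0`, in which (H2) persists.
  obtain ⟨b0, hb0, hb0π, hb0Ω⟩ : ∃ b0 > Dθ0, b0 + δ / 2 < π ∧
      DΩ < κ / N * (((N : ℝ) - 2) * (sin (b0 + δ / 2) - sin (δ / 2))) := by
    have hcont : Continuous fun b : ℝ =>
        κ / N * (((N : ℝ) - 2) * (sin (b + δ / 2) - sin (δ / 2))) := by fun_prop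
    have h1 := (hcont.tendsto Dθ0).eventually (lt_mem_nhds hH2)
    have h2 : ∀ᶠ b in nhds Dθ0, b + δ / 2 < π :=
      (by fun_prop : Continuous fun b : ℝ => b + δ / 2).continuousAt.eventually_lt
        continuousAt_const (by linarith [hH1.2])
    have h3 := ((h2.and h1).filter_mono (nhdsWithin_le_nhds (s := Ioi Dθ0))).and
      self_mem_nhdsWithin
    obtain ⟨b, hb, hb'⟩ := h3.exists
    exact ⟨b, hb', hb⟩
  set c := κ / N * (((N : ℝ) - 2) * (sin (b0 + δ / 2) - sin (δ / 2))) - DΩ with hc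
  have hcpos : 0 < c := by linarith
  set A := b0 - (π - Dθ0) with hA
  have hApos : 0 < A := by linarith [hH1.1]
  -- The rate makes the barrier decrease more slowly than the diameter does.
  set lam := c / (2 * A) with hlam
  have hlampos : 0 < lam := by positivity
  have hmain : ∀ t ≥ 0, ∀ p : Fin N × Fin N,
      θ p.1 t - θ p.2 t - (π - Dθ0 + A * exp (-lam * t)) < 0 := by
    refine first_exit (fun (p : Fin N × Fin N) t =>
      θ p.1 t - θ p.2 t - (π - Dθ0 + A * exp (-lam * t))) 0 ?_ ?_ ?_
    · intro p
      have := (hC1 p.1).continuous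
      have := (hC1 p.2).continuous
      fun_prop
    · intro p
      have := hD0 p.1 p.2
      simp only [mul_zero, exp_zero, mul_one]
      linarith
    · rintro t ht ⟨i, j⟩ hall hzero
      simp only at hzero
      have hexp1 : exp (-lam * t) ≤ 1 := exp_le_one_iff.2 (by nlinarith)
      have hexp0 := exp_pos (-lam * t)
      have hAe : A * exp (-lam * t) ≤ A := mul_le_of_le_one_right hApos.le hexp1
      have hAe0 : 0 < A * exp (-lam * t) := by positivity
      set D := π - Dθ0 + A * exp (-lam * t) with hDdef
      have hDb : D ≤ b0 := by linarith
      have hDpos : 0 < D := by linarith [hH1.2]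
      have hij : i ≠ j := by
        rintro rfl
        linarith
      have hnow := hall t ⟨ht.le, le_rfl⟩
      have hcc := coupling_contract (fun k => θ k t) (fun k => θ k (t - τ)) i j hij D δ hδ.le
        (by linarith) (by linarith [hH1.2]) (by linarith)
        (fun k => by have := hnow (k, j); simp only at this ⊢; linarith)
        (fun k => by have := hnow (i, k); simp only at this ⊢; linarith)
        (fun k => hlag k t ht.le)
      have hsin : sin (b0 + δ / 2) ≤ sin (D + δ / 2) :=
        sin_min_symm (by linarith) (by linarith) hb0π.le
      have hd : ∀ k, HasDerivAt (θ k) (deriv (θ k) t) t := fun k =>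
        ((hC1 k).differentiable (by norm_num) t).hasDerivAt
      have hbar : HasDerivAt (fun t => π - Dθ0 + A * exp (-lam * t))
          (A * (exp (-lam * t) * -lam)) t := by
        have h1 := ((hasDerivAt_id t).const_mul (-lam)).exp
        simpa using (h1.const_mul A).const_add (π - Dθ0)
      refine ⟨_, ?_, ((hd i).sub (hd j)).sub hbar⟩
      rw [hODE i t ht, hODE j t ht]
      have h1 : κ / N * (∑ k ∈ Finset.univ.erase i, sin (θ k (t - τ) - θ i t)
          - ∑ k ∈ Finset.univ.erase j, sin (θ k (t - τ) - θ j t)) ≤ -(c + DΩ) := by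
        have h2 : ∑ k ∈ Finset.univ.erase i, sin (θ k (t - τ) - θ i t)
            - ∑ k ∈ Finset.univ.erase j, sin (θ k (t - τ) - θ j t)
            ≤ -(((N : ℝ) - 2) * (sin (b0 + δ / 2) - sin (δ / 2))) :=
          hcc.trans (neg_le_neg (mul_le_mul_of_nonneg_left (by linarith) hN2.le))
        have h3 := mul_le_mul_of_nonneg_left h2 (div_pos hκ hNpos).le
        refine h3.trans (le_of_eq ?_)
        rw [hc]; ring
      have h4 : A * (exp (-lam * t) * lam) ≤ c / 2 := by
        have : A * lam = c / 2 := by rw [hlam]; field_simp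
        calc A * (exp (-lam * t) * lam) = exp (-lam * t) * (A * lam) := by ring
          _ ≤ 1 * (A * lam) := mul_le_mul_of_nonneg_right hexp1 (by positivity)
          _ = c / 2 := by rw [one_mul, this]
      have h5 := hΩ i j
      linarith
  have htend : Tendsto (fun t : ℝ => A * exp (-lam * t)) atTop (nhds 0) := by
    have h1 : Tendsto (fun t : ℝ => lam * t) atTop atTop :=
      tendsto_id.const_mul_atTop hlampos
    have h2 := (tendsto_exp_neg_atTop_nhds_zero.comp h1).const_mul A
    simpa [Function.comp_def] using h2
  obtain ⟨T, hT⟩ := eventually_atTop.1 (htend.eventually (gt_mem_nhds hη))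
  refine ⟨max T 1, by positivity, fun t ht i j => ?_⟩
  have h1 := hT t ((le_max_left _ _).trans ht)
  have h2 : (1 : ℝ) ≤ t := (le_max_right _ _).trans ht
  have h3 := hmain t (by linarith) (i, j)
  simp only at h3
  linarith

/-- The frequencies of a solution solve a linear consensus system. -/
lemma frequency_hasDerivAt {N : ℕ} (θ : Fin N → ℝ → ℝ) (Ω : Fin N → ℝ) (κ τ : ℝ)
    (hC1 : ∀ i, ContDiff ℝ 1 (θ i))
    (hODE : ∀ i, ∀ t : ℝ, 0 < t →
      deriv (θ i) t = Ω i + (κ / (N : ℝ)) *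
        ∑ k ∈ Finset.univ.erase i, Real.sin (θ k (t - τ) - θ i t))
    (i : Fin N) (t : ℝ) (ht : 0 < t) :
    HasDerivAt (deriv (θ i)) (∑ k ∈ Finset.univ.erase i,
      κ / N * cos (θ k (t - τ) - θ i t) * (deriv (θ k) (t - τ) - deriv (θ i) t)) t := by
  have hd : ∀ k s, HasDerivAt (θ k) (deriv (θ k) s) s := fun k s =>
    ((hC1 k).differentiable (by norm_num) s).hasDerivAt
  have h1 : ∀ k, HasDerivAt (fun s => sin (θ k (s - τ) - θ i s))
      (cos (θ k (t - τ) - θ i t) * (deriv (θ k) (t - τ) - deriv (θ i) t)) t := fun k =>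
    (((hd k (t - τ)).comp_sub_const t τ).sub (hd i t)).sin
  have h2 := ((HasDerivAt.fun_sum (u := Finset.univ.erase i) fun k _ => h1 k).const_mul
    (κ / (N : ℝ))).const_add (Ω i)
  rw [Finset.mul_sum] at h2
  simp only [← mul_assoc] at h2
  refine h2.congr_of_eventuallyEq ?_
  filter_upwards [lt_mem_nhds ht] with s hs
  exact hODE i s hs

/-- For `N > 2` Kuramoto oscillators with delayed interactions
satisfying (H1)-(H3) and the additional smallness assumption
`τ < log (1 + ζ̄/(κ(2+ζ̄)))`, the frequency diameter decays exponentially. -/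
theorem delayed_kuramoto_exponential_frequency_sync
    {N : ℕ} (hN : 2 < N)
    (θ : Fin N → ℝ → ℝ) (Ω : Fin N → ℝ) (κ τ δ Rω : ℝ)
    (Dθ0 DΩ Dstar τbar ζbar : ℝ)
    (hκ : 0 < κ) (hτ : 0 ≤ τ)
    (hC1 : ∀ i, ContDiff ℝ 1 (θ i))
    (hODE : ∀ i, ∀ t : ℝ, 0 < t →
      deriv (θ i) t = Ω i + (κ / (N : ℝ)) *
        ∑ k ∈ Finset.univ.erase i, Real.sin (θ k (t - τ) - θ i t))
    (hRω : IsLUB {x : ℝ | ∃ t : ℝ, -τ ≤ t ∧ ∃ i, x = |deriv (θ i) t|} Rω)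
    (hDθ0 : Dθ0 = ⨆ i, ⨆ j, |θ i 0 - θ j 0|)
    (hDΩ : DΩ = ⨆ i, ⨆ j, |Ω i - Ω j|)
    (hDstar : Dstar = π - Dθ0)
    (hδ : 0 < δ) (hδ' : δ < π / 2)
    (hH1 : π / 2 < Dθ0 ∧ Dθ0 < π - δ)
    (hH2 : κ > ((N : ℝ) / ((N : ℝ) - 2)) * DΩ /
      (2 * Real.sin (Dθ0 / 2) * Real.cos ((Dθ0 + δ) / 2)))
    (hτbar : τbar = min (δ / (2 * Rω)) ((π / 2 - Dstar) / Rω))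
    (hH3 : τ < τbar)
    (hζbar : ζbar = Real.cos (Dstar + Rω * τbar))
    (hadd : τ < Real.log (1 + ζbar / (κ * (2 + ζbar)))) :
    ∃ tstar > (0 : ℝ), ∃ C > (0 : ℝ), ∃ γ > (0 : ℝ), ∀ t ≥ tstar,
      (⨆ i, ⨆ j, |deriv (θ i) t - deriv (θ j) t|) ≤ C * Real.exp (-γ * t) := by
  obtain ⟨hH1a, hH1b⟩ := hH1
  have hNpos : (0 : ℝ) < N := by
    have : 0 < N := by omega
    exact_mod_cast this
  have hN2 : (0 : ℝ) < (N : ℝ) - 2 := by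
    have : (2 : ℝ) < N := by exact_mod_cast hN
    linarith
  have : Nonempty (Fin N) := ⟨⟨0, by omega⟩⟩
  have hpi := pi_pos
  have hω : ∀ i, ∀ t ≥ -τ, |deriv (θ i) t| ≤ Rω := fun i t ht => hRω.1 ⟨t, ht, i, rfl⟩
  have hRnn : 0 ≤ Rω := (abs_nonneg _).trans (hω ⟨0, by omega⟩ 0 (by linarith))
  -- For `Rω = 0` the junk value `τbar = 0` contradicts `0 ≤ τ < τbar`.
  have hRpos : 0 < Rω := by
    rcases hRnn.lt_or_eq with h | h
    · exact h
    · rw [← h] at hτbar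
      simp at hτbar
      linarith
  rw [hτbar, lt_min_iff] at hH3
  have hRτ1 : Rω * τ < δ / 2 := by
    have := (lt_div_iff₀ (by positivity)).1 hH3.1
    linarith
  have hRτ2 : Rω * τ < π / 2 - Dstar := by
    have := (lt_div_iff₀ hRpos).1 hH3.2
    linarith
  have hlag : ∀ k, ∀ t ≥ 0, |θ k (t - τ) - θ k t| ≤ Rω * τ := by
    intro k t ht
    have := (convex_Ici (-τ)).norm_image_sub_le_of_norm_deriv_le (f := θ k) (C := Rω)
      (fun x _ => (hC1 k).differentiable (by norm_num) x) (fun x hx => hω k x hx)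
      (show t ∈ Ici (-τ) from by simp only [mem_Ici]; linarith)
      (show t - τ ∈ Ici (-τ) from by simp only [mem_Ici]; linarith)
    simpa [abs_of_nonneg hτ] using this
  have hsup : ∀ (x : Fin N → ℝ) i j, x i - x j ≤ ⨆ i, ⨆ j, |x i - x j| := by
    intro x i j
    refine (le_abs_self _).trans ?_
    refine (le_ciSup (f := fun j => |x i - x j|) (Finite.bddAbove_range _) j).trans ?_
    exact le_ciSup (f := fun i => ⨆ j, |x i - x j|) (Finite.bddAbove_range _) i
  have hH2' : DΩ < κ / N * (((N : ℝ) - 2) * (sin (Dθ0 + δ / 2) - sin (δ / 2))) := by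
    have e : sin (Dθ0 + δ / 2) - sin (δ / 2) = 2 * sin (Dθ0 / 2) * cos ((Dθ0 + δ) / 2) := by
      rw [sin_sub_sin, show (Dθ0 + δ / 2 - δ / 2) / 2 = Dθ0 / 2 by ring,
        show (Dθ0 + δ / 2 + δ / 2) / 2 = (Dθ0 + δ) / 2 by ring]
    have hs : 0 < sin (Dθ0 / 2) := sin_pos_of_pos_of_lt_pi (by linarith) (by linarith)
    have hc : 0 < cos ((Dθ0 + δ) / 2) := cos_pos_of_mem_Ioo ⟨by linarith, by linarith⟩
    rw [e]
    set P := 2 * sin (Dθ0 / 2) * cos ((Dθ0 + δ) / 2) with hP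
    have hPpos : 0 < P := by positivity
    have h1 := (div_lt_iff₀ hPpos).1 hH2
    rw [div_mul_eq_mul_div, div_lt_iff₀ hN2] at h1
    rw [div_mul_eq_mul_div, lt_div_iff₀ hNpos]
    nlinarith
  -- Half of the gap left by (H3) between `Dstar + Rω τ` and `π / 2`.
  set η := (π / 2 - Dstar - Rω * τ) / 2 with hη
  have hηpos : 0 < η := by linarith
  obtain ⟨T, hTpos, hT⟩ := phase_entry hN θ Ω κ τ δ Dθ0 DΩ η hκ hC1 hODE
    (fun i j => hDθ0 ▸ hsup (fun i => θ i 0) i j) (fun i j => hDΩ ▸ hsup Ω i j)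
    (fun k t ht => (hlag k t ht).trans hRτ1.le) hδ ⟨hH1a, hH1b⟩ hH2' hηpos
  have hRτ0 : 0 ≤ Rω * τ := by positivity
  set z := cos (Dstar + η + Rω * τ) with hz
  have hzpos : 0 < z := cos_pos_of_mem_Ioo ⟨by linarith, by linarith⟩
  have hcos : ∀ i k, ∀ t ≥ T, z ≤ cos (θ k (t - τ) - θ i t) := by
    intro i k t ht
    rw [← cos_abs (θ k (t - τ) - θ i t)]
    refine cos_le_cos_of_nonneg_of_le_pi (abs_nonneg _) (by linarith) ?_
    have h1 := abs_le.1 (hlag k t (by linarith))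
    have h2 := hT t ht i k
    have h3 := hT t ht k i
    exact abs_le.2 ⟨by linarith, by linarith⟩
  have hcons : Consensus (fun i => deriv (θ i))
      (fun i k t => κ / N * cos (θ k (t - τ) - θ i t)) τ T (min (κ / N * z) 1) κ :=
    { cont := fun i => (hC1 i).continuous_deriv le_rfl
      deriv := fun i t ht => frequency_hasDerivAt θ Ω κ τ hC1 hODE i t (by linarith)
      lower := fun i k t ht => (min_le_left _ _).trans
        (mul_le_mul_of_nonneg_left (hcos i k t ht) (by positivity))
      upper := fun i t ht => by
        calc ∑ k ∈ Finset.univ.erase i, κ / N * cos (θ k (t - τ) - θ i t)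
            ≤ ∑ k ∈ Finset.univ.erase i, κ / N :=
              Finset.sum_le_sum fun k _ => mul_le_of_le_one_right (by positivity) (cos_le_one _)
          _ ≤ ∑ k : Fin N, κ / N := Finset.sum_le_sum_of_subset_of_nonneg
              (Finset.erase_subset _ _) fun _ _ _ => by positivity
          _ = κ := by simp; field_simp }
  obtain ⟨C, hC, γ, hγ, hdec⟩ := consensus_exp_decay hcons (lt_min (by positivity) one_pos)
    (min_le_right _ _) hκ.le hτ ⟨0, by omega⟩ hRpos (fun i s hs => hω i s (by linarith))
  exact ⟨T, hTpos, C, hC, γ, hγ, fun t ht => ciSup_le fun i => ciSup_le fun j => hdec t ht i j⟩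
end

section
/- Let N > 2 and let θ = (θ_1, …, θ_N) be a global classical solution of the delayed Kuramoto system satisfying (H1)–(H3). Then the phase diameter is uniformly bounded by its initial value: D(θ(t)) ≤ D_{θ0} for all t ≥ 0. -/
open Real Filter Set

/-!
The set of times `t ≥ 0` at which all phase differences are at most `Dθ0` is closed and contains
`0`; it exhausts `[0, ∞)` because it is also open to the right. For a pair whose difference is
strictly below `Dθ0` this is continuity. For an extremal pair, `θ i x - θ j x = Dθ0`, the
difference has negative derivative (`extremal_deriv_neg`):

* for `k ≠ i, j` the two coupling terms combine to
  `-2 sin (Dθ0 / 2) cos (θ k (x - τ) - (θ i x + θ j x) / 2)`; the phase moves by less than `δ / 2`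
  during a delay, so the argument of the cosine is at most `(Dθ0 + δ) / 2 < π / 2` in modulus, and
  the `N - 2` such terms beat `Ω i - Ω j` by the lower bound on `κ`;
* the terms coming from `k = j` and `k = i` have the favourable sign, because the phase moves by
  less than `Dθ0 - π / 2` and by less than `δ / 2` during a delay, which keeps the delayed
  differences in `(0, π)`.
-/

open scoped Topology in
/-- A function with negative derivative at `x` stays below its value at `x` just after `x`. -/
lemma eventually_le_right_of_deriv_neg {f : ℝ → ℝ} {x f' : ℝ} (h : HasDerivAt f f' x)
    (hf' : f' < 0) : ∀ᶠ y in 𝓝[>] x, f y ≤ f x := by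
  have h1 : Tendsto (slope f x) (𝓝[>] x) (𝓝 f') :=
    (hasDerivWithinAt_iff_tendsto_slope' (by simp)).1 (h.hasDerivWithinAt (s := Ioi x))
  filter_upwards [h1.eventually (gt_mem_nhds hf'), self_mem_nhdsWithin] with y hy hxy
  have hxy : 0 < y - x := sub_pos.2 hxy
  rw [slope_def_field, div_lt_iff₀ hxy] at hy
  linarith

/-- The velocity difference of an extremal pair is negative. Here `x` are the current phases, `y`
the delayed ones, and `D` is the current phase diameter, attained by the pair `i, j`. -/
lemma extremal_deriv_neg {N : ℕ} (hN : 2 < N) (x y Ω : Fin N → ℝ) {κ δ D DΩ : ℝ} (hκ : 0 < κ)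
    (hD : π / 2 < D) (hDδ : D < π - δ) (hδ : 0 < δ)
    (hDΩ : ∀ i j, Ω i - Ω j ≤ DΩ)
    (hκD : κ > ((N : ℝ) / ((N : ℝ) - 2)) * DΩ / (2 * sin (D / 2) * cos ((D + δ) / 2)))
    (hxD : ∀ i j, x i - x j ≤ D) (hyδ : ∀ k, |y k - x k| < δ / 2)
    (hyD : ∀ k, |y k - x k| < D - π / 2) {i j : Fin N} (hij : x i - x j = D) :
    (Ω i + (κ / (N : ℝ)) * ∑ k ∈ Finset.univ.erase i, sin (y k - x i)) -
      (Ω j + (κ / (N : ℝ)) * ∑ k ∈ Finset.univ.erase j, sin (y k - x j)) < 0 := by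
  have hpi := Real.pi_pos
  have hne : i ≠ j := by rintro rfl; linarith [sub_self (x i)]
  have hN' : (2 : ℝ) < N := by exact_mod_cast hN
  have hs : 0 < sin (D / 2) := sin_pos_of_pos_of_lt_pi (by linarith) (by linarith)
  have hc : 0 < cos ((D + δ) / 2) := cos_pos_of_mem_Ioo ⟨by linarith, by linarith⟩
  have hterm : ∀ k, sin (y k - x i) - sin (y k - x j) ≤
      -(2 * sin (D / 2) * cos ((D + δ) / 2)) := by
    intro k
    have hcos : cos ((D + δ) / 2) ≤ cos (y k - (x i + x j) / 2) := by
      rw [← cos_abs (y k - (x i + x j) / 2)]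
      refine cos_le_cos_of_nonneg_of_le_pi (abs_nonneg _) (by linarith) ?_
      have h1 := abs_lt.1 (hyδ k)
      have h2 := hxD i k
      have h3 := hxD k j
      exact abs_le.2 ⟨by linarith, by linarith⟩
    rw [sin_sub_sin, show (y k - x i - (y k - x j)) / 2 = -(D / 2) by rw [← hij]; ring,
      show (y k - x i + (y k - x j)) / 2 = y k - (x i + x j) / 2 by ring, sin_neg]
    nlinarith
  have hsj : sin (y j - x i) < 0 := by
    have h1 := abs_lt.1 (hyδ j)
    have h2 := abs_lt.1 (hyD j)
    exact sin_neg_of_neg_of_neg_pi_lt (by linarith) (by linarith)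
  have hsi : 0 < sin (y i - x j) := by
    have h1 := abs_lt.1 (hyδ i)
    have h2 := abs_lt.1 (hyD i)
    exact sin_pos_of_pos_of_lt_pi (by linarith) (by linarith)
  have hcard : ((((Finset.univ.erase i).erase j).card : ℕ) : ℝ) = N - 2 := by
    rw [Finset.card_erase_of_mem (by simp [hne.symm]), Finset.card_erase_of_mem (by simp),
      Finset.card_univ, Fintype.card_fin, Nat.sub_sub, Nat.cast_sub hN.le]
    norm_num
  have hsum : ∑ k ∈ (Finset.univ.erase i).erase j, sin (y k - x i) -
      ∑ k ∈ (Finset.univ.erase i).erase j, sin (y k - x j) ≤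
      (N - 2) * -(2 * sin (D / 2) * cos ((D + δ) / 2)) := by
    rw [← Finset.sum_sub_distrib, ← hcard, ← nsmul_eq_mul]
    exact Finset.sum_le_card_nsmul _ _ _ fun k _ => hterm k
  have hi := Finset.add_sum_erase (Finset.univ.erase i) (fun k => sin (y k - x i))
    (a := j) (by simp [hne.symm])
  have hj := Finset.add_sum_erase (Finset.univ.erase j) (fun k => sin (y k - x j))
    (a := i) (by simp [hne])
  rw [Finset.erase_right_comm] at hj
  rw [← hi, ← hj]
  have hP : 0 < 2 * sin (D / 2) * cos ((D + δ) / 2) := by positivity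
  have hκN : 0 < κ / N := by positivity
  have hκ' : DΩ < κ / N * ((N - 2) * (2 * sin (D / 2) * cos ((D + δ) / 2))) := by
    rw [gt_iff_lt, div_lt_iff₀ hP, div_mul_eq_mul_div, div_lt_iff₀ (by linarith)] at hκD
    rw [div_mul_eq_mul_div, lt_div_iff₀ (by linarith)]
    linarith
  have hΩ := hDΩ i j
  have h3 := mul_le_mul_of_nonneg_left hsum hκN.le
  have h4 := mul_pos hκN hsi
  have h5 := mul_neg_of_pos_of_neg hκN hsj
  simp only [mul_add, mul_sub, mul_neg] at *
  linarith

open scoped Topology in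
/-- Under (H1)-(H3), the phase diameter of the delayed Kuramoto
system is uniformly bounded in time by its initial value. -/
theorem delayed_kuramoto_phase_diameter_bound
    {N : ℕ} (hN : 2 < N)
    (θ : Fin N → ℝ → ℝ) (Ω : Fin N → ℝ) (κ τ δ Rω : ℝ)
    (Dθ0 DΩ Dstar : ℝ)
    (hκ : 0 < κ) (hτ : 0 ≤ τ)
    (hC1 : ∀ i, ContDiff ℝ 1 (θ i))
    (hODE : ∀ i, ∀ t : ℝ, 0 < t →
      deriv (θ i) t = Ω i + (κ / (N : ℝ)) *
        ∑ k ∈ Finset.univ.erase i, Real.sin (θ k (t - τ) - θ i t))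
    (hRω : IsLUB {x : ℝ | ∃ t : ℝ, -τ ≤ t ∧ ∃ i, x = |deriv (θ i) t|} Rω)
    (hDθ0 : Dθ0 = ⨆ i, ⨆ j, |θ i 0 - θ j 0|)
    (hDΩ : DΩ = ⨆ i, ⨆ j, |Ω i - Ω j|)
    (hDstar : Dstar = π - Dθ0)
    (hδ : 0 < δ) (hδ' : δ < π / 2)
    (hH1 : π / 2 < Dθ0 ∧ Dθ0 < π - δ)
    (hH2 : κ > ((N : ℝ) / ((N : ℝ) - 2)) * DΩ /
      (2 * Real.sin (Dθ0 / 2) * Real.cos ((Dθ0 + δ) / 2)))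
    (hH3 : τ < min (δ / (2 * Rω)) ((π / 2 - Dstar) / Rω)) :
    ∀ t ≥ (0 : ℝ), (⨆ i, ⨆ j, |θ i t - θ j t|) ≤ Dθ0 := by
  have : Nonempty (Fin N) := ⟨⟨0, by omega⟩⟩
  have le_diam : ∀ (v : Fin N → ℝ) i j, v i - v j ≤ ⨆ i, ⨆ j, |v i - v j| := fun v i j =>
    (le_abs_self _).trans <| le_ciSup_of_le (Set.finite_range _).bddAbove i <|
      le_ciSup (f := fun j => |v i - v j|) (Set.finite_range _).bddAbove j
  have hcont : ∀ i, Continuous (θ i) := fun i => (hC1 i).continuous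
  have hdiff : ∀ i, Differentiable ℝ (θ i) := fun i => (hC1 i).differentiable (by norm_num)
  have hbound : ∀ i t, -τ ≤ t → |deriv (θ i) t| ≤ Rω := fun i t ht => hRω.1 ⟨t, ht, i, rfl⟩
  -- If `Rω = 0`, the junk value `δ / 0 = 0` would make the delay negative.
  have hR : 0 < Rω := by
    have h0 : 0 ≤ Rω := (abs_nonneg _).trans (hbound ⟨0, by omega⟩ 0 (by linarith))
    rcases h0.eq_or_lt with h | h
    · rw [← h] at hH3
      simp at hH3
      linarith
    · exact h
  obtain ⟨h31, h32⟩ := lt_min_iff.1 hH3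
  rw [lt_div_iff₀ (by positivity)] at h31
  rw [lt_div_iff₀ hR] at h32
  have hdelay : ∀ k t, 0 ≤ t → |θ k (t - τ) - θ k t| ≤ τ * Rω := by
    intro k t ht
    have h := (convex_Ici (-τ)).norm_image_sub_le_of_norm_deriv_le (f := θ k) (C := Rω)
      (x := t) (y := t - τ) (fun x _ => hdiff k x) (fun x hx => hbound k x hx)
      (mem_Ici.2 (by linarith)) (mem_Ici.2 (by linarith))
    simpa [abs_of_nonneg hτ, mul_comm] using h
  -- By continuity the equation also holds at `t = 0`.
  have hODE0 : ∀ i t, 0 ≤ t → deriv (θ i) t = Ω i + (κ / (N : ℝ)) *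
        ∑ k ∈ Finset.univ.erase i, Real.sin (θ k (t - τ) - θ i t) := by
    intro i t ht
    have h : EqOn (deriv (θ i)) (fun t => Ω i + (κ / (N : ℝ)) *
        ∑ k ∈ Finset.univ.erase i, Real.sin (θ k (t - τ) - θ i t)) (Ioi 0) :=
      fun t ht => hODE i t ht
    refine h.closure ((hC1 i).continuous_deriv (by norm_num)) (by fun_prop) ?_
    rw [closure_Ioi]
    exact ht
  have main : ∀ t ≥ (0 : ℝ), ∀ i j, θ i t - θ j t ≤ Dθ0 := by
    intro t ht
    have hsub : Icc 0 t ⊆ {t | ∀ i j, θ i t - θ j t ≤ Dθ0} := by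
      refine IsClosed.Icc_subset_of_forall_mem_nhdsWithin ?_ ?_ ?_
      · refine IsClosed.inter ?_ isClosed_Icc
        simp only [ofPred_forall]
        exact isClosed_iInter fun i => isClosed_iInter fun j =>
          isClosed_le (by fun_prop) continuous_const
      · intro i j
        rw [hDθ0]
        exact le_diam (fun i => θ i 0) i j
      · rintro x ⟨hx, hx0, -⟩
        change ∀ᶠ y in 𝓝[>] x, ∀ i j, θ i y - θ j y ≤ Dθ0
        refine eventually_all.2 fun i => eventually_all.2 fun j => ?_
        rcases (hx i j).lt_or_eq with h | h
        · have hc : Continuous fun y => θ i y - θ j y := by fun_prop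
          exact (((hc.tendsto x).eventually (gt_mem_nhds h)).filter_mono
            nhdsWithin_le_nhds).mono fun y hy => hy.le
        · have hd := (hdiff i x).hasDerivAt.sub (hdiff j x).hasDerivAt
          have hneg : deriv (θ i) x - deriv (θ j) x < 0 := by
            rw [hODE0 i x hx0, hODE0 j x hx0]
            exact extremal_deriv_neg hN (fun k => θ k x) (fun k => θ k (x - τ)) Ω hκ hH1.1 hH1.2
              hδ (fun i j => hDΩ ▸ le_diam Ω i j) hH2 hx
              (fun k => (hdelay k x hx0).trans_lt (by linarith))
              (fun k => (hdelay k x hx0).trans_lt (by linarith)) h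
          filter_upwards [eventually_le_right_of_deriv_neg hd hneg] with y hy
          simp only [Pi.sub_apply] at hy
          linarith
    exact hsub ⟨ht, le_rfl⟩
  intro t ht
  exact ciSup_le fun i => ciSup_le fun j => abs_sub_le_iff.2 ⟨main t ht i j, main t ht j i⟩
end

section
/- Let N > 2 and let θ = (θ_1, …, θ_N) be a global classical solution of the delayed Kuramoto system satisfying (H1)–(H3). Then for almost every t ≥ 0 at which D(θ(t)) > δ/2, the upper Dini derivative of the phase diameter satisfies D⁺ D(θ(t)) ≤ D(Ω) − 2κ ((N−2)/N) sin(D(θ(t))/2) cos(D(θ(t))/2 + R_ω τ). -/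
/-!
The diameter `D` is the maximum of the finitely many `C¹` functions `θ i - θ j`, so its right
difference quotients at `t` are asymptotically bounded by the largest derivative of a pair `(i, j)`
that is extremal at `t` (`eventually_slope_lt`). For an extremal pair the equation gives a
sum-to-product identity for each third oscillator, whose delayed phase lies within `D/2 + Rω τ` of
the midpoint of `θ i` and `θ j`; the two remaining interaction terms have a favourable sign as long
as `Rω τ ≤ D ≤ π - Rω τ` (`extremal_pair_deriv_le`). This is the asserted inequality at every
`t ≥ 0`, once `D ≤ π - δ` is known.

That upper bound is a barrier argument: at a time where `D` equals its initial value, the same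
estimate together with the lower bound on `κ` makes the right derivative negative, so `D` never
exceeds its initial value. The barrier argument starts at time `0`, where the equation holds by
continuity.
-/

open Real Filter Set

/-- Upper Dini derivative. -/
noncomputable def diniUpper (f : ℝ → ℝ) (t : ℝ) : ℝ :=
  Filter.limsup (fun h => (f (t + h) - f t) / h) (nhdsWithin 0 (Set.Ioi 0))


/-- Right difference quotients of a finite maximum of differentiable differences are eventually
below any number exceeding the derivatives of the extremal pairs. -/
lemma eventually_slope_lt {N : ℕ} {θ : Fin N → ℝ → ℝ} {D : ℝ → ℝ}
    (hd : ∀ i, Differentiable ℝ (θ i))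
    (hle : ∀ t i j, θ i t - θ j t ≤ D t)
    (hatt : ∀ t, ∃ i j, θ i t - θ j t = D t) {t v r : ℝ}
    (hv : ∀ i j, θ i t - θ j t = D t → deriv (θ i) t - deriv (θ j) t ≤ v) (hr : v < r) :
    ∀ᶠ z in nhdsWithin t (Ioi t), slope D t z < r := by
  have key : ∀ i j, ∀ᶠ z in nhdsWithin t (Ioi t), θ i z - θ j z - D t < r * (z - t) := by
    intro i j
    rcases (hle t i j).eq_or_lt with h | h
    · have hg : HasDerivAt (fun z => θ i z - θ j z) (deriv (θ i) t - deriv (θ j) t) t :=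
        (hd i t).hasDerivAt.sub (hd j t).hasDerivAt
      have hs := (hasDerivAt_iff_tendsto_slope.1 hg).mono_left
        (nhdsWithin_mono t (fun z (hz : t < z) => hz.ne'))
      filter_upwards [hs.eventually_lt_const ((hv i j h).trans_lt hr), self_mem_nhdsWithin]
        with z hz hzt
      rw [slope_def_field, div_lt_iff₀ (sub_pos.2 hzt), h] at hz
      exact hz
    · apply nhdsWithin_le_nhds
      have hc : Continuous fun z => θ i z - θ j z - D t - r * (z - t) := by
        have := (hd i).continuous
        have := (hd j).continuous
        fun_prop
      have := (hc.tendsto t).eventually_lt_const (u := 0) (by simpa using h)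
      filter_upwards [this] with z hz
      linarith
  have key' := eventually_all.2 fun i => eventually_all.2 fun j => key i j
  filter_upwards [key', self_mem_nhdsWithin] with z hz hzt
  obtain ⟨i, j, h⟩ := hatt z
  rw [slope_def_field, div_lt_iff₀ (sub_pos.2 hzt), ← h]
  exact hz i j

/-- Companion lower bound: the right difference quotients of the maximum stay bounded below. -/
lemma exists_eventually_le_slope {N : ℕ} {θ : Fin N → ℝ → ℝ} {D : ℝ → ℝ}
    (hd : ∀ i, Differentiable ℝ (θ i))
    (hle : ∀ t i j, θ i t - θ j t ≤ D t)
    (hatt : ∀ t, ∃ i j, θ i t - θ j t = D t) (t : ℝ) :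
    ∃ c, ∀ᶠ z in nhdsWithin t (Ioi t), c ≤ slope D t z := by
  obtain ⟨i, j, h⟩ := hatt t
  refine ⟨deriv (θ i) t - deriv (θ j) t - 1, ?_⟩
  have hg : HasDerivAt (fun z => θ i z - θ j z) (deriv (θ i) t - deriv (θ j) t) t :=
    (hd i t).hasDerivAt.sub (hd j t).hasDerivAt
  have hs := (hasDerivAt_iff_tendsto_slope.1 hg).mono_left
    (nhdsWithin_mono t (fun z (hz : t < z) => hz.ne'))
  filter_upwards [hs.eventually_const_lt (sub_one_lt _), self_mem_nhdsWithin] with z hz hzt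
  refine hz.le.trans ?_
  rw [slope_def_field, slope_def_field, h]
  have := hle z i j
  have := sub_pos.2 (show t < z from hzt)
  gcongr

lemma diniUpper_le {N : ℕ} {θ : Fin N → ℝ → ℝ} {D : ℝ → ℝ}
    (hd : ∀ i, Differentiable ℝ (θ i))
    (hle : ∀ t i j, θ i t - θ j t ≤ D t)
    (hatt : ∀ t, ∃ i j, θ i t - θ j t = D t) {t v : ℝ}
    (hv : ∀ i j, θ i t - θ j t = D t → deriv (θ i) t - deriv (θ j) t ≤ v) :
    diniUpper D t ≤ v := by
  have hmap : Tendsto (fun h : ℝ => t + h) (nhdsWithin 0 (Ioi 0)) (nhdsWithin t (Ioi t)) := by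
    refine tendsto_nhdsWithin_iff.2 ⟨?_, ?_⟩
    · have : Continuous fun h : ℝ => t + h := by fun_prop
      simpa using (this.tendsto 0).mono_left nhdsWithin_le_nhds
    · filter_upwards [self_mem_nhdsWithin] with h hh
      simpa using hh
  have hsl : ∀ h, slope D t (t + h) = (D (t + h) - D t) / h := by
    intro h; rw [slope_def_field, add_sub_cancel_left]
  unfold diniUpper
  refine le_of_forall_pos_le_add fun ε hε => ?_
  obtain ⟨c, hc⟩ := exists_eventually_le_slope hd hle hatt t
  have hc' := hmap.eventually hc
  have hu := hmap.eventually (eventually_slope_lt hd hle hatt hv (lt_add_of_pos_right v hε))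
  simp only [hsl] at hc' hu
  -- The lower bound on the quotients excludes the junk value of `limsup`.
  exact limsup_le_of_le (IsBoundedUnder.isCoboundedUnder_le ⟨c, hc'⟩) (hu.mono fun _ h => h.le)

/-- The velocity difference of an extremal pair. Here `x` are the current phases, `y` the delayed
ones, and `e` bounds the displacement during the delay. -/
lemma extremal_pair_deriv_le {N : ℕ} (hN : 2 < N) {x y Ω : Fin N → ℝ} {κ e d DΩ : ℝ}
    (hκ : 0 < κ) (hxy : ∀ k, |y k - x k| ≤ e)
    (hx : ∀ i j, x i - x j ≤ d) (hΩ : ∀ i j, Ω i - Ω j ≤ DΩ)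
    (hed : e < d) (hdπ : d + e ≤ π) {i j : Fin N} (hij : x i - x j = d) :
    (Ω i + κ / N * ∑ k ∈ Finset.univ.erase i, sin (y k - x i)) -
      (Ω j + κ / N * ∑ k ∈ Finset.univ.erase j, sin (y k - x j)) ≤
    DΩ - 2 * κ * (((N : ℝ) - 2) / N) * sin (d / 2) * cos (d / 2 + e) := by
  have he : 0 ≤ e := (abs_nonneg _).trans (hxy i)
  have hne : i ≠ j := by rintro rfl; simp at hij; linarith
  have hNpos : (0 : ℝ) < N := by exact_mod_cast (by omega : 0 < N)
  have hsin : 0 ≤ sin (d / 2) := sin_nonneg_of_nonneg_of_le_pi (by linarith) (by linarith)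
  set s := (Finset.univ.erase i).erase j with hs
  have hcard : (s.card : ℝ) = (N : ℝ) - 2 := by
    rw [hs, Finset.card_erase_of_mem (by simp [hne.symm]), Finset.card_erase_of_mem (by simp),
      Finset.card_univ, Fintype.card_fin, Nat.sub_sub, Nat.cast_sub (by omega)]
    norm_num
  have e1 : ∑ k ∈ Finset.univ.erase i, sin (y k - x i)
      = sin (y j - x i) + ∑ k ∈ s, sin (y k - x i) :=
    (Finset.add_sum_erase _ _ (by simp [hne.symm])).symm
  have e2 : ∑ k ∈ Finset.univ.erase j, sin (y k - x j)
      = sin (y i - x j) + ∑ k ∈ s, sin (y k - x j) := by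
    rw [hs, Finset.erase_right_comm]
    exact (Finset.add_sum_erase _ _ (by simp [hne])).symm
  have hterm : ∀ k ∈ s, sin (y k - x i) - sin (y k - x j)
      ≤ -(2 * sin (d / 2) * cos (d / 2 + e)) := by
    intro k _
    have hmid : cos (d / 2 + e) ≤ cos (y k - (x i + x j) / 2) := by
      rw [← cos_abs (y k - (x i + x j) / 2)]
      refine cos_le_cos_of_nonneg_of_le_pi (abs_nonneg _) (by linarith) ?_
      have h1 := abs_le.1 (hxy k)
      have h2 := hx i k
      have h3 := hx k j
      have h4 := hx i j
      rw [abs_le]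
      constructor <;> linarith [h1.1, h1.2]
    have hid : sin (y k - x i) - sin (y k - x j)
        = -(2 * sin (d / 2) * cos (y k - (x i + x j) / 2)) := by
      rw [sin_sub_sin, show (y k - x i - (y k - x j)) / 2 = -(d / 2) by rw [← hij]; ring,
        show (y k - x i + (y k - x j)) / 2 = y k - (x i + x j) / 2 by ring, sin_neg]
      ring
    rw [hid]
    gcongr
  have hsum : ∑ k ∈ s, sin (y k - x i) - ∑ k ∈ s, sin (y k - x j)
      ≤ ((N : ℝ) - 2) * -(2 * sin (d / 2) * cos (d / 2 + e)) := by
    rw [← Finset.sum_sub_distrib, ← hcard, ← nsmul_eq_mul]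
    exact Finset.sum_le_card_nsmul _ _ _ hterm
  have ha : sin (y j - x i) ≤ 0 := by
    have h1 := abs_le.1 (hxy j)
    exact sin_nonpos_of_nonpos_of_neg_pi_le (by linarith [h1.2]) (by linarith [h1.1])
  have hb : 0 ≤ sin (y i - x j) := by
    have h1 := abs_le.1 (hxy i)
    exact sin_nonneg_of_nonneg_of_le_pi (by linarith [h1.1]) (by linarith [h1.2])
  have hmul := mul_le_mul_of_nonneg_left
    (show (sin (y j - x i) + ∑ k ∈ s, sin (y k - x i)) -
        (sin (y i - x j) + ∑ k ∈ s, sin (y k - x j))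
        ≤ ((N : ℝ) - 2) * -(2 * sin (d / 2) * cos (d / 2 + e)) by linarith)
    (show 0 ≤ κ / N by positivity)
  rw [e1, e2]
  have hr : κ / N * (((N : ℝ) - 2) * -(2 * sin (d / 2) * cos (d / 2 + e))) =
      -(2 * κ * (((N : ℝ) - 2) / N) * sin (d / 2) * cos (d / 2 + e)) := by ring
  linarith [hΩ i j]

lemma sub_le_iSup_abs {N : ℕ} (x : Fin N → ℝ) (i j : Fin N) :
    x i - x j ≤ ⨆ i, ⨆ j, |x i - x j| :=
  (le_abs_self _).trans <|
    (le_ciSup (f := fun j => |x i - x j|) (Set.finite_range _).bddAbove j).trans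
      (le_ciSup (f := fun i => ⨆ j, |x i - x j|) (Set.finite_range _).bddAbove i)

lemma exists_sub_eq_iSup_abs {N : ℕ} [NeZero N] (x : Fin N → ℝ) :
    ∃ i j, x i - x j = ⨆ i, ⨆ j, |x i - x j| := by
  obtain ⟨i, hi⟩ := exists_eq_ciSup_of_finite (f := fun i => ⨆ j, |x i - x j|)
  obtain ⟨j, hj⟩ := exists_eq_ciSup_of_finite (f := fun j => |x i - x j|)
  rw [← hi]
  simp only [← hj]
  rcases abs_choice (x i - x j) with h | h
  · exact ⟨i, j, h.symm⟩
  · exact ⟨j, i, by rw [h]; ring⟩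

lemma continuous_iSup_abs {N : ℕ} [NeZero N] {θ : Fin N → ℝ → ℝ} (h : ∀ i, Continuous (θ i)) :
    Continuous fun t => ⨆ i, ⨆ j, |θ i t - θ j t| := by
  simp only [← Finset.sup'_univ_eq_ciSup]
  refine Continuous.finset_sup'_apply _ fun i _ => Continuous.finset_sup'_apply _ fun j _ => ?_
  exact ((h i).sub (h j)).abs

/-- Under (H1)-(H3), for almost every `t ≥ 0` at which the phase
diameter exceeds `δ/2`, the upper Dini derivative of the phase diameter satisfies
the stated differential inequality. -/
theorem delayed_kuramoto_diameter_differential_inequality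
    {N : ℕ} (hN : 2 < N)
    (θ : Fin N → ℝ → ℝ) (Ω : Fin N → ℝ) (κ τ δ Rω : ℝ)
    (Dθ0 DΩ Dstar : ℝ)
    (hκ : 0 < κ) (hτ : 0 ≤ τ)
    (hC1 : ∀ i, ContDiff ℝ 1 (θ i))
    (hODE : ∀ i, ∀ t : ℝ, 0 < t →
      deriv (θ i) t = Ω i + (κ / (N : ℝ)) *
        ∑ k ∈ Finset.univ.erase i, Real.sin (θ k (t - τ) - θ i t))
    (hRω : IsLUB {x : ℝ | ∃ t : ℝ, -τ ≤ t ∧ ∃ i, x = |deriv (θ i) t|} Rω)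
    (hDθ0 : Dθ0 = ⨆ i, ⨆ j, |θ i 0 - θ j 0|)
    (hDΩ : DΩ = ⨆ i, ⨆ j, |Ω i - Ω j|)
    (hDstar : Dstar = π - Dθ0)
    (hδ : 0 < δ) (hδ' : δ < π / 2)
    (hH1 : π / 2 < Dθ0 ∧ Dθ0 < π - δ)
    (hH2 : κ > ((N : ℝ) / ((N : ℝ) - 2)) * DΩ /
      (2 * Real.sin (Dθ0 / 2) * Real.cos ((Dθ0 + δ) / 2)))
    (hH3 : τ < min (δ / (2 * Rω)) ((π / 2 - Dstar) / Rω)) :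
    ∀ᵐ t ∂(MeasureTheory.volume : MeasureTheory.Measure ℝ), 0 ≤ t →
      δ / 2 < (⨆ i, ⨆ j, |θ i t - θ j t|) →
      diniUpper (fun s => ⨆ i, ⨆ j, |θ i s - θ j s|) t ≤
        DΩ - 2 * κ * (((N : ℝ) - 2) / (N : ℝ)) *
          Real.sin ((⨆ i, ⨆ j, |θ i t - θ j t|) / 2) *
          Real.cos ((⨆ i, ⨆ j, |θ i t - θ j t|) / 2 + Rω * τ) := by
  have : NeZero N := ⟨by omega⟩
  have hNpos : (0 : ℝ) < N := by exact_mod_cast (by omega : 0 < N)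
  have hN2 : (0 : ℝ) < (N : ℝ) - 2 := by
    have : (2 : ℝ) < N := by exact_mod_cast hN
    linarith
  set D : ℝ → ℝ := fun s => ⨆ i, ⨆ j, |θ i s - θ j s| with hDdef
  have hd : ∀ i, Differentiable ℝ (θ i) := fun i => (hC1 i).differentiable one_ne_zero
  have hθc : ∀ i, Continuous (θ i) := fun i => (hC1 i).continuous
  have hle : ∀ t i j, θ i t - θ j t ≤ D t := fun t => sub_le_iSup_abs fun i => θ i t
  have hatt : ∀ t, ∃ i j, θ i t - θ j t = D t := fun t => exists_sub_eq_iSup_abs fun i => θ i t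
  have hDc : Continuous D := continuous_iSup_abs hθc
  have hΩ : ∀ i j, Ω i - Ω j ≤ DΩ := fun i j => hDΩ ▸ sub_le_iSup_abs Ω i j
  have hbd : ∀ t, -τ ≤ t → ∀ i, |deriv (θ i) t| ≤ Rω := fun t ht i => hRω.1 ⟨t, ht, i, rfl⟩
  have hRpos : 0 < Rω := by
    refine lt_of_le_of_ne ((abs_nonneg _).trans (hbd 0 (by linarith) 0)) fun h => ?_
    -- With `Rω = 0` the quotient `δ / (2 * Rω)` is `0`, contradicting `0 ≤ τ`.
    have := hH3.trans_le (min_le_left _ _)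
    rw [← h] at this
    simp at this
    linarith
  have hRτ : Rω * τ < δ / 2 := by
    have := hH3.trans_le (min_le_left _ _)
    rw [lt_div_iff₀ (by positivity)] at this
    linarith
  have hRτ0 : 0 ≤ Rω * τ := by positivity
  have hode : ∀ i, ∀ t, 0 ≤ t → deriv (θ i) t = Ω i + κ / N *
      ∑ k ∈ Finset.univ.erase i, sin (θ k (t - τ) - θ i t) := by
    intro i t ht
    have h1 : Continuous (deriv (θ i)) := (hC1 i).continuous_deriv le_rfl
    have h2 : Continuous fun t => Ω i + κ / N *
        ∑ k ∈ Finset.univ.erase i, sin (θ k (t - τ) - θ i t) := by fun_prop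
    have hcl := isClosed_eq h1 h2
    have hsub : closure (Ioi (0 : ℝ)) ⊆ _ := closure_minimal (fun t ht => hODE i t ht) hcl
    rw [closure_Ioi] at hsub
    exact hsub ht
  have hdelay : ∀ t, 0 ≤ t → ∀ k, |θ k (t - τ) - θ k t| ≤ Rω * τ := by
    intro t ht k
    have := (convex_Ici (-τ)).norm_image_sub_le_of_norm_deriv_le (f := θ k) (C := Rω)
      (fun x _ => hd k x) (fun x hx => hbd x hx k) (x := t) (y := t - τ)
      (mem_Ici.2 (by linarith)) (mem_Ici.2 (by linarith))
    simpa [Real.norm_eq_abs, abs_of_nonneg hτ] using this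
  have hpair : ∀ t, 0 ≤ t → δ / 2 < D t → D t ≤ π - δ → ∀ i j, θ i t - θ j t = D t →
      deriv (θ i) t - deriv (θ j) t ≤ DΩ - 2 * κ * (((N : ℝ) - 2) / N) *
        sin (D t / 2) * cos (D t / 2 + Rω * τ) := by
    intro t ht h1 h2 i j hij
    rw [hode i t ht, hode j t ht]
    exact extremal_pair_deriv_le hN (x := fun i => θ i t) (y := fun i => θ i (t - τ)) hκ
      (hdelay t ht) (hle t) hΩ (by linarith) (by linarith) hij
  have hD0 : Dθ0 = D 0 := hDθ0
  have hneg : DΩ - 2 * κ * (((N : ℝ) - 2) / N) * sin (Dθ0 / 2) * cos (Dθ0 / 2 + Rω * τ) < 0 := by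
    have hs : 0 < sin (Dθ0 / 2) := sin_pos_of_pos_of_lt_pi (by linarith) (by linarith)
    have hc : 0 < cos ((Dθ0 + δ) / 2) := cos_pos_of_mem_Ioo ⟨by linarith, by linarith⟩
    have hcc : cos ((Dθ0 + δ) / 2) ≤ cos (Dθ0 / 2 + Rω * τ) :=
      cos_le_cos_of_nonneg_of_le_pi (by linarith) (by linarith) (by linarith)
    have h1 := hH2
    rw [gt_iff_lt, div_lt_iff₀ (by positivity), div_mul_eq_mul_div, div_lt_iff₀ hN2] at h1
    have h2 : DΩ < 2 * κ * (((N : ℝ) - 2) / N) * sin (Dθ0 / 2) * cos ((Dθ0 + δ) / 2) := by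
      rw [show 2 * κ * (((N : ℝ) - 2) / N) * sin (Dθ0 / 2) * cos ((Dθ0 + δ) / 2) =
        (κ * (2 * sin (Dθ0 / 2) * cos ((Dθ0 + δ) / 2)) * ((N : ℝ) - 2)) / N by ring,
        lt_div_iff₀ hNpos]
      linarith
    have h3 : 2 * κ * (((N : ℝ) - 2) / N) * sin (Dθ0 / 2) * cos ((Dθ0 + δ) / 2) ≤
        2 * κ * (((N : ℝ) - 2) / N) * sin (Dθ0 / 2) * cos (Dθ0 / 2 + Rω * τ) := by
      gcongr
    linarith
  have hinv : ∀ t, 0 ≤ t → D t ≤ Dθ0 := by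
    intro t ht
    -- Away from the barrier only the crude bound `2 * Rω` on the slope is needed.
    refine image_le_of_liminf_slope_right_lt_deriv_boundary (f := D) (a := 0) (b := t)
      (f' := fun x => if D x = Dθ0 then DΩ - 2 * κ * (((N : ℝ) - 2) / N) *
        sin (Dθ0 / 2) * cos (Dθ0 / 2 + Rω * τ) else 2 * Rω)
      (B := fun _ => Dθ0) (B' := fun _ => 0) hDc.continuousOn ?_ hD0.ge
      (fun x => hasDerivAt_const x Dθ0) ?_ ⟨ht, le_rfl⟩
    · intro x hx r hr
      refine (eventually_slope_lt hd hle hatt ?_ hr).frequently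
      intro i j hij
      split_ifs with h
      · rw [← h]
        exact hpair x hx.1 (by linarith) (by linarith) i j hij
      · have h1 := abs_le.1 (hbd x (by linarith [hx.1]) i)
        have h2 := abs_le.1 (hbd x (by linarith [hx.1]) j)
        linarith [h1.2, h2.1]
    · intro x _ h
      simp only [h, if_true]
      exact hneg
  refine Eventually.of_forall fun t ht hδt => ?_
  exact diniUpper_le hd hle hatt (hpair t ht hδt (by linarith [hinv t ht]))
end

section
/- Let N > 2 and let θ = (θ_1, …, θ_N) be a global classical solution of the delayed Kuramoto system satisfying (H1)–(H3). Then there exists a time t_* ≥ 0 such that D(θ(t)) < D_* for all t > t_*, where D_* = π − D_{θ0} ∈ (0, π/2) is the dual angle of the initial phase diameter. -/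
open Real Filter Set

/-!
Let `D(t)` be the phase diameter and suppose it is realised at time `t` by the pair `(i, j)`. The
delay moves each phase by at most `Rω τ ≤ δ / 2`, so sum-to-product formulas bound the combined
pull of every other oscillator on the gap `θ i - θ j` by `-2 sin (D/2) cos ((D+δ)/2)`
(`sin_sub_sin_le`). For `D ∈ [π - D₀, D₀]` the quantity
`2 sin (D/2) cos ((D+δ)/2) = sin (D + δ/2) - sin (δ/2)` is smallest at `D = D₀`
(`sin_mul_cos_min`), where the coupling assumption makes it beat the spread of the natural
frequencies. Hence extremal gaps in `[π - D₀, D₀]` shrink at a rate at least some fixed `c > 0`.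

Two applications of a barrier principle (`le_barrier`) finish the proof: the line
`D₀ - (c/2) t` dominates all gaps until it reaches `π - D₀`, and from then on the constant `π - D₀`
does. Equality at a later time would be a local maximum of a gap, where its derivative
vanishes, which contradicts the decay rate.
-/

/-- Finitely many differentiable functions that start below a barrier `B` stay below it, provided
that whenever one of them touches `B` while all of them are below, its slope there is smaller than
that of `B`. -/
lemma le_barrier {ι : Type*} [Finite ι] (f : ι → ℝ → ℝ) (B : ℝ → ℝ) (a b : ℝ)
    (hf : ∀ p, Differentiable ℝ (f p)) (hB : Differentiable ℝ B)
    (ha : ∀ p, f p a ≤ B a)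
    (h : ∀ t ∈ Ico a b, (∀ p, f p t ≤ B t) → ∀ p, f p t = B t → deriv (f p) t < deriv B t) :
    ∀ t ∈ Icc a b, ∀ p, f p t ≤ B t := by
  have hclosed : IsClosed {t | ∀ p, f p t ≤ B t} := by
    rw [ofPred_forall]
    exact isClosed_iInter fun p => isClosed_le (hf p).continuous hB.continuous
  have key : Icc a b ⊆ {t | ∀ p, f p t ≤ B t} := by
    refine IsClosed.Icc_subset_of_forall_mem_nhdsWithin (hclosed.inter isClosed_Icc) ha ?_
    rintro x ⟨hx, hxab⟩
    have : ∀ p, ∀ᶠ t in nhdsWithin x (Ioi x), f p t ≤ B t := by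
      intro p
      rcases (hx p).lt_or_eq with hlt | heq
      · exact nhdsWithin_le_nhds
          (((hf p).continuous.continuousAt.eventually_lt hB.continuous.continuousAt hlt).mono
            fun _ ht => ht.le)
      · have hd := h x hxab hx p heq
        have hder : HasDerivAt (fun t => f p t - B t) (deriv (f p) x - deriv B x) x :=
          ((hf p) x).hasDerivAt.sub (hB x).hasDerivAt
        have hs := (hasDerivAt_iff_tendsto_slope.1 hder).mono_left
          (nhdsWithin_mono x (fun y (hy : x < y) => ne_of_gt hy))
        have hneg := hs.eventually_lt_const (u := 0) (by linarith)
        filter_upwards [hneg, self_mem_nhdsWithin] with t ht hxt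
        have hxt' : 0 < t - x := sub_pos.2 hxt
        rw [slope_def_field, div_lt_iff₀ hxt'] at ht
        linarith
    exact eventually_all.2 this
  exact fun t ht => key ht

/-- The contraction strength `2 sin (D/2) cos ((D+δ)/2)` on `[π - D₀, D₀]` is smallest at `D₀`. -/
lemma sin_mul_cos_min {D D0 δ : ℝ} (hδ : 0 < δ) (h1 : D0 < π - δ) (h2 : π - D0 ≤ D)
    (h3 : D ≤ D0) :
    2 * sin (D0 / 2) * cos ((D0 + δ) / 2) ≤ 2 * sin (D / 2) * cos ((D + δ) / 2) := by
  have e : ∀ x : ℝ, 2 * sin (x / 2) * cos ((x + δ) / 2) = sin (x + δ / 2) - sin (δ / 2) := by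
    intro x
    rw [sin_sub_sin]
    congr 3 <;> ring
  have hs : sin (D + δ / 2) - sin (D0 + δ / 2) =
      2 * sin ((D - D0) / 2) * cos ((D + D0 + δ) / 2) := by
    rw [sin_sub_sin]
    congr 3 <;> ring
  have hpi := pi_pos
  have a1 : sin ((D - D0) / 2) ≤ 0 :=
    sin_nonpos_of_nonpos_of_neg_pi_le (by linarith) (by linarith)
  have a2 : cos ((D + D0 + δ) / 2) ≤ 0 :=
    cos_nonpos_of_pi_div_two_le_of_le (by linarith) (by linarith)
  rw [e, e]
  nlinarith [mul_nonneg_of_nonpos_of_nonpos a1 a2]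

/-- An oscillator whose phase `x` lies within `δ / 2` of `[z, y]` contracts the gap `y - z`. -/
lemma sin_sub_sin_le {x y z D0 δ : ℝ} (hδ : 0 < δ) (h1 : D0 < π - δ) (h2 : π - D0 ≤ y - z)
    (h3 : y - z ≤ D0) (hx1 : z - δ / 2 ≤ x) (hx2 : x ≤ y + δ / 2) :
    sin (x - y) - sin (x - z) ≤ -(2 * sin (D0 / 2) * cos ((D0 + δ) / 2)) := by
  have hm := sin_mul_cos_min hδ h1 h2 h3
  have e : sin (x - y) - sin (x - z) = -(2 * sin ((y - z) / 2) * cos (x - (y + z) / 2)) := by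
    rw [sin_sub_sin, show (x - y - (x - z)) / 2 = -((y - z) / 2) by ring, sin_neg,
      show (x - y + (x - z)) / 2 = x - (y + z) / 2 by ring]
    ring
  have hs : 0 ≤ sin ((y - z) / 2) :=
    sin_nonneg_of_nonneg_of_le_pi (by linarith) (by linarith [pi_pos])
  have hc : cos ((y - z + δ) / 2) ≤ cos (x - (y + z) / 2) := by
    rw [← cos_abs (x - (y + z) / 2)]
    refine cos_le_cos_of_nonneg_of_le_pi (abs_nonneg _) (by linarith [pi_pos]) ?_
    rw [abs_le]
    constructor <;> linarith
  rw [e]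
  nlinarith [mul_le_mul_of_nonneg_left hc hs]

lemma abs_sub_le_iSup {N : ℕ} (v : Fin N → ℝ) (i j : Fin N) :
    |v i - v j| ≤ ⨆ i, ⨆ j, |v i - v j| :=
  (le_ciSup (f := fun j => |v i - v j|) (Set.finite_range _).bddAbove j).trans
    (le_ciSup (f := fun i => ⨆ j, |v i - v j|) (Set.finite_range _).bddAbove i)

/-- Under (H1)-(H3), there is a finite time after which the phase
diameter stays strictly below the dual angle `D_* = π - D_{θ0} ∈ (0, π/2)`. -/
theorem delayed_kuramoto_confinement
    {N : ℕ} (hN : 2 < N)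
    (θ : Fin N → ℝ → ℝ) (Ω : Fin N → ℝ) (κ τ δ Rω : ℝ)
    (Dθ0 DΩ Dstar : ℝ)
    (hκ : 0 < κ) (hτ : 0 ≤ τ)
    (hC1 : ∀ i, ContDiff ℝ 1 (θ i))
    (hODE : ∀ i, ∀ t : ℝ, 0 < t →
      deriv (θ i) t = Ω i + (κ / (N : ℝ)) *
        ∑ k ∈ Finset.univ.erase i, Real.sin (θ k (t - τ) - θ i t))
    (hRω : IsLUB {x : ℝ | ∃ t : ℝ, -τ ≤ t ∧ ∃ i, x = |deriv (θ i) t|} Rω)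
    (hDθ0 : Dθ0 = ⨆ i, ⨆ j, |θ i 0 - θ j 0|)
    (hDΩ : DΩ = ⨆ i, ⨆ j, |Ω i - Ω j|)
    (hDstar : Dstar = π - Dθ0)
    (hδ : 0 < δ) (hδ' : δ < π / 2)
    (hH1 : π / 2 < Dθ0 ∧ Dθ0 < π - δ)
    (hH2 : κ > ((N : ℝ) / ((N : ℝ) - 2)) * DΩ /
      (2 * Real.sin (Dθ0 / 2) * Real.cos ((Dθ0 + δ) / 2)))
    (hH3 : τ < min (δ / (2 * Rω)) ((π / 2 - Dstar) / Rω)) :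
    ∃ tstar ≥ (0 : ℝ), ∀ t > tstar, (⨆ i, ⨆ j, |θ i t - θ j t|) < Dstar := by
  have hN3 : (3 : ℝ) ≤ N := by exact_mod_cast hN
  have hNpos : (0 : ℝ) < N := by linarith
  have : Nonempty (Fin N) := ⟨⟨0, by omega⟩⟩
  obtain ⟨hH1a, hH1b⟩ := hH1
  have hdiff : ∀ i, Differentiable ℝ (θ i) := fun i => (hC1 i).differentiable (by norm_num)
  have hder : ∀ i t, -τ ≤ t → |deriv (θ i) t| ≤ Rω := fun i t ht => hRω.1 ⟨t, ht, i, rfl⟩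
  have hR0 : 0 ≤ Rω := (abs_nonneg _).trans (hder ⟨0, by omega⟩ 0 (by linarith))
  -- `Rω = 0` is impossible: the junk value `δ / 0 = 0` would make the delay negative.
  have hRpos : 0 < Rω := by
    rcases hR0.lt_or_eq with h | h
    · exact h
    · have := (lt_min_iff.1 hH3).1
      rw [← h] at this
      simp at this
      linarith
  have hτδ : Rω * τ ≤ δ / 2 := by
    have := (lt_min_iff.1 hH3).1
    rw [lt_div_iff₀ (by positivity)] at this
    linarith
  have hshift : ∀ k t, 0 ≤ t → |θ k (t - τ) - θ k t| ≤ δ / 2 := by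
    intro k t ht
    have := Convex.norm_image_sub_le_of_norm_deriv_le (f := θ k) (C := Rω)
      (s := Icc (t - τ) t) (x := t) (y := t - τ) (fun x _ => hdiff k x)
      (fun x hx => hder k x (by linarith [hx.1])) (convex_Icc _ _)
      ⟨by linarith, le_rfl⟩ ⟨le_rfl, by linarith⟩
    rw [Real.norm_eq_abs, Real.norm_eq_abs, show t - τ - t = -τ by ring, abs_neg,
      abs_of_nonneg hτ] at this
    linarith
  -- Continuity extends the equation to the initial time.
  have hODE' : ∀ i, ∀ t : ℝ, 0 ≤ t →
      deriv (θ i) t = Ω i + (κ / (N : ℝ)) *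
        ∑ k ∈ Finset.univ.erase i, Real.sin (θ k (t - τ) - θ i t) := by
    intro i t ht
    have hcl : IsClosed {t : ℝ | deriv (θ i) t = Ω i + (κ / (N : ℝ)) *
        ∑ k ∈ Finset.univ.erase i, Real.sin (θ k (t - τ) - θ i t)} := by
      refine isClosed_eq ((hC1 i).continuous_deriv (by norm_num)) ?_
      have := fun k => (hdiff k).continuous
      fun_prop
    have hsub : Ioi (0 : ℝ) ⊆ {t : ℝ | deriv (θ i) t = Ω i + (κ / (N : ℝ)) *
        ∑ k ∈ Finset.univ.erase i, Real.sin (θ k (t - τ) - θ i t)} := fun t ht => hODE i t ht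
    have := hcl.closure_subset_iff.2 hsub
    rw [closure_Ioi] at this
    exact this ht
  set m := 2 * Real.sin (Dθ0 / 2) * Real.cos ((Dθ0 + δ) / 2) with hm
  have hpi := pi_pos
  have hmpos : 0 < m := by
    have h1 : 0 < Real.sin (Dθ0 / 2) := sin_pos_of_pos_of_lt_pi (by linarith) (by linarith)
    have h2 : 0 < Real.cos ((Dθ0 + δ) / 2) :=
      cos_pos_of_mem_Ioo ⟨by linarith, by linarith⟩
    positivity
  obtain ⟨c, hc⟩ : ∃ c, c = κ / N * ((N - 2) * m) - DΩ := ⟨_, rfl⟩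
  have hcpos : 0 < c := by
    rw [gt_iff_lt, div_lt_iff₀ hmpos, div_mul_eq_mul_div, div_lt_iff₀ (by linarith)] at hH2
    have : DΩ < κ * m * (N - 2) / N := by
      rw [lt_div_iff₀ hNpos]
      linarith
    rw [hc]
    have e : κ / N * ((N - 2) * m) = κ * m * (N - 2) / N := by ring
    linarith
  have key : ∀ t, 0 ≤ t → ∀ i j, (∀ k l, θ k t - θ l t ≤ θ i t - θ j t) →
      Dstar ≤ θ i t - θ j t → θ i t - θ j t ≤ Dθ0 →
      deriv (θ i) t - deriv (θ j) t ≤ -c := by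
    intro t ht i j hmax hlo hhi
    have hij : i ≠ j := by
      rintro rfl
      linarith
    have hs := fun k => abs_le.1 (hshift k t ht)
    set X : Fin N → ℝ := fun k => θ k (t - τ) with hX
    set y := θ i t
    set z := θ j t
    have hk : ∀ k, Real.sin (X k - y) - Real.sin (X k - z) ≤ -m := by
      intro k
      have h1 := hs k
      have h2 := hmax k j
      have h3 := hmax i k
      exact sin_sub_sin_le hδ hH1b (by linarith) hhi (by linarith) (by linarith)
    have hgj : Real.sin (X j - y) ≤ 0 := by
      have h1 := hs j
      exact sin_nonpos_of_nonpos_of_neg_pi_le (by linarith) (by linarith)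
    have hgi : 0 ≤ Real.sin (X i - z) := by
      have h1 := hs i
      exact sin_nonneg_of_nonneg_of_le_pi (by linarith) (by linarith)
    have hsum : ∑ k ∈ Finset.univ.erase i, Real.sin (X k - y) -
        ∑ k ∈ Finset.univ.erase j, Real.sin (X k - z) ≤ -((N - 2) * m) := by
      have e1 := Finset.add_sum_erase (Finset.univ.erase i) (fun k => Real.sin (X k - y))
        (a := j) (by simp [hij.symm])
      have e2 := Finset.add_sum_erase (Finset.univ.erase j) (fun k => Real.sin (X k - z))
        (a := i) (by simp [hij])
      rw [Finset.erase_right_comm] at e2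
      have e3 := Finset.sum_le_card_nsmul ((Finset.univ.erase i).erase j)
        (fun k => Real.sin (X k - y) - Real.sin (X k - z)) (-m) (fun k _ => hk k)
      have hcard : ((Finset.univ.erase i).erase j).card = N - 2 := by
        rw [Finset.card_erase_of_mem (by simp [hij.symm]), Finset.card_erase_of_mem (by simp)]
        simp
        omega
      rw [Finset.sum_sub_distrib, hcard, nsmul_eq_mul, Nat.cast_sub (by omega)] at e3
      push_cast at e3
      linarith
    have hΩ : Ω i - Ω j ≤ DΩ := by
      rw [hDΩ]
      exact (le_abs_self _).trans (abs_sub_le_iSup Ω i j)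
    have hmul := mul_le_mul_of_nonneg_left hsum (div_pos hκ hNpos).le
    rw [hODE' i t ht, hODE' j t ht, hc]
    linarith
  set f : Fin N × Fin N → ℝ → ℝ := fun p t => θ p.1 t - θ p.2 t with hf
  have hfd : ∀ p, Differentiable ℝ (f p) := fun p => (hdiff p.1).sub (hdiff p.2)
  have hfder : ∀ p t, deriv (f p) t = deriv (θ p.1) t - deriv (θ p.2) t := fun p t =>
    ((hdiff p.1 t).hasDerivAt.sub (hdiff p.2 t).hasDerivAt).deriv
  have key' : ∀ t, 0 ≤ t → ∀ B, Dstar ≤ B → B ≤ Dθ0 → (∀ p, f p t ≤ B) → ∀ p, f p t = B →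
      deriv (f p) t ≤ -c := by
    intro t ht B hB1 hB2 hall p hp
    rw [hfder]
    have hp' : θ p.1 t - θ p.2 t = B := hp
    refine key t ht p.1 p.2 (fun k l => ?_) (by linarith) (by linarith)
    rw [hp']
    exact hall (k, l)
  have h0 : ∀ p, f p 0 ≤ Dθ0 := by
    intro p
    rw [hDθ0]
    exact (le_abs_self _).trans (abs_sub_le_iSup (fun i => θ i 0) p.1 p.2)
  -- The time at which the descending line of slope `-c / 2` reaches the dual angle.
  obtain ⟨T, hT⟩ : ∃ T, T = 2 * (Dθ0 - Dstar) / c := ⟨_, rfl⟩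
  have hT0 : 0 ≤ T := by
    rw [hT]
    exact div_nonneg (by linarith) hcpos.le
  have hcT : c / 2 * T = Dθ0 - Dstar := by
    rw [hT]
    field_simp
  have hBder : ∀ t, HasDerivAt (fun s : ℝ => Dθ0 - c / 2 * s) (-(c / 2)) t := by
    intro t
    simpa using ((hasDerivAt_id t).const_mul (c / 2)).const_sub Dθ0
  have hTle : ∀ p, f p T ≤ Dstar := by
    intro p
    have := le_barrier f (fun s : ℝ => Dθ0 - c / 2 * s) 0 T hfd
      (fun t => (hBder t).differentiableAt) (by simpa using h0) ?_ T ⟨hT0, le_rfl⟩ p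
    · linarith
    · intro t ht hall p hp
      have h1 : c / 2 * t ≤ c / 2 * T := mul_le_mul_of_nonneg_left ht.2.le (by linarith)
      have h2 : 0 ≤ c / 2 * t := mul_nonneg (by linarith) ht.1
      have := key' t ht.1 _ (by linarith) (by linarith) hall p hp
      rw [(hBder t).deriv]
      linarith
  have hle : ∀ t, T ≤ t → ∀ p, f p t ≤ Dstar := by
    intro t ht
    refine le_barrier f (fun _ => Dstar) T t hfd (differentiable_const _) hTle ?_ t ⟨ht, le_rfl⟩
    intro s hs hall p hp
    have := key' s (hT0.trans hs.1) Dstar le_rfl (by linarith) hall p hp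
    rw [deriv_const]
    linarith
  have hlt : ∀ t, T < t → ∀ p, f p t < Dstar := by
    intro t ht p
    refine (hle t ht.le p).lt_of_ne fun heq => ?_
    have h1 := key' t (hT0.trans ht.le) Dstar le_rfl (by linarith) (hle t ht.le) p heq
    have hloc : IsLocalMax (f p) t := by
      filter_upwards [lt_mem_nhds ht] with s hs
      rw [heq]
      exact hle s hs.le p
    rw [hloc.deriv_eq_zero] at h1
    linarith
  refine ⟨T, hT0, fun t ht => ?_⟩
  obtain ⟨i, hi⟩ := exists_eq_ciSup_of_finite (f := fun i => ⨆ j, |θ i t - θ j t|)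
  obtain ⟨j, hj⟩ := exists_eq_ciSup_of_finite (f := fun j => |θ i t - θ j t|)
  rw [← hi]
  rw [← hj]
  have h1 : θ i t - θ j t < Dstar := hlt t ht (i, j)
  have h2 : θ j t - θ i t < Dstar := hlt t ht (j, i)
  exact abs_lt.2 ⟨by linarith, h1⟩
end

section
/- Let N > 2 and let θ = (θ_1, …, θ_N) be a global classical solution of the delayed Kuramoto system satisfying (H1)–(H3). Then there exists t_* > 0 such that for all t ≥ t_* and all indices 1 ≤ i, k ≤ N one has |θ_k(t−τ) − θ_i(t)| ≤ D_* + R_ω τ < π/2; consequently cos(θ_k(t−τ) − θ_i(t)) > ζ_* > 0 with ζ_* := cos(D_* + R_ω τ). -/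
open Real Filter Set

/-!
The phase diameter `D(t) = max |θ_i(t) - θ_j(t)|` is trapped by an explicit decreasing barrier.

Put `V = 2 sin (Dθ0 / 2) cos ((Dθ0 + δ) / 2)` and `L = D_* - δ / 2`. Suppose that at time `t` the
pair `(i, j)` realises the diameter `D` and that `L ≤ D ≤ Dθ0`. Each delayed phase `θ_k (t - τ)` is
within `R_ω τ < δ / 2` of `θ_k t`, so each oscillator `k ≠ i, j` contributes at most `-V` to the sum
of sines that drives `θ_i - θ_j`, while the two oscillators `i` and `j` contribute a nonpositive
amount (`sum_sin_sub_le`). The key point is that `D ↦ 2 sin (D / 2) cos ((D + δ) / 2)` equals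
`sin (D + δ / 2) - sin (δ / 2)`, which on `[D_* - δ, Dθ0]` is smallest at `Dθ0`
(`sin_mul_cos_ge`). Hence `(θ_i - θ_j)' ≤ DΩ - κ (N - 2) / N * V =: -c`, and `c > 0` is (H2).

The barrier `B(t) = L + (Dθ0 - L) exp (-ε t)` starts at `Dθ0` and, for small `ε`, decreases strictly
more slowly than `c`; the first-exit principle `forall_nonpos_of_barrier` therefore gives `D ≤ B`
on `[0, ∞)`. As `B(t) → L < D_*`, eventually `D(t) < D_*`, and the delay costs at most another
`R_ω τ`. Since `L` lies strictly below `D_*`, the resulting cosine inequality is strict.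
-/

/-- First-exit principle: finitely many continuous functions that start nonpositive stay
nonpositive if, as long as all of them are nonpositive, each one that vanishes has negative
derivative. -/
lemma forall_nonpos_of_barrier {ι : Type*} [Finite ι] (u : ι → ℝ → ℝ)
    (hc : ∀ p, Continuous (u p)) (h0 : ∀ p, u p 0 ≤ 0)
    (hd : ∀ t, 0 ≤ t → (∀ p, u p t ≤ 0) → ∀ p, u p t = 0 → ∃ d < 0, HasDerivAt (u p) d t) :
    ∀ t, 0 ≤ t → ∀ p, u p t ≤ 0 := by
  intro T hT
  have hcl : IsClosed {t : ℝ | ∀ p, u p t ≤ 0} := by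
    rw [Set.ofPred_forall]
    exact isClosed_iInter fun p => isClosed_le (hc p) continuous_const
  have hsub : Icc 0 T ⊆ {t : ℝ | ∀ p, u p t ≤ 0} := by
    refine IsClosed.Icc_subset_of_forall_exists_gt (hcl.inter isClosed_Icc) h0 ?_
    rintro x ⟨hx, hx0, hxT⟩ y hy
    have hev : ∀ᶠ z in nhdsWithin x (Ioi x), ∀ p, u p z ≤ 0 := by
      rw [eventually_all]
      intro p
      rcases (hx p).lt_or_eq with h | h
      · exact (((hc p).tendsto x).eventually (gt_mem_nhds h)).filter_mono
          nhdsWithin_le_nhds |>.mono fun z hz => le_of_lt hz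
      · obtain ⟨d, hd0, hder⟩ := hd x hx0 hx p h
        have hs := (hasDerivAt_iff_tendsto_slope.1 hder).mono_left
          (nhdsWithin_mono x (fun z (hz : x < z) => (ne_of_gt hz : z ≠ x)))
        filter_upwards [hs.eventually (gt_mem_nhds hd0), self_mem_nhdsWithin] with z hz hxz
        have hxz' : 0 < z - x := sub_pos.2 hxz
        rw [slope_def_field, h, sub_zero, div_lt_iff₀ hxz', zero_mul] at hz
        exact hz.le
    obtain ⟨z, hz, hzy⟩ := (hev.and (Ioc_mem_nhdsGT hy)).exists
    exact ⟨z, hz, hzy⟩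
  exact hsub ⟨hT, le_rfl⟩

/-- For `D ∈ [π - D₀ - δ / 2, D₀]`, the gain of an oscillator at angular distance at most
`(D + δ) / 2` from the midpoint of an arc of length `D` is at least its extreme value at `D₀`. -/
lemma sin_mul_cos_ge {D D₀ δ y : ℝ} (hδ : 0 < δ) (hlo : π - D₀ - δ / 2 ≤ D)
    (hhi : D ≤ D₀) (hD₀ : D₀ < π - δ) (hy : |y| ≤ (D + δ) / 2) :
    2 * sin (D₀ / 2) * cos ((D₀ + δ) / 2) ≤ 2 * sin (D / 2) * cos y := by
  have h1 : cos ((D + δ) / 2) ≤ cos y := by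
    rw [← cos_abs y]
    exact cos_le_cos_of_nonneg_of_le_pi (abs_nonneg y) (by linarith) hy
  have h2 : 0 ≤ sin (D / 2) := sin_nonneg_of_nonneg_of_le_pi (by linarith) (by linarith)
  have key (E : ℝ) : 2 * sin (E / 2) * cos ((E + δ) / 2) = sin (E + δ / 2) - sin (δ / 2) := by
    rw [show E + δ / 2 = E / 2 + (E + δ) / 2 by ring,
      show δ / 2 = (E + δ) / 2 - E / 2 by ring, sin_add, sin_sub]
    ring
  have h3 : sin (D₀ + δ / 2) ≤ sin (D + δ / 2) := by
    have := sin_sub_sin (D₀ + δ / 2) (D + δ / 2)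
    have hs : 0 ≤ sin ((D₀ + δ / 2 - (D + δ / 2)) / 2) :=
      sin_nonneg_of_nonneg_of_le_pi (by linarith) (by linarith)
    have hcn : cos ((D₀ + δ / 2 + (D + δ / 2)) / 2) ≤ 0 :=
      cos_nonpos_of_pi_div_two_le_of_le (by linarith) (by linarith)
    nlinarith [mul_nonneg hs (neg_nonneg.2 hcn)]
  have h4 := key D
  have h5 := key D₀
  nlinarith [mul_le_mul_of_nonneg_left h1 h2]

/-- Contraction of the extremal pair: here `φ` are the current phases, `x` the delayed ones, and
`(i, j)` realises the diameter `φ i - φ j` of the current phases. -/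
lemma sum_sin_sub_le {N : ℕ} (x φ : Fin N → ℝ) {D₀ δ ρ : ℝ} (i j : Fin N)
    (hδ : 0 < δ) (hD₀ : D₀ < π - δ) (hρ : ρ ≤ δ / 2)
    (hx : ∀ k, |x k - φ k| ≤ ρ) (hdiam : ∀ k l, φ k - φ l ≤ φ i - φ j)
    (hlo : π - D₀ - δ / 2 ≤ φ i - φ j) (hhi : φ i - φ j ≤ D₀) :
    (∑ k ∈ Finset.univ.erase i, sin (x k - φ i)) - ∑ k ∈ Finset.univ.erase j, sin (x k - φ j)
      ≤ -((N : ℝ) - 2) * (2 * sin (D₀ / 2) * cos ((D₀ + δ) / 2)) := by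
  have hij : i ≠ j := by
    rintro rfl
    linarith
  rw [← Finset.add_sum_erase (Finset.univ.erase i) _ (a := j) (by simp [hij.symm]),
    ← Finset.add_sum_erase (Finset.univ.erase j) _ (a := i) (by simp [hij]),
    Finset.erase_right_comm (a := j)]
  have hxi := abs_le.1 (hx i)
  have hxj := abs_le.1 (hx j)
  have e1 : sin (x j - φ i) ≤ 0 :=
    sin_nonpos_of_nonpos_of_neg_pi_le (by linarith) (by linarith)
  have e2 : 0 ≤ sin (x i - φ j) :=
    sin_nonneg_of_nonneg_of_le_pi (by linarith) (by linarith)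
  set s := (Finset.univ.erase i).erase j with hs
  have hcard : (s.card : ℝ) = (N : ℝ) - 2 := by
    have a1 : s.card + 1 = (Finset.univ.erase i).card :=
      Finset.card_erase_add_one (by simp [hij.symm])
    have a2 : (Finset.univ.erase i).card + 1 = (Finset.univ : Finset (Fin N)).card :=
      Finset.card_erase_add_one (by simp)
    rw [Finset.card_univ, Fintype.card_fin] at a2
    have a3 : s.card + 2 = N := by omega
    have a4 : (s.card : ℝ) + 2 = N := by exact_mod_cast a3
    linarith
  have e3 : ∑ k ∈ s, (sin (x k - φ i) - sin (x k - φ j))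
      ≤ ∑ _k ∈ s, -(2 * sin (D₀ / 2) * cos ((D₀ + δ) / 2)) := by
    refine Finset.sum_le_sum fun k _ => ?_
    have hk := abs_le.1 (hx k)
    have hki := hdiam k j
    have hkj := hdiam i k
    have := sin_mul_cos_ge (y := x k - (φ i + φ j) / 2) hδ hlo hhi hD₀
      (abs_le.2 ⟨by linarith, by linarith⟩)
    rw [sin_sub_sin, show (x k - φ i - (x k - φ j)) / 2 = -((φ i - φ j) / 2) by ring,
      show (x k - φ i + (x k - φ j)) / 2 = x k - (φ i + φ j) / 2 by ring, sin_neg]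
    linarith
  rw [Finset.sum_sub_distrib, Finset.sum_const, nsmul_eq_mul, hcard] at e3
  linarith

theorem delayed_kuramoto_cosine_bounded_below
    {N : ℕ} (hN : 2 < N)
    (θ : Fin N → ℝ → ℝ) (Ω : Fin N → ℝ) (κ τ δ Rω : ℝ)
    (Dθ0 DΩ Dstar : ℝ)
    (hκ : 0 < κ) (hτ : 0 ≤ τ)
    (hC1 : ∀ i, ContDiff ℝ 1 (θ i))
    (hODE : ∀ i, ∀ t : ℝ, 0 < t →
      deriv (θ i) t = Ω i + (κ / (N : ℝ)) *
        ∑ k ∈ Finset.univ.erase i, Real.sin (θ k (t - τ) - θ i t))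
    (hRω : IsLUB {x : ℝ | ∃ t : ℝ, -τ ≤ t ∧ ∃ i, x = |deriv (θ i) t|} Rω)
    (hDθ0 : Dθ0 = ⨆ i, ⨆ j, |θ i 0 - θ j 0|)
    (hDΩ : DΩ = ⨆ i, ⨆ j, |Ω i - Ω j|)
    (hDstar : Dstar = π - Dθ0)
    (hδ : 0 < δ) (hδ' : δ < π / 2)
    (hH1 : π / 2 < Dθ0 ∧ Dθ0 < π - δ)
    (hH2 : κ > ((N : ℝ) / ((N : ℝ) - 2)) * DΩ /
      (2 * Real.sin (Dθ0 / 2) * Real.cos ((Dθ0 + δ) / 2)))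
    (hH3 : τ < min (δ / (2 * Rω)) ((π / 2 - Dstar) / Rω)) :
    ∃ tstar > (0 : ℝ),
      Dstar + Rω * τ < π / 2 ∧
      0 < Real.cos (Dstar + Rω * τ) ∧
      ∀ t ≥ tstar, ∀ i k : Fin N,
        |θ k (t - τ) - θ i t| ≤ Dstar + Rω * τ ∧
        Real.cos (Dstar + Rω * τ) < Real.cos (θ k (t - τ) - θ i t) := by
  obtain ⟨hH1a, hH1b⟩ := hH1
  have hderiv_le : ∀ i t, -τ ≤ t → |deriv (θ i) t| ≤ Rω := fun i t ht => hRω.1 ⟨t, ht, i, rfl⟩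
  have hR0 : 0 ≤ Rω := (abs_nonneg _).trans (hderiv_le ⟨0, by omega⟩ 0 (by linarith))
  obtain ⟨hτ1, hτ2⟩ := lt_min_iff.1 hH3
  -- If `Rω = 0`, both quotients in (H3) have the junk value `0`, contradicting `0 ≤ τ`.
  have hRpos : 0 < Rω := by
    refine lt_of_le_of_ne hR0 fun h => ?_
    rw [← h] at hτ2
    simp at hτ2
    linarith
  rw [lt_div_iff₀ (by positivity)] at hτ1 hτ2
  set ρ := Rω * τ with hρ
  have hρ0 : 0 ≤ ρ := by positivity
  have hρδ : ρ < δ / 2 := by linarith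
  have hρπ : Dstar + ρ < π / 2 := by linarith
  have hdiff : ∀ i, Differentiable ℝ (θ i) := fun i => (hC1 i).differentiable (by norm_num)
  have hcont : ∀ i, Continuous (θ i) := fun i => (hC1 i).continuous
  have hdelay : ∀ i t, 0 ≤ t → |θ i (t - τ) - θ i t| ≤ ρ := by
    intro i t ht
    have := (convex_Ici (-τ)).norm_image_sub_le_of_norm_deriv_le (f := θ i) (C := Rω) (s := Ici (-τ))
      (fun s _ => hdiff i s) (fun s hs => hderiv_le i s hs)
      (x := t) (y := t - τ) (mem_Ici.2 (by linarith)) (mem_Ici.2 (by linarith))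
    simpa [abs_of_nonneg hτ] using this
  -- The equation extends to `t = 0` by continuity of both sides.
  have hODE0 : ∀ i t, 0 ≤ t → deriv (θ i) t = Ω i + (κ / (N : ℝ)) *
      ∑ k ∈ Finset.univ.erase i, Real.sin (θ k (t - τ) - θ i t) := by
    intro i
    have hcl : IsClosed {t | deriv (θ i) t = Ω i + (κ / (N : ℝ)) *
        ∑ k ∈ Finset.univ.erase i, Real.sin (θ k (t - τ) - θ i t)} := by
      refine isClosed_eq ((hC1 i).continuous_deriv (by norm_num)) ?_
      refine continuous_const.add (continuous_const.mul (continuous_finsetSum _ fun k _ => ?_))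
      exact continuous_sin.comp
        (((hcont k).comp (continuous_id.sub continuous_const)).sub (hcont i))
    have := hcl.closure_subset_iff.2 (fun t (ht : t ∈ Ioi (0 : ℝ)) => hODE i t ht)
    rw [closure_Ioi] at this
    exact fun t ht => this ht
  have hsup : ∀ (f : Fin N → Fin N → ℝ) i j, f i j ≤ ⨆ i, ⨆ j, f i j := fun f i j =>
    (le_ciSup (f := f i) (Set.finite_range _).bddAbove j).trans
      (le_ciSup (f := fun i => ⨆ j, f i j) (Set.finite_range _).bddAbove i)
  have hinit : ∀ i j, |θ i 0 - θ j 0| ≤ Dθ0 := fun i j => by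
    rw [hDθ0]; exact hsup (fun i j => |θ i 0 - θ j 0|) i j
  have hΩ : ∀ i j, |Ω i - Ω j| ≤ DΩ := fun i j => by
    rw [hDΩ]; exact hsup (fun i j => |Ω i - Ω j|) i j
  clear_value ρ
  set V := 2 * Real.sin (Dθ0 / 2) * Real.cos ((Dθ0 + δ) / 2) with hV
  have hVpos : 0 < V := by
    have h1 : 0 < sin (Dθ0 / 2) := sin_pos_of_pos_of_lt_pi (by linarith) (by linarith)
    have h2 : 0 < cos ((Dθ0 + δ) / 2) := cos_pos_of_mem_Ioo ⟨by linarith, by linarith⟩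
    positivity
  have hN' : (2 : ℝ) < N := by exact_mod_cast hN
  obtain ⟨c, hc⟩ : ∃ c, c = κ / N * ((N - 2) * V) - DΩ := ⟨_, rfl⟩
  have hcpos : 0 < c := by
    have h2 : (0 : ℝ) < N - 2 := by linarith
    have h3 : (0 : ℝ) < N := by linarith
    have h4 : (N : ℝ) / (N - 2) * DΩ < κ * V := (div_lt_iff₀ hVpos).1 hH2
    rw [div_mul_eq_mul_div, div_lt_iff₀ h2] at h4
    rw [hc, sub_pos, div_mul_eq_mul_div, lt_div_iff₀ h3]
    linarith
  obtain ⟨L, hL⟩ : ∃ L, L = Dstar - δ / 2 := ⟨_, rfl⟩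
  have hA : 0 < Dθ0 - L := by linarith
  -- With this `ε`, the barrier decreases at rate at most `c / 2`.
  obtain ⟨ε, hε⟩ : ∃ ε, ε = c / 2 / (Dθ0 - L) := ⟨_, rfl⟩
  have hεpos : 0 < ε := by rw [hε]; positivity
  have hεA : (Dθ0 - L) * ε = c / 2 := by rw [hε]; field_simp
  obtain ⟨B, hB⟩ : ∃ B : ℝ → ℝ, B = fun t => L + (Dθ0 - L) * exp (-ε * t) := ⟨_, rfl⟩
  have hBder : ∀ t, HasDerivAt B (-(c / 2) * exp (-ε * t)) t := by
    intro t
    have h1 : HasDerivAt (fun t => -ε * t) (-ε) t := by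
      simpa using (hasDerivAt_id t).const_mul (-ε)
    have h2 := (h1.exp.const_mul (Dθ0 - L)).const_add L
    rw [hB]
    rw [← hεA]
    exact h2.congr_deriv (by ring)
  have hexp : ∀ t, 0 ≤ t → exp (-ε * t) ≤ 1 := fun t ht =>
    exp_le_one_iff.2 (by nlinarith)
  have hbar : ∀ t, 0 ≤ t → ∀ p : Fin N × Fin N, θ p.1 t - θ p.2 t - B t ≤ 0 := by
    refine forall_nonpos_of_barrier (fun (p : Fin N × Fin N) t => θ p.1 t - θ p.2 t - B t) ?_ ?_ ?_
    · intro p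
      refine ((hcont _).sub (hcont _)).sub ?_
      exact continuous_iff_continuousAt.2 fun t => (hBder t).continuousAt
    · intro p
      have := (abs_le.1 (hinit p.1 p.2)).2
      simp only [hB, mul_zero, exp_zero]
      linarith
    · rintro t ht hall ⟨i, j⟩ hz
      refine ⟨_, ?_, (((hdiff i t).hasDerivAt).sub ((hdiff j t).hasDerivAt)).sub (hBder t)⟩
      simp only at hz hall
      have hdiam : ∀ k l, θ k t - θ l t ≤ θ i t - θ j t := fun k l => by
        have := hall (k, l)
        simp only at this
        linarith
      have hBt : θ i t - θ j t = L + (Dθ0 - L) * exp (-ε * t) := by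
        rw [hB] at hz; simp only at hz; linarith
      have he0 := exp_pos (-ε * t)
      have he1 := hexp t ht
      have hlo : L ≤ θ i t - θ j t := by rw [hBt]; nlinarith
      have hhi : θ i t - θ j t ≤ Dθ0 := by rw [hBt]; nlinarith
      have hsum := sum_sin_sub_le (fun k => θ k (t - τ)) (fun k => θ k t) (ρ := ρ) i j hδ hH1b
        hρδ.le (fun k => hdelay k t ht) hdiam (by linarith) hhi
      have hκN : 0 ≤ κ / N := by positivity
      have hmul := mul_le_mul_of_nonneg_left hsum hκN
      have hΩij := (abs_le.1 (hΩ i j)).2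
      rw [hODE0 i t ht, hODE0 j t ht]
      rw [← hV] at hmul
      nlinarith
  have hlim : Tendsto B atTop (nhds L) := by
    have h1 : Tendsto (fun t : ℝ => exp (-ε * t)) atTop (nhds 0) :=
      tendsto_exp_atBot.comp (tendsto_id.const_mul_atTop_of_neg (by linarith))
    have h2 := (h1.const_mul (Dθ0 - L)).const_add L
    rw [hB]
    simpa using h2
  have hLlt : L < Dstar := by linarith
  obtain ⟨T, hT⟩ := eventually_atTop.1 (hlim.eventually (gt_mem_nhds hLlt))
  refine ⟨max T 1, by positivity, hρπ,
    cos_pos_of_mem_Ioo ⟨by linarith, hρπ⟩, fun t ht i k => ?_⟩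
  have htT : T ≤ t := (le_max_left _ _).trans ht
  have ht0 : 0 ≤ t := zero_le_one.trans ((le_max_right _ _).trans ht)
  have hBt := hT t htT
  have h1 := hbar t ht0 (i, k)
  have h2 := hbar t ht0 (k, i)
  have h3 := abs_le.1 (hdelay k t ht0)
  simp only at h1 h2
  have hlt : |θ k (t - τ) - θ i t| < Dstar + ρ := abs_lt.2 ⟨by linarith, by linarith⟩
  refine ⟨hlt.le, ?_⟩
  rw [← cos_abs (θ k (t - τ) - θ i t)]
  exact cos_lt_cos_of_nonneg_of_le_pi (abs_nonneg _) (by linarith) hlt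
end

section
/- Let N > 2 and let θ = (θ_1, …, θ_N) be a global classical solution of the delayed Kuramoto system satisfying (H1)–(H3), and let t_* > 0 and ζ_* = cos(D_* + R_ω τ) > 0 be such that cos(θ_k(t−τ) − θ_i(t)) > ζ_* for all t ≥ t_* and all i, k. Define σ_τ(t) := ∫_{t−τ}^{t} max_{1≤k≤N} |ω̇_k(s)| ds. Then the frequency diameter satisfies the differential inequality D⁺ D(ω(t)) ≤ 2κ σ_τ(t) − κ ζ_* D(ω(t)) for all t ≥ t_*, where D⁺ denotes the upper Dini derivative. -/
/-!
Fix `t ≥ t_*` and write `ω_i = θ_i'`.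

* `diniUpper_iSup_abs_sub_le`: the upper Dini derivative of the diameter of finitely many
  differentiable functions is bounded by any bound for `ω_i' - ω_j'` over the pairs realising the
  diameter at `t`. A pair not realising it stays below by continuity.
* `velocity_gap_le`: for a pair with `ω_i(t) - ω_j(t) = D(ω(t))`, split
  `ω_k(t-τ) - ω_i(t) = (ω_k(t-τ) - ω_k(t)) + (ω_k(t) - ω_i(t))`. The first part is at most `σ_τ(t)`
  in absolute value; the second is nonpositive, so its coefficient `cos ≥ ζ_*` may be replaced by
  `ζ_*`. Subtracting the analogous lower bound for `j`, the `ω_k(t)` cancel and leave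
  `2κσ_τ(t) - κζ_* D(ω(t))`.
* The bound `|ω_k(t-τ) - ω_k(t)| ≤ σ_τ(t)` is the fundamental theorem of calculus, which needs
  `ω_k` to be `C¹` on `[t-τ, t]`. The equations provide this only on `(0, ∞)`, so one needs
  `t > τ`. This is `delay_lt_of_confined`: if `0 < t ≤ τ`, a pair of phases at
  distance `D_{θ0}` at time `0` satisfies
  `| |θ_k(t-τ) - θ_i(t)| - D_{θ0} | ≤ R_ω τ < D_{θ0} - π/2`, so the cosine of this phase
  difference is nonpositive, against `cos > ζ_* > 0`.
-/

open Real Filter Set intervalIntegral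

section Diameter

variable {N : ℕ}

lemma abs_sub_le_diam (v : Fin N → ℝ) (i j : Fin N) :
    |v i - v j| ≤ ⨆ i, ⨆ j, |v i - v j| :=
  le_ciSup_of_le (Set.finite_range _).bddAbove i
    (le_ciSup (f := fun j => |v i - v j|) (Set.finite_range _).bddAbove j)

lemma exists_abs_sub_eq_diam [Nonempty (Fin N)] (v : Fin N → ℝ) :
    ∃ i j, |v i - v j| = ⨆ i, ⨆ j, |v i - v j| := by
  obtain ⟨i, hi⟩ := exists_eq_ciSup_of_finite (f := fun i => ⨆ j, |v i - v j|)
  obtain ⟨j, hj⟩ := exists_eq_ciSup_of_finite (f := fun j => |v i - v j|)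
  exact ⟨i, j, hj.trans hi⟩

lemma exists_sub_eq_diam [Nonempty (Fin N)] (v : Fin N → ℝ) :
    ∃ i j, v i - v j = ⨆ i, ⨆ j, |v i - v j| := by
  obtain ⟨i, j, h⟩ := exists_abs_sub_eq_diam v
  rcases abs_choice (v i - v j) with hpos | hneg
  · exact ⟨i, j, by rw [← h, hpos]⟩
  · exact ⟨j, i, by rw [← h, hneg]; ring⟩

/-- Danskin-type estimate: only the pairs realising the diameter at `t` contribute to its upper
Dini derivative. -/
lemma diniUpper_iSup_abs_sub_le [Nonempty (Fin N)] (f : Fin N → ℝ → ℝ) (f' : Fin N → ℝ) (t B : ℝ)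
    (hf : ∀ i, HasDerivAt (f i) (f' i) t)
    (hB : ∀ i j, f i t - f j t = (⨆ i, ⨆ j, |f i t - f j t|) → f' i - f' j ≤ B) :
    diniUpper (fun s => ⨆ i, ⨆ j, |f i s - f j s|) t ≤ B := by
  set D : ℝ → ℝ := fun s => ⨆ i, ⨆ j, |f i s - f j s| with hD
  have hle : ∀ s i j, f i s - f j s ≤ D s := fun s i j =>
    (le_abs_self _).trans (abs_sub_le_diam (fun i => f i s) i j)
  have hslope : ∀ i j, Tendsto (fun h => ((f i (t + h) - f j (t + h)) - (f i t - f j t)) / h)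
      (nhdsWithin 0 (Ioi 0)) (nhds (f' i - f' j)) := by
    intro i j
    have h := ((hf i).sub (hf j)).tendsto_slope_zero_right
    refine h.congr fun x => ?_
    simp only [Pi.sub_apply, smul_eq_mul]
    ring
  unfold diniUpper
  -- The real `limsup` has a junk value unless the quotients are bounded below.
  have hcob : IsCoboundedUnder (· ≤ ·) (nhdsWithin (0 : ℝ) (Ioi 0))
      (fun h => (D (t + h) - D t) / h) := by
    obtain ⟨i, j, hij⟩ := exists_sub_eq_diam (fun i => f i t)
    refine IsBoundedUnder.isCoboundedUnder_le ⟨f' i - f' j - 1, ?_⟩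
    rw [eventually_map]
    filter_upwards [(hslope i j).eventually (eventually_gt_nhds (sub_one_lt _)),
      self_mem_nhdsWithin] with h h1 h2
    refine h1.le.trans ?_
    have h2' : (0 : ℝ) < h := h2
    rw [hij]
    exact div_le_div_of_nonneg_right (sub_le_sub_right (hle _ i j) _) h2'.le
  refine le_of_forall_pos_le_add fun ε hε => ?_
  refine limsup_le_of_le hcob ?_
  have key : ∀ i j, ∀ᶠ h in nhdsWithin (0 : ℝ) (Ioi 0),
      f i (t + h) - f j (t + h) - D t ≤ (B + ε) * h := by
    intro i j
    by_cases hij : f i t - f j t = D t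
    · have hlt : f' i - f' j < B + ε := by linarith [hB i j hij]
      filter_upwards [(hslope i j).eventually (eventually_lt_nhds hlt), self_mem_nhdsWithin]
        with h h1 h2
      rw [hij] at h1
      exact ((div_lt_iff₀ h2).1 h1).le
    · have hlt : f i t - f j t < D t := lt_of_le_of_ne (hle t i j) hij
      have hcont : ContinuousAt
          (fun h => f i (t + h) - f j (t + h) - D t - (B + ε) * h) 0 := by
        have h0 : ∀ i, ContinuousAt (fun h => f i (t + h)) 0 := fun i =>
          ContinuousAt.comp (f := fun h => t + h) (g := f i)
            (by simpa using (hf i).continuousAt) (by fun_prop)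
        exact (((h0 i).sub (h0 j)).sub continuousAt_const).sub (by fun_prop)
      have := hcont.eventually (eventually_lt_nhds (b := 0) (by simp; linarith))
      filter_upwards [nhdsWithin_le_nhds this] with h h1
      linarith
  filter_upwards [eventually_all.2 fun i => eventually_all.2 fun j => key i j,
    self_mem_nhdsWithin] with h h1 h2
  obtain ⟨i, j, hij⟩ := exists_sub_eq_diam (fun i => f i (t + h))
  rw [div_le_iff₀ h2]
  have := h1 i j
  rw [hij] at this
  exact this

end Diameter

/-- The estimate of `ω_i' - ω_j'` for a pair realising the diameter. Here `w` and `w'` are the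
current and the delayed velocities, `c k i` the cosine coupling coefficients and `σ` a bound for
the change of velocity over one delay. -/
lemma velocity_gap_le {N : ℕ} (hN : 0 < N) (w w' : Fin N → ℝ) (c : Fin N → Fin N → ℝ)
    (κ ζ σ : ℝ) (hκ : 0 ≤ κ) (hζ : 0 ≤ ζ) (hc : ∀ k i, ζ ≤ c k i) (hc1 : ∀ k i, c k i ≤ 1)
    (hσ : ∀ k, |w' k - w k| ≤ σ) (i j : Fin N)
    (hij : w i - w j = ⨆ i, ⨆ j, |w i - w j|) :
    (κ / N) * ∑ k ∈ Finset.univ.erase i, c k i * (w' k - w i) -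
      (κ / N) * ∑ k ∈ Finset.univ.erase j, c k j * (w' k - w j) ≤
      2 * κ * σ - κ * ζ * ⨆ i, ⨆ j, |w i - w j| := by
  have hσ0 : 0 ≤ σ := (abs_nonneg _).trans (hσ i)
  have hN' : (0 : ℝ) < N := by exact_mod_cast hN
  have hmax : ∀ k, w k ≤ w i := fun k => by
    have := (le_abs_self _).trans (abs_sub_le_diam w k j)
    linarith
  have hmin : ∀ k, w j ≤ w k := fun k => by
    have := (le_abs_self _).trans (abs_sub_le_diam w i k)
    linarith
  have hcσ : ∀ k l, |c k l * (w' k - w k)| ≤ σ := fun k l => by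
    rw [abs_mul, abs_of_nonneg (hζ.trans (hc k l))]
    calc c k l * |w' k - w k| ≤ 1 * σ :=
          mul_le_mul (hc1 k l) (hσ k) (abs_nonneg _) zero_le_one
      _ = σ := one_mul σ
  -- The omitted self-term `k = l` is bounded by `σ` as well, so it may be added to the sum.
  have h1 : ∑ k ∈ Finset.univ.erase i, c k i * (w' k - w i) ≤ ∑ k, (σ + ζ * (w k - w i)) := by
    rw [← Finset.add_sum_erase _ _ (Finset.mem_univ i)]
    refine le_add_of_nonneg_of_le (by simpa using hσ0) (Finset.sum_le_sum fun k _ => ?_)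
    nlinarith [(abs_le.1 (hcσ k i)).2, mul_nonneg (sub_nonneg.2 (hc k i)) (sub_nonneg.2 (hmax k))]
  have h2 : ∑ k, (-σ + ζ * (w k - w j)) ≤ ∑ k ∈ Finset.univ.erase j, c k j * (w' k - w j) := by
    rw [← Finset.add_sum_erase _ _ (Finset.mem_univ j)]
    refine add_le_of_nonpos_of_le (by simpa using hσ0) (Finset.sum_le_sum fun k _ => ?_)
    nlinarith [(abs_le.1 (hcσ k j)).1, mul_nonneg (sub_nonneg.2 (hc k j)) (sub_nonneg.2 (hmin k))]
  have h3 : ∑ k, (σ + ζ * (w k - w i)) - ∑ k, (-σ + ζ * (w k - w j)) =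
      N * (2 * σ - ζ * (w i - w j)) := by
    rw [← Finset.sum_sub_distrib,
      Finset.sum_congr rfl (g := fun _ => 2 * σ - ζ * (w i - w j)) (fun k _ => by ring)]
    simp only [Finset.sum_const, Finset.card_univ, Fintype.card_fin, nsmul_eq_mul]
  rw [← hij, ← mul_sub]
  calc _ ≤ (κ / N) * (N * (2 * σ - ζ * (w i - w j))) :=
        mul_le_mul_of_nonneg_left (by linarith) (by positivity)
    _ = _ := by field_simp

/-- If phases move at speed at most `R` and a pair starts at distance `D` with
`π/2 + Rτ < D < π`, then the delayed difference of this pair can only have positive cosine after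
one full delay has elapsed. -/
lemma delay_lt_of_confined {N : ℕ} (θ : Fin N → ℝ → ℝ) (τ R D t : ℝ)
    (hdiff : ∀ i, Differentiable ℝ (θ i)) (hR : ∀ s, -τ ≤ s → ∀ i, |deriv (θ i) s| ≤ R)
    (i j : Fin N) (hij : |θ i 0 - θ j 0| = D) (hD : D < π) (hτD : R * τ < D - π / 2)
    (ht : 0 < t) (hconf : 0 < Real.cos (θ i (t - τ) - θ j t)) : τ < t := by
  by_contra! hle
  have mvt : ∀ s, -τ ≤ s → ∀ i, |θ i s - θ i 0| ≤ R * |s| := fun s hs i => by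
    have := (convex_Ici (-τ)).norm_image_sub_le_of_norm_deriv_le (f := θ i) (C := R)
      (fun x _ => hdiff i x) (fun x hx => hR x hx i) (x := 0) (y := s)
      (show -τ ≤ 0 by linarith) hs
    simpa using this
  have h1 := mvt (t - τ) (by linarith) i
  have h2 := mvt t (by linarith) j
  rw [abs_of_nonpos (a := t - τ) (by linarith)] at h1
  rw [abs_of_pos ht] at h2
  have h3 : |(θ i (t - τ) - θ j t) - (θ i 0 - θ j 0)| ≤ R * τ := by
    calc _ = |(θ i (t - τ) - θ i 0) - (θ j t - θ j 0)| := by ring_nf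
      _ ≤ |θ i (t - τ) - θ i 0| + |θ j t - θ j 0| := abs_sub _ _
      _ ≤ R * τ := by linarith
  have h4 := (abs_abs_sub_abs_le _ _).trans h3
  rw [hij, abs_le] at h4
  have h5 := Real.cos_nonpos_of_pi_div_two_le_of_le (x := |θ i (t - τ) - θ j t|)
    (by linarith) (by linarith)
  rw [Real.cos_abs] at h5
  linarith

/-- The change of each component over `[a, b]` is at most the integral of the largest speed. -/
lemma abs_sub_le_integral_iSup {N : ℕ} (w w' : Fin N → ℝ → ℝ) (a b : ℝ) (hab : a ≤ b)
    (hw : ∀ k, ∀ s ∈ Icc a b, HasDerivAt (w k) (w' k s) s)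
    (hc : ∀ k, ContinuousOn (w' k) (Icc a b)) (k : Fin N) :
    |w k a - w k b| ≤ ∫ s in a..b, ⨆ k, |w' k s| := by
  have : Nonempty (Fin N) := ⟨k⟩
  have hu : uIcc a b = Icc a b := uIcc_of_le hab
  have hint : ∀ k, IntervalIntegrable (w' k) MeasureTheory.volume a b := fun k =>
    ContinuousOn.intervalIntegrable (by rw [hu]; exact hc k)
  have hsup : ContinuousOn (fun s => ⨆ k, |w' k s|) (Icc a b) := by
    have : ContinuousOn (fun s => Finset.univ.sup' Finset.univ_nonempty (fun k => |w' k s|))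
        (Icc a b) := ContinuousOn.finset_sup'_apply _ fun k _ => (hc k).abs
    simpa only [Finset.sup'_univ_eq_ciSup] using this
  have hftc := integral_eq_sub_of_hasDerivAt (f := w k) (f' := w' k)
    (by rw [hu]; exact hw k) (hint k)
  rw [abs_sub_comm, ← hftc]
  refine (abs_integral_le_integral_abs hab).trans ?_
  refine integral_mono_on hab (hint k).abs
    (ContinuousOn.intervalIntegrable (by rw [hu]; exact hsup)) fun s _ => ?_
  exact le_ciSup (f := fun k => |w' k s|) (Set.finite_range _).bddAbove k

/-- Under (H1)-(H3), once the delayed phase differences are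
uniformly confined (`cos (θ_k(t-τ) - θ_i(t)) > ζ_*` for `t ≥ t_*`), the frequency
diameter `D(ω(t))` satisfies the Grönwall-type differential inequality
`D⁺ D(ω(t)) ≤ 2κ σ_τ(t) - κ ζ_* D(ω(t))` for all `t ≥ t_*`. -/
theorem delayed_kuramoto_frequency_diameter_inequality
    {N : ℕ} (hN : 2 < N)
    (θ : Fin N → ℝ → ℝ) (Ω : Fin N → ℝ) (κ τ δ Rω : ℝ)
    (Dθ0 DΩ Dstar : ℝ)
    (hκ : 0 < κ) (hτ : 0 ≤ τ)
    (hC1 : ∀ i, ContDiff ℝ 1 (θ i))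
    (hODE : ∀ i, ∀ t : ℝ, 0 < t →
      deriv (θ i) t = Ω i + (κ / (N : ℝ)) *
        ∑ k ∈ Finset.univ.erase i, Real.sin (θ k (t - τ) - θ i t))
    (hRω : IsLUB {x : ℝ | ∃ t : ℝ, -τ ≤ t ∧ ∃ i, x = |deriv (θ i) t|} Rω)
    (hDθ0 : Dθ0 = ⨆ i, ⨆ j, |θ i 0 - θ j 0|)
    (hDΩ : DΩ = ⨆ i, ⨆ j, |Ω i - Ω j|)
    (hDstar : Dstar = π - Dθ0)
    (hδ : 0 < δ) (hδ' : δ < π / 2)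
    (hH1 : π / 2 < Dθ0 ∧ Dθ0 < π - δ)
    (hH2 : κ > ((N : ℝ) / ((N : ℝ) - 2)) * DΩ /
      (2 * Real.sin (Dθ0 / 2) * Real.cos ((Dθ0 + δ) / 2)))
    (hH3 : τ < min (δ / (2 * Rω)) ((π / 2 - Dstar) / Rω))
    (hωODE : ∀ i, ∀ t : ℝ, 0 < t →
      deriv (deriv (θ i)) t = (κ / (N : ℝ)) *
        ∑ k ∈ Finset.univ.erase i,
          Real.cos (θ k (t - τ) - θ i t) * (deriv (θ k) (t - τ) - deriv (θ i) t))
    (tstar ζstar : ℝ) (htstar : 0 < tstar)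
    (hζstar : ζstar = Real.cos (Dstar + Rω * τ)) (hζpos : 0 < ζstar)
    (hconf : ∀ t ≥ tstar, ∀ i k : Fin N, ζstar < Real.cos (θ k (t - τ) - θ i t))
    (στ : ℝ → ℝ)
    (hστ : ∀ t, στ t = ∫ s in (t - τ)..t, ⨆ k, |deriv (deriv (θ k)) s|) :
    ∀ t ≥ tstar,
      diniUpper (fun s => ⨆ i, ⨆ j, |deriv (θ i) s - deriv (θ j) s|) t ≤
        2 * κ * στ t - κ * ζstar * (⨆ i, ⨆ j, |deriv (θ i) t - deriv (θ j) t|) := by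
  have hne : Nonempty (Fin N) := ⟨⟨0, by omega⟩⟩
  have hdiff : ∀ i, Differentiable ℝ (θ i) := fun i => (hC1 i).differentiable one_ne_zero
  have hcθ : ∀ i, Continuous (θ i) := fun i => (hdiff i).continuous
  have hcω : ∀ i, Continuous (deriv (θ i)) := fun i => (hC1 i).continuous_deriv le_rfl
  have hR : ∀ s, -τ ≤ s → ∀ i, |deriv (θ i) s| ≤ Rω := fun s hs i => hRω.1 ⟨s, hs, i, rfl⟩
  have hR0 : 0 < Rω := by
    refine lt_of_le_of_ne ((abs_nonneg _).trans (hR 0 (by linarith) hne.some)) fun h => ?_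
    have := hH3.trans_le (min_le_left _ _)
    rw [← h] at this
    simp only [mul_zero, div_zero] at this
    linarith
  have hRτ : Rω * τ < Dθ0 - π / 2 := by
    have := (lt_div_iff₀ hR0).1 (hH3.trans_le (min_le_right _ _))
    rw [hDstar] at this
    linarith
  -- The right-hand side of the model is differentiable, hence so is `ω_i` at positive times.
  have hωderiv : ∀ i, ∀ s : ℝ, 0 < s →
      HasDerivAt (deriv (θ i)) (deriv (deriv (θ i)) s) s := by
    intro i s hs
    apply DifferentiableAt.hasDerivAt
    have hd : Differentiable ℝ (fun t => Ω i + (κ / (N : ℝ)) *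
        ∑ k ∈ Finset.univ.erase i, Real.sin (θ k (t - τ) - θ i t)) := by fun_prop
    refine (hd s).congr_of_eventuallyEq ?_
    filter_upwards [lt_mem_nhds hs] with u hu using hODE i u hu
  have hωcont : ∀ i, ContinuousOn (deriv (deriv (θ i))) (Ioi 0) := by
    intro i
    refine ContinuousOn.congr (Continuous.continuousOn ?_) fun s hs => hωODE i s hs
    fun_prop
  intro t ht
  have ht0 : 0 < t := htstar.trans_le ht
  have hτt : τ < t := by
    obtain ⟨i, j, hij⟩ := exists_abs_sub_eq_diam (fun i => θ i 0)
    exact delay_lt_of_confined θ τ Rω Dθ0 t hdiff hR i j (hij.trans hDθ0.symm)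
      (by linarith [hH1.2]) hRτ ht0 (hζpos.trans (hconf t ht j i))
  have hσ : ∀ k, |deriv (θ k) (t - τ) - deriv (θ k) t| ≤ στ t := by
    intro k
    rw [hστ]
    refine abs_sub_le_integral_iSup (fun k => deriv (θ k)) (fun k => deriv (deriv (θ k)))
      (t - τ) t (by linarith) (fun k s hs => hωderiv k s (by linarith [hs.1]))
      (fun k => (hωcont k).mono fun s hs => ?_) k
    simp only [mem_Ioi]
    linarith [hs.1]
  refine diniUpper_iSup_abs_sub_le (fun i => deriv (θ i)) _ t _ (fun i => hωderiv i t ht0)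
    fun i j hij => ?_
  rw [hωODE i t ht0, hωODE j t ht0]
  exact velocity_gap_le (by omega) (fun k => deriv (θ k) t) (fun k => deriv (θ k) (t - τ))
    (fun k i => Real.cos (θ k (t - τ) - θ i t)) κ ζstar (στ t) hκ.le hζpos.le
    (fun k i => (hconf t ht i k).le) (fun k i => Real.cos_le_one _) hσ i j hij
end

section
/- Let N > 2 and let θ = (θ_1, …, θ_N) be a global classical solution of the delayed Kuramoto system satisfying (H1)–(H3), and let t_* > 0 be a time after which the phase configuration is confined as in Proposition 2.2. Define σ_τ(t) := ∫_{t−τ}^{t} max_{1≤k≤N} |ω̇_k(s)| ds. Then max_{1≤i≤N} |ω̇_i(t)| ≤ κ σ_τ(t) + κ D(ω(t)) for all t ≥ t_*. -/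
open Real Filter Set intervalIntegral

/-!
After the confinement time every delayed argument is positive: `τ < tstar`.
Indeed a pair of phases at distance `Dθ0` at time `0` must come within `π - Dθ0` at time `tstar`,
and since phases move with speed at most `Rω` this forces `2 Dθ0 - π < 2 Rω tstar`. On the
other hand the bound `τ < (π / 2 - Dstar) / Rω` reads `2 Rω τ < 2 Dθ0 - π`
(`delay_lt_confinement_time`).

Hence for `t ≥ tstar` the window `[t - τ, t]` lies in `(0, ∞)`, where the equation of motion makes
the frequencies `C¹`, and the fundamental theorem of calculus gives
`|ω k (t - τ) - ω k t| ≤ στ t` (`abs_sub_delay_le`). Bounding each cosine by `1` in the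
acceleration formula and splitting
`ω k (t - τ) - ω i t = (ω k (t - τ) - ω k t) + (ω k t - ω i t)` gives at most `N - 1` terms, each
bounded by `στ t + D(ω(t))`, with prefactor `κ / N`.
-/

lemma le_iSup_iSup_of_fin {N : ℕ} (f : Fin N → Fin N → ℝ) (i j : Fin N) :
    f i j ≤ ⨆ i, ⨆ j, f i j :=
  (le_ciSup (Finite.bddAbove_range (f i)) j).trans
    (le_ciSup (Finite.bddAbove_range fun i => ⨆ j, f i j) i)

/-- Phases moving at speed at most `R` on `[0, T]` need a time longer than `τ` for their diameter
to shrink from `D` to below `π - D`, provided `τ < (π / 2 - (π - D)) / R`. -/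
lemma delay_lt_confinement_time {N : ℕ} (hN : 0 < N) (θ : Fin N → ℝ → ℝ) {τ R D T : ℝ}
    (hτ : 0 ≤ τ) (hT : 0 < T) (hdiff : ∀ i, Differentiable ℝ (θ i))
    (hR : ∀ i, ∀ t, 0 ≤ t → |deriv (θ i) t| ≤ R)
    (hD : D = ⨆ i, ⨆ j, |θ i 0 - θ j 0|)
    (hτR : τ < (π / 2 - (π - D)) / R)
    (hconf : (⨆ i, ⨆ j, |θ i T - θ j T|) < π - D) : τ < T := by
  have : Nonempty (Fin N) := ⟨⟨0, hN⟩⟩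
  have hR0 : 0 ≤ R := (abs_nonneg _).trans (hR ⟨0, hN⟩ 0 le_rfl)
  -- `R = 0` would make the right side of `hτR` the junk value `0`, contradicting `0 ≤ τ`.
  have hRpos : 0 < R := by
    rcases hR0.lt_or_eq with h | h
    · exact h
    · rw [← h, div_zero] at hτR
      linarith
  have hτR' : τ * R < π / 2 - (π - D) := (lt_div_iff₀ hRpos).1 hτR
  have hmove : ∀ i, |θ i T - θ i 0| ≤ R * T := by
    intro i
    have h := (convex_Icc (0 : ℝ) T).norm_image_sub_le_of_norm_deriv_le (f := θ i) (C := R)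
      (fun x _ => hdiff i x) (fun x hx => hR i x hx.1)
      (left_mem_Icc.2 hT.le) (right_mem_Icc.2 hT.le)
    simpa [Real.norm_eq_abs, abs_of_pos hT] using h
  obtain ⟨i, hi⟩ := exists_eq_ciSup_of_finite (f := fun i => ⨆ j, |θ i 0 - θ j 0|)
  obtain ⟨j, hj⟩ := exists_eq_ciSup_of_finite (f := fun j => |θ i 0 - θ j 0|)
  have h0 : |θ i 0 - θ j 0| = D := by rw [hD, ← hi, ← hj]
  have hT' : |θ i T - θ j T| < π - D :=
    (le_iSup_iSup_of_fin (fun i j => |θ i T - θ j T|) i j).trans_lt hconf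
  have htri : D ≤ |θ i T - θ j T| + |θ i T - θ i 0| + |θ j T - θ j 0| := by
    rw [← h0]
    calc |θ i 0 - θ j 0|
        = |(θ i T - θ j T) - (θ i T - θ i 0) + (θ j T - θ j 0)| := by congr 1; ring
      _ ≤ |(θ i T - θ j T) - (θ i T - θ i 0)| + |θ j T - θ j 0| := abs_add_le _ _
      _ ≤ _ := by gcongr; exact abs_sub _ _
  have hi' := hmove i
  have hj' := hmove j
  have : τ * R < T * R := by nlinarith
  exact lt_of_mul_lt_mul_right this hR0

/-- The change of `ω k` over `[a, b]` is at most the integral of `max_l |deriv (ω l) s|`, when all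
`ω l` are differentiable with continuous derivative on `[a, b]`. -/
lemma abs_sub_delay_le {N : ℕ} (ω : Fin N → ℝ → ℝ) {a b : ℝ} (hab : a ≤ b)
    (hd : ∀ l, ∀ s ∈ Icc a b, DifferentiableAt ℝ (ω l) s)
    (hc : ∀ l, ContinuousOn (deriv (ω l)) (Icc a b)) (k : Fin N) :
    |ω k a - ω k b| ≤ ∫ s in a..b, ⨆ l, |deriv (ω l) s| := by
  have hu : uIcc a b = Icc a b := uIcc_of_le hab
  have : Nonempty (Fin N) := ⟨k⟩
  have hcsup : ContinuousOn (fun s => ⨆ l, |deriv (ω l) s|) (Icc a b) := by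
    have h := ContinuousOn.finset_sup'_apply (s := (Finset.univ : Finset (Fin N)))
      Finset.univ_nonempty (f := fun l s => |deriv (ω l) s|) (t := Icc a b)
      (fun l _ => (hc l).abs)
    simpa only [Finset.sup'_univ_eq_ciSup] using h
  have hint : IntervalIntegrable (deriv (ω k)) MeasureTheory.volume a b :=
    (hu ▸ hc k : ContinuousOn _ (uIcc a b)).intervalIntegrable
  have hftc : ∫ s in a..b, deriv (ω k) s = ω k b - ω k a :=
    integral_deriv_eq_sub (fun s hs => hd k s (hu ▸ hs)) hint
  rw [abs_sub_comm, ← hftc]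
  refine (abs_integral_le_integral_abs hab).trans ?_
  refine integral_mono_on hab hint.abs
    (hu ▸ hcsup : ContinuousOn _ (uIcc a b)).intervalIntegrable fun s _ => ?_
  exact le_ciSup (f := fun l => |deriv (ω l) s|) (Finite.bddAbove_range _) k

/-- Under (H1)-(H3), after the confinement time `t_*` of
Proposition 2.2, the maximal frequency acceleration is bounded by
`κ σ_τ(t) + κ D(ω(t))`. -/
theorem delayed_kuramoto_acceleration_bound
    {N : ℕ} (hN : 2 < N)
    (θ : Fin N → ℝ → ℝ) (Ω : Fin N → ℝ) (κ τ δ Rω : ℝ)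
    (Dθ0 DΩ Dstar : ℝ)
    (hκ : 0 < κ) (hτ : 0 ≤ τ)
    (hC1 : ∀ i, ContDiff ℝ 1 (θ i))
    (hODE : ∀ i, ∀ t : ℝ, 0 < t →
      deriv (θ i) t = Ω i + (κ / (N : ℝ)) *
        ∑ k ∈ Finset.univ.erase i, Real.sin (θ k (t - τ) - θ i t))
    (hRω : IsLUB {x : ℝ | ∃ t : ℝ, -τ ≤ t ∧ ∃ i, x = |deriv (θ i) t|} Rω)
    (hDθ0 : Dθ0 = ⨆ i, ⨆ j, |θ i 0 - θ j 0|)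
    (hDΩ : DΩ = ⨆ i, ⨆ j, |Ω i - Ω j|)
    (hDstar : Dstar = π - Dθ0)
    (hδ : 0 < δ) (hδ' : δ < π / 2)
    (hH1 : π / 2 < Dθ0 ∧ Dθ0 < π - δ)
    (hH2 : κ > ((N : ℝ) / ((N : ℝ) - 2)) * DΩ /
      (2 * Real.sin (Dθ0 / 2) * Real.cos ((Dθ0 + δ) / 2)))
    (hH3 : τ < min (δ / (2 * Rω)) ((π / 2 - Dstar) / Rω))
    (hωODE : ∀ i, ∀ t : ℝ, 0 < t →
      deriv (deriv (θ i)) t = (κ / (N : ℝ)) *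
        ∑ k ∈ Finset.univ.erase i,
          Real.cos (θ k (t - τ) - θ i t) * (deriv (θ k) (t - τ) - deriv (θ i) t))
    (tstar : ℝ) (htstar : 0 < tstar)
    (hconf : ∀ t ≥ tstar, (⨆ i, ⨆ j, |θ i t - θ j t|) < Dstar)
    (στ : ℝ → ℝ)
    (hστ : ∀ t, στ t = ∫ s in (t - τ)..t, ⨆ k, |deriv (deriv (θ k)) s|) :
    ∀ t ≥ tstar,
      (⨆ i, |deriv (deriv (θ i)) t|) ≤
        κ * στ t + κ * (⨆ i, ⨆ j, |deriv (θ i) t - deriv (θ j) t|) := by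
  have hNpos : 0 < N := by omega
  have : Nonempty (Fin N) := ⟨⟨0, hNpos⟩⟩
  have hdiff : ∀ i, Differentiable ℝ (θ i) := fun i => (hC1 i).differentiable one_ne_zero
  have hcθ : ∀ i, Continuous (θ i) := fun i => (hC1 i).continuous
  have hcω : ∀ i, Continuous (deriv (θ i)) := fun i => (hC1 i).continuous_deriv le_rfl
  subst hDstar
  have hdelay : τ < tstar :=
    delay_lt_confinement_time hNpos θ hτ htstar hdiff
      (fun i t ht => hRω.1 ⟨t, by linarith, i, rfl⟩) hDθ0
      (hH3.trans_le (min_le_right _ _)) (hconf tstar le_rfl)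
  -- At positive times the equation of motion expresses `ω i` through the differentiable phases.
  have hωdiff : ∀ i, ∀ s, 0 < s → DifferentiableAt ℝ (deriv (θ i)) s := by
    intro i s hs
    have hev : deriv (θ i) =ᶠ[nhds s] fun t => Ω i + (κ / (N : ℝ)) *
        ∑ k ∈ Finset.univ.erase i, Real.sin (θ k (t - τ) - θ i t) := by
      filter_upwards [Ioi_mem_nhds hs] with t ht using hODE i t ht
    refine DifferentiableAt.congr_of_eventuallyEq ?_ hev
    fun_prop
  have hωcont : ∀ i, ContinuousOn (deriv (deriv (θ i))) (Ioi 0) := by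
    intro i
    refine ContinuousOn.congr (f := fun t => (κ / (N : ℝ)) *
        ∑ k ∈ Finset.univ.erase i,
          Real.cos (θ k (t - τ) - θ i t) * (deriv (θ k) (t - τ) - deriv (θ i) t)) ?_
      fun t ht => hωODE i t ht
    exact Continuous.continuousOn (by fun_prop)
  intro t ht
  have hsub : Icc (t - τ) t ⊆ Ioi 0 := fun s hs => by
    have := hs.1
    show 0 < s
    linarith
  have hσ : ∀ k, |deriv (θ k) (t - τ) - deriv (θ k) t| ≤ στ t := by
    intro k
    rw [hστ]
    exact abs_sub_delay_le (fun k => deriv (θ k)) (by linarith)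
      (fun l s hs => hωdiff l s (hsub hs)) (fun l => (hωcont l).mono hsub) k
  set D := ⨆ i, ⨆ j, |deriv (θ i) t - deriv (θ j) t| with hDdef
  have hD : ∀ i j, |deriv (θ i) t - deriv (θ j) t| ≤ D := fun i j =>
    le_iSup_iSup_of_fin (fun i j => |deriv (θ i) t - deriv (θ j) t|) i j
  refine ciSup_le fun i => ?_
  have hnonneg : 0 ≤ στ t + D :=
    add_nonneg ((abs_nonneg _).trans (hσ i)) ((abs_nonneg _).trans (hD i i))
  have hNR : (0 : ℝ) < N := by exact_mod_cast hNpos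
  rw [hωODE i t (htstar.trans_le ht), abs_mul, abs_of_pos (div_pos hκ hNR)]
  have hterm : ∀ k ∈ Finset.univ.erase i,
      |Real.cos (θ k (t - τ) - θ i t) * (deriv (θ k) (t - τ) - deriv (θ i) t)| ≤ στ t + D := by
    intro k _
    rw [abs_mul]
    calc _ ≤ 1 * |deriv (θ k) (t - τ) - deriv (θ i) t| := by
          gcongr
          exact Real.abs_cos_le_one _
      _ ≤ |deriv (θ k) (t - τ) - deriv (θ k) t| + |deriv (θ k) t - deriv (θ i) t| := by
          rw [one_mul]
          exact abs_sub_le _ _ _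
      _ ≤ στ t + D := add_le_add (hσ k) (hD k i)
  have hcard : ((Finset.univ.erase i).card : ℝ) ≤ N := by
    exact_mod_cast (Finset.card_le_univ _).trans_eq (Fintype.card_fin N)
  calc _ ≤ κ / N * (N * (στ t + D)) := by
        gcongr
        refine (Finset.abs_sum_le_sum_abs _ _).trans ((Finset.sum_le_card_nsmul _ _ _ hterm).trans ?_)
        rw [nsmul_eq_mul]
        gcongr
    _ = κ * στ t + κ * D := by field_simp
end

section
/- Let N > 2 and let θ = (θ_1, …, θ_N) be a global classical solution of the delayed Kuramoto system satisfying (H1)–(H3); let t_* > 0 and ζ_* = cos(D_* + R_ω τ) > 0 be as in the confinement estimate, and set σ_τ(t) := ∫_{t−τ}^{t} max_{1≤k≤N} |ω̇_k(s)| ds. Suppose η > 0 satisfies both 2κ − η e^{−τ} + κη(1 − e^{−τ}) ≤ 0 and −κζ_* + κη(1 − e^{−τ}) < 0. Then the Lyapunov functional L(t) := D(ω(t)) + η ∫_{t−τ}^{t} e^{−(t−s)} ( ∫_s^t max_{1≤j≤N} |ω̇_j(σ)| dσ ) ds satisfies, for some constant γ > 0, the inequality D⁺ L(t) ≤ −γ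 L(t) for all t ≥ t_*; in particular L(t), and hence D(ω(t)), decays exponentially on [t_*, ∞). -/
/-!
The proof is a differential inequality for `L = D + η Φ`, where `D` is the frequency diameter
(`spread`) and `Φ` the memory term (`memory`), in terms of `σ = ∫_{t-τ}^t m`, with
`m = max_j |ω̇_j|`.

* The confinement estimate can only hold for `t > τ` (`exists_cos_nonpos`): before time `τ` the
  phases have moved too little from a configuration of diameter `Dθ0 > π/2`. Hence for `t ≥ t_*` the
  whole window `[t - τ, t]` lies in `(0, ∞)`, where the second-order system holds, the accelerations
  are continuous, and `|ω_k(t-τ) - ω_k(t)| ≤ σ(t)`.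
* At a pair `(i, j)` realizing `D`, the weights lie between `ζ_*` and `1`, so
  `ω̇_i - ω̇_j ≤ -κ ζ_* D + 2 κ σ` (`force_sub_le`); this bounds the right slopes of the maximum `D`
  (`spread_eventually_lt`). In the same way `m ≤ κ (D + σ)` (`abs_force_le`).
* The memory term is differentiable with `Φ' = (1 - e^{-τ}) m - Φ - e^{-τ} σ`
  (`hasDerivAt_memory`).

Adding up, every right slope of `L` is asymptotically at most
`(-κ ζ_* + κ η (1 - e^{-τ})) D + (2κ - η e^{-τ} + κ η (1 - e^{-τ})) σ - η Φ`. The assumptions on `η`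
make the first coefficient negative and the second nonpositive, so the bound is at most `-γ L` with
`γ = min (1, κ ζ_* - κ η (1 - e^{-τ}))`. The Dini inequality follows directly, and the exponential
decay by Grönwall's inequality for right slopes.
-/

open Real Filter Set intervalIntegral

open Topology

/-! ### The frequency diameter -/

/-- The diameter `max_{i,j} |x_i - x_j|` of a finite family of reals. -/
noncomputable def spread {N : ℕ} (x : Fin N → ℝ) : ℝ := ⨆ i, ⨆ j, |x i - x j|

lemma abs_sub_le_spread {N : ℕ} (x : Fin N → ℝ) (i j : Fin N) : |x i - x j| ≤ spread x :=
  (le_ciSup (f := fun j => |x i - x j|) (Set.finite_range _).bddAbove j).trans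
    (le_ciSup (f := fun i => ⨆ j, |x i - x j|) (Set.finite_range _).bddAbove i)

lemma sub_le_spread {N : ℕ} (x : Fin N → ℝ) (i j : Fin N) : x i - x j ≤ spread x :=
  (le_abs_self _).trans (abs_sub_le_spread x i j)

/-- The diameter is attained, and the absolute value can be dropped by swapping the indices. -/
lemma exists_sub_eq_spread {N : ℕ} [NeZero N] (x : Fin N → ℝ) :
    ∃ i j, x i - x j = spread x := by
  obtain ⟨i, hi⟩ := exists_eq_ciSup_of_finite (f := fun i => ⨆ j, |x i - x j|)
  obtain ⟨j, hj⟩ := exists_eq_ciSup_of_finite (f := fun j => |x i - x j|)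
  have h : |x i - x j| = spread x := hj.trans hi
  rcases abs_cases (x i - x j) with ⟨h1, _⟩ | ⟨h1, _⟩
  · exact ⟨i, j, by rw [← h, h1]⟩
  · exact ⟨j, i, by rw [← h, h1]; ring⟩

lemma continuous_ciSup_fin {N : ℕ} [NeZero N] {f : Fin N → ℝ → ℝ} (hf : ∀ i, Continuous (f i)) :
    Continuous fun t => ⨆ i, f i t := by
  have h : (fun t => ⨆ i, f i t) =
      fun t => Finset.univ.sup' Finset.univ_nonempty (fun i => f i t) := by
    funext t
    rw [Finset.sup'_univ_eq_ciSup]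
  rw [h]
  exact Continuous.finset_sup'_apply _ fun i _ => hf i

lemma continuous_spread {N : ℕ} [NeZero N] {w : Fin N → ℝ → ℝ} (hw : ∀ i, Continuous (w i)) :
    Continuous fun t => spread fun i => w i t :=
  continuous_ciSup_fin fun i => continuous_ciSup_fin fun j => ((hw i).sub (hw j)).abs

lemma HasDerivAt.eventually_lt_right {f : ℝ → ℝ} {f' t r : ℝ} (h : HasDerivAt f f' t)
    (hr : f' < r) : ∀ᶠ z in 𝓝[>] t, f z < f t + (z - t) * r := by
  have h1 : Tendsto (slope f t) (𝓝[>] t) (𝓝 f') :=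
    (hasDerivAt_iff_tendsto_slope.1 h).mono_left (nhdsWithin_mono _ fun z hz => ne_of_gt hz)
  filter_upwards [h1.eventually (gt_mem_nhds hr), self_mem_nhdsWithin] with z hz hzt
  have hzt' : 0 < z - t := sub_pos.2 hzt
  rw [slope_def_field, div_lt_iff₀ hzt'] at hz
  linarith

/-- The diameter of a differentiable family grows on the right at most at the rate of the fastest
active pair: pairs that do not realize the diameter at time `t` stay below it for a while. -/
lemma spread_eventually_lt {N : ℕ} [NeZero N] {w : Fin N → ℝ → ℝ} {dw : Fin N → ℝ} {t A r : ℝ}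
    (hw : ∀ i, HasDerivAt (w i) (dw i) t)
    (hA : ∀ i j, w i t - w j t = spread (fun i => w i t) → dw i - dw j ≤ A) (hr : A < r) :
    ∀ᶠ z in 𝓝[>] t, spread (fun i => w i z) < spread (fun i => w i t) + (z - t) * r := by
  have key : ∀ i j, ∀ᶠ z in 𝓝[>] t, w i z - w j z < spread (fun i => w i t) + (z - t) * r := by
    intro i j
    have hd : HasDerivAt (fun z => w i z - w j z) (dw i - dw j) t := (hw i).sub (hw j)
    rcases (sub_le_spread (fun i => w i t) i j).eq_or_lt with h | h
    · have := hd.eventually_lt_right (lt_of_le_of_lt (hA i j h) hr)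
      filter_upwards [this] with z hz
      rw [← h]
      exact hz
    · have hc : ContinuousAt (fun z => spread (fun i => w i t) + (z - t) * r) t := by fun_prop
      have h2 : w i t - w j t < spread (fun i => w i t) + (t - t) * r := by simpa using h
      exact (hd.continuousAt.eventually_lt hc h2).filter_mono nhdsWithin_le_nhds
  filter_upwards [eventually_all.2 fun i => eventually_all.2 (key i)] with z hz
  obtain ⟨i, j, hij⟩ := exists_sub_eq_spread fun i => w i z
  rw [← hij]
  exact hz i j

lemma exists_eventually_le_spread {N : ℕ} [NeZero N] {w : Fin N → ℝ → ℝ} {dw : Fin N → ℝ} {t : ℝ}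
    (hw : ∀ i, HasDerivAt (w i) (dw i) t) :
    ∃ c, ∀ᶠ z in 𝓝[>] t,
      spread (fun i => w i t) + (z - t) * c ≤ spread (fun i => w i z) := by
  obtain ⟨i, j, hij⟩ := exists_sub_eq_spread fun i => w i t
  refine ⟨dw i - dw j - 1, ?_⟩
  have hd : HasDerivAt (fun z => w j z - w i z) (dw j - dw i) t := (hw j).sub (hw i)
  filter_upwards [hd.eventually_lt_right (lt_add_one _)] with z hz
  have := sub_le_spread (fun i => w i z) i j
  linarith

/-! ### One-sided slopes, Dini derivatives and Grönwall -/

/-- The lower bound on the slopes makes the real-valued `limsup` meaningful. -/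
lemma diniUpper_le_s8 {f : ℝ → ℝ} {t R c : ℝ}
    (hu : ∀ r, R < r → ∀ᶠ z in 𝓝[>] t, f z < f t + (z - t) * r)
    (hl : ∀ᶠ z in 𝓝[>] t, f t + (z - t) * c ≤ f z) : diniUpper f t ≤ R := by
  have hmap : Tendsto (fun h : ℝ => t + h) (𝓝[>] 0) (𝓝[>] t) := by
    refine tendsto_nhdsWithin_iff.2 ⟨?_, ?_⟩
    · have : Tendsto (fun h : ℝ => t + h) (𝓝 0) (𝓝 (t + 0)) :=
        (continuous_const.add continuous_id).tendsto 0
      rw [add_zero] at this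
      exact this.mono_left nhdsWithin_le_nhds
    · filter_upwards [self_mem_nhdsWithin] with h hh
      exact lt_add_of_pos_right t hh
  have hbdd : IsBoundedUnder (· ≥ ·) (𝓝[>] (0 : ℝ)) fun h => (f (t + h) - f t) / h := by
    refine ⟨c, ?_⟩
    rw [eventually_map]
    filter_upwards [hmap.eventually hl, self_mem_nhdsWithin] with h hh hpos
    rw [ge_iff_le, le_div_iff₀ hpos]
    linarith
  refine le_of_forall_gt_imp_ge_of_dense fun r hr => ?_
  refine limsup_le_of_le hbdd.isCoboundedUnder_le ?_
  filter_upwards [hmap.eventually (hu r hr), self_mem_nhdsWithin] with h hh hpos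
  rw [div_le_iff₀ hpos]
  linarith

lemma exp_decay_of_slope {f : ℝ → ℝ} {a γ : ℝ} (hf : ContinuousOn f (Ici a))
    (hu : ∀ t ≥ a, ∀ r, -γ * f t < r → ∀ᶠ z in 𝓝[>] t, f z < f t + (z - t) * r) :
    ∀ t ≥ a, f t ≤ f a * Real.exp (-γ * (t - a)) := by
  intro t ht
  have := le_gronwallBound_of_liminf_deriv_right_le (f := f) (f' := fun x => -γ * f x)
    (δ := f a) (K := -γ) (ε := 0) (a := a) (b := t) (hf.mono Icc_subset_Ici_self)
    (fun x hx r hr => by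
      refine Eventually.frequently ?_
      filter_upwards [hu x hx.1 r hr, self_mem_nhdsWithin] with z hz hzx
      have hzx' : 0 < z - x := sub_pos.2 hzx
      rw [inv_mul_lt_iff₀ hzx']
      linarith) le_rfl (fun x _ => by simp) t ⟨ht, le_rfl⟩
  rwa [gronwallBound_ε0] at this

/-! ### The delay functional -/

/-- The memory term `∫_{t-τ}^t e^{-(t-s)} ∫_s^t m(u) du ds` of the Lyapunov functional. -/
noncomputable def memory (τ : ℝ) (m : ℝ → ℝ) (t : ℝ) : ℝ :=
  ∫ s in (t - τ)..t, Real.exp (-(t - s)) * ∫ u in s..t, m u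

lemma memory_nonneg {τ : ℝ} (hτ : 0 ≤ τ) {m : ℝ → ℝ} (hm : ∀ u, 0 ≤ m u) (t : ℝ) :
    0 ≤ memory τ m t := by
  refine intervalIntegral.integral_nonneg (by linarith) fun s hs => ?_
  exact mul_nonneg (Real.exp_pos _).le
    (intervalIntegral.integral_nonneg hs.2 fun u _ => hm u)

/-- The memory term `Φ` solves `Φ' = (1 - e^{-τ}) m - Φ - e^{-τ} ∫_{t-τ}^t m`. -/
lemma hasDerivAt_memory {τ : ℝ} {m : ℝ → ℝ} (hm : Continuous m) (t : ℝ) :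
    HasDerivAt (memory τ m)
      ((1 - Real.exp (-τ)) * m t - memory τ m t - Real.exp (-τ) * ∫ u in (t - τ)..t, m u) t := by
  set M : ℝ → ℝ := fun t => ∫ u in (0 : ℝ)..t, m u with hM
  have hMd : ∀ t, HasDerivAt M (m t) t := fun t => hm.integral_hasStrictDerivAt 0 t |>.hasDerivAt
  have hMc : Continuous M := continuous_iff_continuousAt.2 fun t => (hMd t).continuousAt
  have hint : ∀ a b, ∫ u in a..b, m u = M b - M a := fun a b =>
    (intervalIntegral.integral_interval_sub_left (hm.intervalIntegrable _ _)
      (hm.intervalIntegrable _ _)).symm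
  have hEc : Continuous fun s => Real.exp s * M s := Real.continuous_exp.mul hMc
  set P : ℝ → ℝ := fun t => ∫ u in (0 : ℝ)..t, Real.exp u * M u with hP
  have hPd : ∀ t, HasDerivAt P (Real.exp t * M t) t :=
    fun t => hEc.integral_hasStrictDerivAt 0 t |>.hasDerivAt
  -- Splitting `∫_s^t m = M t - M s` leaves a single integral with integrand independent of `t`.
  have hform : ∀ t, memory τ m t =
      M t * (1 - Real.exp (-τ)) - Real.exp (-t) * (P t - P (t - τ)) := by
    intro t
    have h1 : ∀ s, Real.exp (-(t - s)) * ∫ u in s..t, m u =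
        M t * Real.exp (-t) * Real.exp s - Real.exp (-t) * (Real.exp s * M s) := by
      intro s
      rw [hint, show -(t - s) = -t + s by ring, Real.exp_add]
      ring
    unfold memory
    simp_rw [h1]
    have i1 : IntervalIntegrable (fun s => M t * Real.exp (-t) * Real.exp s)
        MeasureTheory.volume (t - τ) t :=
      (continuous_const.mul Real.continuous_exp).intervalIntegrable _ _
    have i2 : IntervalIntegrable (fun s => Real.exp (-t) * (Real.exp s * M s))
        MeasureTheory.volume (t - τ) t := (continuous_const.mul hEc).intervalIntegrable _ _
    rw [intervalIntegral.integral_sub i1 i2,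
      intervalIntegral.integral_const_mul, intervalIntegral.integral_const_mul, integral_exp,
      ← intervalIntegral.integral_interval_sub_left (a := 0) (hEc.intervalIntegrable _ _)
      (hEc.intervalIntegrable _ _)]
    have e1 : Real.exp (t - τ) = Real.exp t * Real.exp (-τ) := by
      rw [← Real.exp_add]; ring_nf
    have e2 : Real.exp (-t) * Real.exp t = 1 := by rw [← Real.exp_add]; simp
    rw [e1]
    linear_combination (M t * (1 - Real.exp (-τ))) * e2
  have hexp : HasDerivAt (fun t : ℝ => Real.exp (-t)) (Real.exp (-t) * -1) t :=
    (hasDerivAt_id t).neg.exp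
  have hPτ : HasDerivAt (fun t => P (t - τ)) (Real.exp (t - τ) * M (t - τ)) t := by
    exact (hPd (t - τ)).comp_sub_const t τ
  have hd := ((hMd t).mul_const (1 - Real.exp (-τ))).sub (hexp.mul ((hPd t).sub hPτ))
  have hfun : memory τ m = fun t =>
      M t * (1 - Real.exp (-τ)) - Real.exp (-t) * (P t - P (t - τ)) := funext hform
  rw [hform t, hint, hfun]
  refine hd.congr_deriv ?_
  have e1 : Real.exp (t - τ) = Real.exp t * Real.exp (-τ) := by
    rw [← Real.exp_add]; ring_nf
  have e2 : Real.exp (-t) * Real.exp t = 1 := by rw [← Real.exp_add]; simp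
  simp only [Pi.sub_apply, e1]
  linear_combination (- M t + Real.exp (-τ) * M (t - τ)) * e2

/-! ### Pointwise estimates on the coupling -/

/-- The acceleration `(κ/N) Σ_{k≠i} c_k (a_k - b)` of an oscillator with frequency `b`, where `a`
are the delayed frequencies and `c` the cosine weights. -/
noncomputable def force {N : ℕ} (κ : ℝ) (i : Fin N) (c a : Fin N → ℝ) (b : ℝ) : ℝ :=
  (κ / (N : ℝ)) * ∑ k ∈ Finset.univ.erase i, c k * (a k - b)

/-- At an oscillator of maximal frequency the coupling acts as a contraction, up to the delay
error `σ`. -/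
lemma force_le_of_max {N : ℕ} [NeZero N] {κ ζ s : ℝ} (hκ : 0 < κ) (i : Fin N) {c a w : Fin N → ℝ}
    (hc : ∀ k, ζ ≤ c k) (hc0 : ∀ k, 0 ≤ c k) (hc1 : ∀ k, c k ≤ 1)
    (ha : ∀ k, |a k - w k| ≤ s) (hi : ∀ k, w k ≤ w i) :
    force κ i c a (w i) ≤ (κ / N) * (ζ * ∑ k, (w k - w i)) + κ * s := by
  have hN : (0 : ℝ) < N := Nat.cast_pos.2 (NeZero.pos N)
  have hs : 0 ≤ s := (abs_nonneg _).trans (ha i)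
  have h1 : ∑ k ∈ Finset.univ.erase i, c k * (a k - w i) ≤ ∑ k, (ζ * (w k - w i) + s) := by
    calc ∑ k ∈ Finset.univ.erase i, c k * (a k - w i)
        ≤ ∑ k ∈ Finset.univ.erase i, (ζ * (w k - w i) + s) := by
          refine Finset.sum_le_sum fun k _ => ?_
          have h2 : c k * (a k - w k) ≤ s :=
            calc c k * (a k - w k) ≤ c k * s :=
                  mul_le_mul_of_nonneg_left ((le_abs_self _).trans (ha k)) (hc0 k)
              _ ≤ 1 * s := mul_le_mul_of_nonneg_right (hc1 k) hs
              _ = s := one_mul s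
          have h3 : c k * (w k - w i) ≤ ζ * (w k - w i) :=
            mul_le_mul_of_nonpos_right (hc k) (sub_nonpos.2 (hi k))
          linarith
      _ ≤ ∑ k, (ζ * (w k - w i) + s) := by
          rw [← Finset.add_sum_erase _ _ (Finset.mem_univ i)]
          simpa using hs
  rw [Finset.sum_add_distrib, ← Finset.mul_sum] at h1
  simp only [Finset.sum_const, Finset.card_univ, Fintype.card_fin, nsmul_eq_mul] at h1
  calc force κ i c a (w i) ≤ (κ / N) * (ζ * ∑ k, (w k - w i) + N * s) :=
        mul_le_mul_of_nonneg_left h1 (by positivity)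
    _ = _ := by field_simp

lemma force_neg {N : ℕ} (κ : ℝ) (i : Fin N) (c a : Fin N → ℝ) (b : ℝ) :
    force κ i c (fun k => -a k) (-b) = -force κ i c a b := by
  unfold force
  rw [← mul_neg, ← Finset.sum_neg_distrib]
  congr 1
  exact Finset.sum_congr rfl fun k _ => by ring

/-- The contraction rate of an extremal pair. -/
lemma force_sub_le {N : ℕ} [NeZero N] {κ ζ s : ℝ} (hκ : 0 < κ) (hζ : 0 ≤ ζ) {i j : Fin N}
    {c a : Fin N → ℝ} {c' w : Fin N → ℝ}
    (hc : ∀ k, ζ ≤ c k) (hc1 : ∀ k, c k ≤ 1) (hc' : ∀ k, ζ ≤ c' k) (hc1' : ∀ k, c' k ≤ 1)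
    (ha : ∀ k, |a k - w k| ≤ s) (hij : w i - w j = spread w) :
    force κ i c a (w i) - force κ j c' a (w j) ≤ -κ * ζ * spread w + 2 * κ * s := by
  have hN : (0 : ℝ) < N := Nat.cast_pos.2 (NeZero.pos N)
  have h1 := force_le_of_max hκ i hc (fun k => hζ.trans (hc k)) hc1 ha
    (fun k => by linarith [sub_le_spread w k j])
  have h2 := force_le_of_max (w := fun k => -w k) (a := fun k => -a k) hκ j hc'
    (fun k => hζ.trans (hc' k)) hc1'
    (fun k => by rw [← abs_neg]; convert ha k using 2; ring)
    (fun k => by linarith [sub_le_spread w i k])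
  rw [force_neg] at h2
  simp only [Finset.sum_sub_distrib, Finset.sum_neg_distrib, Finset.sum_const, Finset.card_univ,
    Fintype.card_fin, nsmul_eq_mul] at h1 h2
  have h3 : (κ / N) * (ζ * (∑ k, w k - N * w i)) + (κ / N) * (ζ * (-∑ k, w k - N * -w j))
      = -κ * ζ * (w i - w j) := by
    field_simp
    ring
  rw [← hij]
  linarith

lemma abs_force_le {N : ℕ} [NeZero N] {κ s : ℝ} (hκ : 0 < κ) (i : Fin N) {c a w : Fin N → ℝ}
    (hc : ∀ k, |c k| ≤ 1) (ha : ∀ k, |a k - w k| ≤ s) :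
    |force κ i c a (w i)| ≤ κ * spread w + κ * s := by
  have hN : (0 : ℝ) < N := Nat.cast_pos.2 (NeZero.pos N)
  have hs : 0 ≤ s := (abs_nonneg _).trans (ha i)
  have hD : 0 ≤ spread w := (abs_nonneg _).trans (abs_sub_le_spread w i i)
  have h1 : |∑ k ∈ Finset.univ.erase i, c k * (a k - w i)| ≤ N * (spread w + s) := by
    calc |∑ k ∈ Finset.univ.erase i, c k * (a k - w i)|
        ≤ ∑ k ∈ Finset.univ.erase i, |c k * (a k - w i)| := Finset.abs_sum_le_sum_abs _ _
      _ ≤ ∑ k, |c k * (a k - w i)| :=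
          Finset.sum_le_sum_of_subset_of_nonneg (Finset.subset_univ _) fun _ _ _ => abs_nonneg _
      _ ≤ ∑ _k : Fin N, (spread w + s) := by
          refine Finset.sum_le_sum fun k _ => ?_
          rw [abs_mul]
          have h2 : |a k - w i| ≤ spread w + s := by
            have := abs_add_le (a k - w k) (w k - w i)
            rw [sub_add_sub_cancel] at this
            linarith [ha k, abs_sub_le_spread w k i]
          calc |c k| * |a k - w i| ≤ 1 * |a k - w i| :=
                mul_le_mul_of_nonneg_right (hc k) (abs_nonneg _)
            _ ≤ _ := by rwa [one_mul]
      _ = N * (spread w + s) := by rw [Finset.sum_const, Finset.card_fin, nsmul_eq_mul]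
  unfold force
  rw [abs_mul, abs_of_pos (by positivity : 0 < κ / N)]
  calc κ / N * |∑ k ∈ Finset.univ.erase i, c k * (a k - w i)|
      ≤ κ / N * (N * (spread w + s)) := mul_le_mul_of_nonneg_left h1 (by positivity)
    _ = _ := by field_simp

/-! ### The confinement time exceeds the delay -/

/-- Between times `t - τ`, `0` and `t` the phases move by at most `Rω τ` in total, which does not
exceed the distance from `Dθ0` to the ends of `[π/2, π]`. So for `t ∈ [0, τ]` the
pair realizing the initial diameter still has `|θ_k(t-τ) - θ_i(t)| ∈ [π/2, π]`, which is
incompatible with a positive cosine: the confinement estimate can hold only after time `τ`. -/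
lemma exists_cos_nonpos {N : ℕ} [NeZero N] {θ : Fin N → ℝ → ℝ} {τ Rω Dθ0 t : ℝ}
    (hdiff : ∀ i, Differentiable ℝ (θ i))
    (hR : ∀ s, -τ ≤ s → ∀ i, |deriv (θ i) s| ≤ Rω)
    (hD : Dθ0 = ⨆ i, ⨆ j, |θ i 0 - θ j 0|)
    (hlow : Rω * τ ≤ Dθ0 - π / 2) (hupp : Rω * τ ≤ π - Dθ0) (ht : 0 ≤ t) (htτ : t ≤ τ) :
    ∃ i k, Real.cos (θ k (t - τ) - θ i t) ≤ 0 := by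
  obtain ⟨i, j, hij⟩ := exists_sub_eq_spread fun i => θ i 0
  have hij' : θ i 0 - θ j 0 = Dθ0 := by rw [hD]; exact hij
  have lip : ∀ (i : Fin N) x y, -τ ≤ x → -τ ≤ y → |θ i y - θ i x| ≤ Rω * |y - x| := by
    intro i x y hx hy
    have := Convex.norm_image_sub_le_of_norm_deriv_le (f := θ i) (s := Ici (-τ)) (C := Rω)
      (fun s _ => hdiff i s) (fun s hs => hR s hs i) (convex_Ici _) hx hy
    simpa [Real.norm_eq_abs] using this
  have h1 := lip j 0 t (by linarith) (by linarith)
  have h2 := lip i 0 (t - τ) (by linarith) (by linarith)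
  rw [sub_zero, abs_of_nonneg ht] at h1
  rw [sub_zero, abs_of_nonpos (by linarith : t - τ ≤ 0)] at h2
  refine ⟨j, i, Real.cos_nonpos_of_pi_div_two_le_of_le ?_ ?_⟩ <;>
  · have h1' := abs_le.1 h1
    have h2' := abs_le.1 h2
    nlinarith [h1'.1, h1'.2, h2'.1, h2'.2, Real.pi_pos]

/-- Under (H1)-(H3) and the confinement estimate, if the weight
`η > 0` satisfies `2κ - η e^{-τ} + κη(1 - e^{-τ}) ≤ 0` and
`-κζ_* + κη(1 - e^{-τ}) < 0`, then the Lyapunov functional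
`L(t) = D(ω(t)) + η ∫_{t-τ}^t e^{-(t-s)} ∫_s^t max_j |ω̇_j(σ)| dσ ds`
satisfies `D⁺L(t) ≤ -γ L(t)` on `[t_*, ∞)` for some `γ > 0`; in particular
`L` and hence `D(ω)` decay exponentially there. -/
theorem delayed_kuramoto_lyapunov_decay
    {N : ℕ} (hN : 2 < N)
    (θ : Fin N → ℝ → ℝ) (Ω : Fin N → ℝ) (κ τ δ Rω : ℝ)
    (Dθ0 DΩ Dstar : ℝ)
    (hκ : 0 < κ) (hτ : 0 ≤ τ)
    (hC1 : ∀ i, ContDiff ℝ 1 (θ i))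
    (hODE : ∀ i, ∀ t : ℝ, 0 < t →
      deriv (θ i) t = Ω i + (κ / (N : ℝ)) *
        ∑ k ∈ Finset.univ.erase i, Real.sin (θ k (t - τ) - θ i t))
    (hRω : IsLUB {x : ℝ | ∃ t : ℝ, -τ ≤ t ∧ ∃ i, x = |deriv (θ i) t|} Rω)
    (hDθ0 : Dθ0 = ⨆ i, ⨆ j, |θ i 0 - θ j 0|)
    (hDΩ : DΩ = ⨆ i, ⨆ j, |Ω i - Ω j|)
    (hDstar : Dstar = π - Dθ0)
    (hδ : 0 < δ) (hδ' : δ < π / 2)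
    (hH1 : π / 2 < Dθ0 ∧ Dθ0 < π - δ)
    (hH2 : κ > ((N : ℝ) / ((N : ℝ) - 2)) * DΩ /
      (2 * Real.sin (Dθ0 / 2) * Real.cos ((Dθ0 + δ) / 2)))
    (hH3 : τ < min (δ / (2 * Rω)) ((π / 2 - Dstar) / Rω))
    (hωODE : ∀ i, ∀ t : ℝ, 0 < t →
      deriv (deriv (θ i)) t = (κ / (N : ℝ)) *
        ∑ k ∈ Finset.univ.erase i,
          Real.cos (θ k (t - τ) - θ i t) * (deriv (θ k) (t - τ) - deriv (θ i) t))
    (tstar ζstar η : ℝ) (htstar : 0 < tstar)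
    (hζstar : ζstar = Real.cos (Dstar + Rω * τ)) (hζpos : 0 < ζstar)
    (hconf : ∀ t ≥ tstar, ∀ i k : Fin N, ζstar < Real.cos (θ k (t - τ) - θ i t))
    (hη : 0 < η)
    (hη1 : 2 * κ - η * Real.exp (-τ) + κ * η * (1 - Real.exp (-τ)) ≤ 0)
    (hη2 : -κ * ζstar + κ * η * (1 - Real.exp (-τ)) < 0)
    (L : ℝ → ℝ)
    (hLdef : ∀ t, L t = (⨆ i, ⨆ j, |deriv (θ i) t - deriv (θ j) t|) +
      η * ∫ s in (t - τ)..t,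
        Real.exp (-(t - s)) * ∫ u in s..t, ⨆ j, |deriv (deriv (θ j)) u|) :
    ∃ γ > (0 : ℝ),
      (∀ t ≥ tstar, diniUpper L t ≤ -γ * L t) ∧
      (∀ t ≥ tstar, L t ≤ L tstar * Real.exp (-γ * (t - tstar))) ∧
      (∀ t ≥ tstar, (⨆ i, ⨆ j, |deriv (θ i) t - deriv (θ j) t|) ≤
        L tstar * Real.exp (-γ * (t - tstar))) := by
  have : NeZero N := ⟨by omega⟩
  have hdiff : ∀ i, Differentiable ℝ (θ i) := fun i => (hC1 i).differentiable one_ne_zero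
  have hωc : ∀ i, Continuous (deriv (θ i)) := fun i => (hC1 i).continuous_deriv le_rfl
  have hθc : ∀ i, Continuous (θ i) := fun i => (hdiff i).continuous
  have hR : ∀ s, -τ ≤ s → ∀ i, |deriv (θ i) s| ≤ Rω := fun s hs i => hRω.1 ⟨s, hs, i, rfl⟩
  -- `Rω = 0` is excluded because division by zero would turn the delay bound into `τ < 0`.
  have hRpos : 0 < Rω := by
    have h0 : 0 ≤ Rω := (abs_nonneg _).trans (hR 0 (by linarith) 0)
    rcases h0.eq_or_lt with h | h
    · rw [← h] at hH3
      simp at hH3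
      linarith
    · exact h
  have hτ1 : Rω * τ < δ / 2 := by
    have := hH3.trans_le (min_le_left _ _)
    rw [lt_div_iff₀ (by positivity)] at this
    linarith
  have hτ2 : Rω * τ < π / 2 - Dstar := by
    have := hH3.trans_le (min_le_right _ _)
    rw [lt_div_iff₀ hRpos] at this
    linarith
  have htτ : τ < tstar := by
    by_contra hcon
    obtain ⟨i, k, hik⟩ := exists_cos_nonpos hdiff hR hDθ0 (by linarith) (by linarith [hH1.2])
      htstar.le (not_lt.1 hcon)
    linarith [hconf tstar le_rfl i k]
  -- The right-hand side of the second-order system, a continuous function on all of `ℝ` that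
  -- agrees with the acceleration for positive times.
  set G : Fin N → ℝ → ℝ := fun i t =>
    force κ i (fun k => Real.cos (θ k (t - τ) - θ i t)) (fun k => deriv (θ k) (t - τ))
      (deriv (θ i) t) with hG
  have hGd : ∀ i, ∀ t : ℝ, 0 < t → deriv (deriv (θ i)) t = G i t := hωODE
  have hGc : ∀ i, Continuous (G i) := by
    intro i
    simp only [hG, force]
    fun_prop
  have hω' : ∀ i, ∀ t : ℝ, 0 < t → HasDerivAt (deriv (θ i)) (G i t) t := by
    intro i t ht
    rw [← hGd i t ht]
    refine DifferentiableAt.hasDerivAt ?_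
    have hev : deriv (θ i) =ᶠ[𝓝 t] fun t => Ω i + (κ / (N : ℝ)) *
        ∑ k ∈ Finset.univ.erase i, Real.sin (θ k (t - τ) - θ i t) := by
      filter_upwards [lt_mem_nhds ht] with s hs using hODE i s hs
    refine DifferentiableAt.congr_of_eventuallyEq ?_ hev
    have hdiff' : ∀ k, Differentiable ℝ fun t => θ k (t - τ) := fun k =>
      (hdiff k).comp (differentiable_id.sub_const τ)
    fun_prop
  set m : ℝ → ℝ := fun t => ⨆ j, |G j t| with hm
  have hmc : Continuous m := continuous_ciSup_fin fun j => (hGc j).abs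
  have hGm : ∀ j t, |G j t| ≤ m t := fun j t =>
    le_ciSup (f := fun j => |G j t|) (Set.finite_range _).bddAbove j
  have hm0 : ∀ t, 0 ≤ m t := fun t => (abs_nonneg _).trans (hGm 0 t)
  have hLm : ∀ t ≥ tstar, L t = spread (fun i => deriv (θ i) t) + η * memory τ m t := by
    intro t ht
    rw [hLdef]
    unfold memory spread
    congr 2
    refine intervalIntegral.integral_congr fun s hs => ?_
    rw [uIcc_of_le (by linarith)] at hs
    congr 1
    refine intervalIntegral.integral_congr fun u hu => ?_
    rw [uIcc_of_le hs.2] at hu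
    have hu0 : 0 < u := by linarith [hs.1, hu.1]
    simp only [hm, hGd _ u hu0]
  have hdelay : ∀ t ≥ tstar, ∀ k,
      |deriv (θ k) (t - τ) - deriv (θ k) t| ≤ ∫ u in (t - τ)..t, m u := by
    intro t ht k
    have hftc : ∫ u in (t - τ)..t, G k u = deriv (θ k) t - deriv (θ k) (t - τ) := by
      refine intervalIntegral.integral_eq_sub_of_hasDerivAt (fun u hu => ?_)
        ((hGc k).intervalIntegrable _ _)
      rw [uIcc_of_le (by linarith)] at hu
      exact hω' k u (by linarith [hu.1])
    rw [abs_sub_comm, ← hftc]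
    calc |∫ u in (t - τ)..t, G k u| ≤ ∫ u in (t - τ)..t, |G k u| :=
          intervalIntegral.abs_integral_le_integral_abs (by linarith)
      _ ≤ ∫ u in (t - τ)..t, m u :=
          intervalIntegral.integral_mono_on (by linarith) ((hGc k).abs.intervalIntegrable _ _)
            (hmc.intervalIntegrable _ _) fun u _ => hGm k u
  have hγ0 : 0 < κ * ζstar - κ * η * (1 - Real.exp (-τ)) := by linarith
  obtain ⟨γ, hγ, hγ1, hγ2⟩ : ∃ γ > (0 : ℝ), γ ≤ 1 ∧
      γ ≤ κ * ζstar - κ * η * (1 - Real.exp (-τ)) :=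
    ⟨min 1 _, lt_min one_pos hγ0, min_le_left _ _, min_le_right _ _⟩
  have hev : ∀ t ≥ tstar, ∀ᶠ z in 𝓝[>] t,
      L z = spread (fun i => deriv (θ i) z) + η * memory τ m z := by
    intro t ht
    filter_upwards [self_mem_nhdsWithin] with z hz
    exact hLm z (ht.trans (le_of_lt hz))
  have hupper : ∀ t ≥ tstar, ∀ r, -γ * L t < r →
      ∀ᶠ z in 𝓝[>] t, L z < L t + (z - t) * r := by
    intro t ht r hr
    have ht0 : 0 < t := by linarith
    set s := ∫ u in (t - τ)..t, m u with hs
    set D := spread (fun i => deriv (θ i) t) with hD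
    set Φ := memory τ m t with hΦ
    have hs0 : 0 ≤ s := (abs_nonneg _).trans (hdelay t ht 0)
    have hD0 : 0 ≤ D := (abs_nonneg _).trans (abs_sub_le_spread (fun i => deriv (θ i) t) 0 0)
    have hΦ0 : 0 ≤ Φ := memory_nonneg hτ hm0 t
    have hmt : m t ≤ κ * D + κ * s := ciSup_le fun j =>
      abs_force_le (w := fun i => deriv (θ i) t) hκ j (fun k => Real.abs_cos_le_one _)
        (hdelay t ht)
    have hA : ∀ i j, deriv (θ i) t - deriv (θ j) t = D →
        G i t - G j t ≤ -κ * ζstar * D + 2 * κ * s := fun i j hij =>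
      force_sub_le (w := fun i => deriv (θ i) t) hκ hζpos.le
        (fun k => (hconf t ht i k).le) (fun k => Real.cos_le_one _)
        (fun k => (hconf t ht j k).le) (fun k => Real.cos_le_one _) (hdelay t ht) hij
    set d := (1 - Real.exp (-τ)) * m t - Φ - Real.exp (-τ) * s with hd
    have he : 0 ≤ 1 - Real.exp (-τ) := by
      have : Real.exp (-τ) ≤ 1 := Real.exp_le_one_iff.2 (by linarith)
      linarith
    -- The two smallness conditions on `η` absorb the `s` terms and leave a negative `D` term.
    have hrate : (-κ * ζstar * D + 2 * κ * s) + η * d ≤ -γ * L t := by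
      rw [hLm t ht]
      have e1 : η * ((1 - Real.exp (-τ)) * m t) ≤
          η * ((1 - Real.exp (-τ)) * (κ * D + κ * s)) :=
        mul_le_mul_of_nonneg_left (mul_le_mul_of_nonneg_left hmt he) hη.le
      have e2 := mul_le_mul_of_nonneg_right hη1 hs0
      have e3 := mul_le_mul_of_nonneg_right hγ2 hD0
      have e4 := mul_le_mul_of_nonneg_right hγ1 (mul_nonneg hη.le hΦ0)
      simp only [hd]
      linarith
    set ε := (r - -γ * L t) / (2 * (1 + η)) with hε
    have hε0 : 0 < ε := div_pos (by linarith) (by positivity)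
    have hε1 : 2 * (ε * (1 + η)) = r - -γ * L t := by
      rw [hε]; field_simp
    have h1 := spread_eventually_lt (fun i => hω' i t ht0) hA (lt_add_of_pos_right _ hε0)
    have h2 := (hasDerivAt_memory (τ := τ) hmc t).eventually_lt_right
      (lt_add_of_pos_right _ hε0)
    filter_upwards [h1, h2, hev t ht, self_mem_nhdsWithin] with z h1 h2 h3 hz
    have hz' : 0 < z - t := sub_pos.2 hz
    have h4 := mul_lt_mul_of_pos_left h2 hη
    have h5 : (z - t) * ((-κ * ζstar * D + 2 * κ * s + ε) + η * (d + ε)) ≤ (z - t) * r := by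
      refine mul_le_mul_of_nonneg_left ?_ hz'.le
      have : 0 < ε * (1 + η) := by positivity
      linarith
    rw [h3, hLm t ht]
    linarith
  have hlower : ∀ t ≥ tstar, ∃ c, ∀ᶠ z in 𝓝[>] t, L t + (z - t) * c ≤ L z := by
    intro t ht
    obtain ⟨c, hc⟩ := exists_eventually_le_spread fun i => hω' i t (by linarith)
    have h2 := (hasDerivAt_memory (τ := τ) hmc t).neg.eventually_lt_right (lt_add_one _)
    set d := (1 - Real.exp (-τ)) * m t - memory τ m t - Real.exp (-τ) * ∫ u in (t - τ)..t, m u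
    refine ⟨c + η * (d - 1), ?_⟩
    filter_upwards [hc, h2, hev t ht] with z h1 h2 h3
    simp only [Pi.neg_apply] at h2
    have h4 := mul_lt_mul_of_pos_left h2 hη
    rw [h3, hLm t ht]
    linarith
  have hLc : ContinuousOn L (Ici tstar) := by
    have hΦc : Continuous (memory τ m) :=
      continuous_iff_continuousAt.2 fun t => (hasDerivAt_memory hmc t).continuousAt
    refine ContinuousOn.congr (f := fun t => spread (fun i => deriv (θ i) t) + η * memory τ m t)
      ?_ fun t ht => hLm t ht
    exact ((continuous_spread hωc).add (continuous_const.mul hΦc)).continuousOn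
  have hdecay := exp_decay_of_slope hLc hupper
  refine ⟨γ, hγ, fun t ht => ?_, hdecay, fun t ht => ?_⟩
  · obtain ⟨c, hc⟩ := hlower t ht
    exact diniUpper_le_s8 (hupper t ht) hc
  · refine le_trans ?_ (hdecay t ht)
    rw [hLm t ht]
    exact le_add_of_nonneg_right (mul_nonneg hη.le (memory_nonneg hτ hm0 t))
end

section
/- Let D_{θ0} ∈ (π/2, π), set D_* := π − D_{θ0} ∈ (0, π/2), and let α ∈ [0, π/2). Then for every D ∈ [D_*, D_{θ0}] one has 2 sin(D/2) cos(D/2 + α) ≥ 2 sin(D_{θ0}/2) cos(D_{θ0}/2 + α). In particular, using the identity 2 sin(D/2) cos(D/2 + α) = sin D · cos α − 2 sin²(D/2) · sin α, this follows from sin D ≥ sin D_{θ0} and sin(D/2) ≤ sin(D_{θ0}/2) for D ∈ [D_*, D_{θ0}]. -/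
open Real Set

/-! By product-to-sum, `2 sin(D/2) cos(D/2 + α) = sin(D + α) - sin α`, so the claim is
`sin(D + α) ≥ sin(Dθ0 + α)`. By sum-to-product the difference of these two sines is
`2 sin((D - Dθ0)/2) cos((D + Dθ0)/2 + α)`, and both factors are nonpositive: the first argument
lies in `[-π, 0]`, and the second in `[π/2, 3π/2]`, the lower bound being exactly
`D ≥ π - Dθ0`. -/

/-- For `D_{θ0} ∈ (π/2, π)`, `D_* = π - D_{θ0}` and
`α ∈ [0, π/2)`, the function `D ↦ 2 sin(D/2) cos(D/2 + α)` on `[D_*, D_{θ0}]` is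
bounded below by its value at `D_{θ0}`. -/
theorem trig_monotonicity_on_dual_interval (Dθ0 α : ℝ)
    (hDθ0 : Dθ0 ∈ Set.Ioo (π / 2) π) (hα : α ∈ Set.Ico 0 (π / 2)) :
    ∀ D ∈ Set.Icc (π - Dθ0) Dθ0,
      2 * Real.sin (D / 2) * Real.cos (D / 2 + α) ≥
        2 * Real.sin (Dθ0 / 2) * Real.cos (Dθ0 / 2 + α) := by
  rintro D ⟨hD₁, hD₂⟩
  obtain ⟨h₁, h₂⟩ := hDθ0
  obtain ⟨hα₁, hα₂⟩ := hα
  have product_to_sum (x : ℝ) :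
      2 * Real.sin (x / 2) * Real.cos (x / 2 + α) = Real.sin (x + α) - Real.sin α := by
    rw [Real.sin_sub_sin]
    ring_nf
  have hsin : Real.sin ((D + α - (Dθ0 + α)) / 2) ≤ 0 :=
    Real.sin_nonpos_of_nonpos_of_neg_pi_le (by linarith) (by linarith)
  have hcos : Real.cos ((D + α + (Dθ0 + α)) / 2) ≤ 0 :=
    Real.cos_nonpos_of_pi_div_two_le_of_le (by linarith) (by linarith)
  have hdiff := Real.sin_sub_sin (D + α) (Dθ0 + α)
  rw [product_to_sum, product_to_sum]
  linarith [mul_nonneg_of_nonpos_of_nonpos hsin hcos]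
end

section
/- Let N > 2 and let θ = (θ_1, …, θ_N) be a global classical solution of the delayed Kuramoto system with initial phase diameter D_{θ0} = π/2. Assume κ > (N/(N−2)) · D(Ω) / (cos(R_ω τ) − sin(R_ω τ)) and τ < δ/(2R_ω) for some δ ∈ (0, π/2). Then there exist η ∈ (0, π/2) and t_{**} > 0 such that D(θ(t)) ≤ η < π/2 for all t ≥ t_{**}. -/
open Real Filter Set

/-!
Write `a = Rω τ`. The hypothesis on `τ` forces `0 ≤ a < π / 4`, and by the mean value theorem each
delayed phase `θ k (t - τ)` lies within `a` of `θ k t`. Suppose that at time `t ≥ 0` the phase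
diameter equals `D ∈ [π / 4, π / 2]` and that it is attained by the pair `(i, j)`, with `i` on top.
Every `k ≠ i, j` contributes at most `-(sin (D + a) - sin a)` to the difference of the two coupling
sums (`sin_sub_sin_le`), and the terms coming from the pair itself are nonpositive, so
`(θ i - θ j)' ≤ D(Ω) - (κ (N - 2) / N) (sin (D + a) - sin a)` (`deriv_sub_le`).
At `D = π / 2` the right-hand side is
`D(Ω) - (κ (N - 2) / N) (cos a - sin a)`, which is negative by the assumption on `κ`. By continuity
it stays below some `-s < 0` for all `D ∈ [η, π / 2]`, for a suitable `η < π / 2`.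

Hence the diameter cannot cross the line `π / 2 - s t` until that line reaches `η`, and from then
on it cannot cross the constant `η`. Both are instances of the comparison lemma `barrier`, applied
to the finite family of differences `θ i - θ j`, which avoids differentiating the diameter.
-/

/-- A finite family of differentiable functions that starts below an affine barrier stays below it,
provided that a member touching the barrier, while no member is above it, has derivative smaller
than the slope of the barrier. -/
lemma barrier {ι : Type*} [Finite ι] (g : ι → ℝ → ℝ) (hg : ∀ p, Differentiable ℝ (g p))
    (c m t₀ t₁ : ℝ) (h0 : ∀ p, g p t₀ ≤ c + m * t₀)
    (hd : ∀ t ∈ Ico t₀ t₁, (∀ q, g q t ≤ c + m * t) → ∀ p, g p t = c + m * t →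
      deriv (g p) t < m) :
    ∀ t ∈ Icc t₀ t₁, ∀ p, g p t ≤ c + m * t := by
  rcases lt_or_ge t₁ t₀ with h01 | h01
  · intro t ht; linarith [ht.1, ht.2]
  set S : Set ℝ := {t | ∀ p, g p t ≤ c + m * t} with hS
  have hclosed : IsClosed S := by
    have : S = ⋂ p, {t | g p t ≤ c + m * t} := by ext; simp [hS]
    rw [this]
    exact isClosed_iInter fun p => isClosed_le (hg p).continuous (by fun_prop)
  have key : Icc t₀ t₁ ⊆ S := by
    refine IsClosed.Icc_subset_of_forall_exists_gt (hclosed.inter isClosed_Icc) h0 ?_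
    rintro x ⟨hxS, hx⟩ y hy
    have hev : ∀ᶠ z in nhdsWithin x (Ioi x), ∀ p, g p z ≤ c + m * z := by
      rw [eventually_all]
      intro p
      rcases (hxS p).lt_or_eq with hlt | heq
      · have : ∀ᶠ z in nhds x, g p z < c + m * z :=
          ((hg p).continuous.tendsto x).eventually_lt
            ((by fun_prop : Continuous fun z : ℝ => c + m * z).tendsto x) hlt
        filter_upwards [nhdsWithin_le_nhds this] with z hz using hz.le
      · have hsl := hasDerivAt_iff_tendsto_slope.1 ((hg p) x).hasDerivAt
        have := (hsl.mono_left (nhdsWithin_mono x (fun z (hz : x < z) => hz.ne'))).eventually_lt_const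
          (hd x hx hxS p heq)
        filter_upwards [this, self_mem_nhdsWithin] with z hz hxz
        have hxz' : 0 < z - x := sub_pos.2 hxz
        rw [slope_def_field, div_lt_iff₀ hxz'] at hz
        rw [heq] at hz
        linarith
    obtain ⟨z, hz, hz'⟩ := (hev.and (Ioc_mem_nhdsGT hy)).exists
    exact ⟨z, hz, hz'⟩
  exact fun t ht => key ht

/-- If `u` lies in the interval `[y, x]` of length `D` enlarged by `a` on both sides, then the
opposing pulls of `u` on the end points shrink the interval at rate at least
`sin (D + a) - sin a`. -/
lemma sin_sub_sin_le_s13 {u x y D a : ℝ} (hD : x - y = D) (hD0 : 0 ≤ D) (hDa : D / 2 + a ≤ π)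
    (hDpi : D ≤ π) (h1 : y - a ≤ u) (h2 : u ≤ x + a) :
    Real.sin (u - x) - Real.sin (u - y) ≤ -(Real.sin (D + a) - Real.sin a) := by
  rw [Real.sin_sub_sin, Real.sin_sub_sin]
  have e1 : (u - x - (u - y)) / 2 = -(D / 2) := by rw [← hD]; ring
  have e2 : (u - x + (u - y)) / 2 = u - (x + y) / 2 := by ring
  have e3 : (D + a - a) / 2 = D / 2 := by ring
  have e4 : (D + a + a) / 2 = D / 2 + a := by ring
  rw [e1, e2, e3, e4, Real.sin_neg]
  have hs : 0 ≤ Real.sin (D / 2) := Real.sin_nonneg_of_nonneg_of_le_pi (by linarith) (by linarith)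
  have hc : Real.cos (D / 2 + a) ≤ Real.cos (u - (x + y) / 2) := by
    rw [← Real.cos_abs (u - (x + y) / 2)]
    refine Real.cos_le_cos_of_nonneg_of_le_pi (abs_nonneg _) hDa ?_
    rw [abs_le]
    constructor <;> linarith
  nlinarith [mul_le_mul_of_nonneg_left hc hs]

/-- Decay estimate for the difference of the extremal phases, for given delayed phases `v k`
within `a` of the current phases `p k`. -/
lemma deriv_sub_le {N : ℕ} (p v Ω : Fin N → ℝ) {κ a D DΩ : ℝ} (hκ : 0 < κ)
    (haπ : a < π / 4) (hD1 : π / 4 ≤ D) (hD2 : D ≤ π / 2)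
    (hv : ∀ k, |v k - p k| ≤ a) (hp : ∀ k l, p k - p l ≤ D) {i j : Fin N} (hij : p i - p j = D)
    (hΩ : Ω i - Ω j ≤ DΩ) :
    (Ω i + (κ / (N : ℝ)) * ∑ k ∈ Finset.univ.erase i, Real.sin (v k - p i)) -
      (Ω j + (κ / (N : ℝ)) * ∑ k ∈ Finset.univ.erase j, Real.sin (v k - p j)) ≤
      DΩ - (κ / (N : ℝ)) * (((N : ℝ) - 2) * (Real.sin (D + a) - Real.sin a)) := by
  have hπ := Real.pi_pos
  have hne : i ≠ j := by
    rintro rfl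
    rw [sub_self] at hij; linarith
  have hi := abs_le.1 (hv i)
  have hj := abs_le.1 (hv j)
  have hsj : Real.sin (v j - p i) ≤ 0 :=
    Real.sin_nonpos_of_nonpos_of_neg_pi_le (by linarith) (by linarith)
  have hsi : 0 ≤ Real.sin (v i - p j) :=
    Real.sin_nonneg_of_nonneg_of_le_pi (by linarith) (by linarith)
  have hji : j ∈ Finset.univ.erase i := by simp [hne.symm]
  have hij' : i ∈ Finset.univ.erase j := by simp [hne]
  rw [← Finset.add_sum_erase _ _ hji, ← Finset.add_sum_erase _ _ hij',
    Finset.erase_right_comm (a := j) (b := i)]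
  set S := (Finset.univ.erase i).erase j with hS
  have hN : 2 ≤ N := by
    have := Finset.card_le_univ ({i, j} : Finset (Fin N))
    rwa [Finset.card_pair hne, Fintype.card_fin] at this
  have hcard : (S.card : ℝ) = (N : ℝ) - 2 := by
    rw [hS, Finset.card_erase_of_mem hji, Finset.card_erase_of_mem (Finset.mem_univ i),
      Finset.card_univ, Fintype.card_fin, Nat.sub_sub, Nat.cast_sub hN]
    norm_num
  have hsum : ∑ k ∈ S, Real.sin (v k - p i) - ∑ k ∈ S, Real.sin (v k - p j) ≤
      -(((N : ℝ) - 2) * (Real.sin (D + a) - Real.sin a)) := by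
    rw [← Finset.sum_sub_distrib, ← hcard, ← mul_neg, ← nsmul_eq_mul]
    refine Finset.sum_le_card_nsmul _ _ _ fun k _ => ?_
    have hk := abs_le.1 (hv k)
    exact sin_sub_sin_le_s13 hij (by linarith) (by linarith) (by linarith)
      (by linarith [hp i k]) (by linarith [hp k j])
  have hκN : 0 ≤ κ / (N : ℝ) := by positivity
  have := mul_le_mul_of_nonneg_left hsum hκN
  nlinarith [mul_nonneg hκN hsi, mul_nonneg hκN (neg_nonneg.2 hsj)]

lemma le_iSup_iSup_abs_sub {N : ℕ} (f : Fin N → ℝ) (i j : Fin N) :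
    f i - f j ≤ ⨆ i, ⨆ j, |f i - f j| :=
  (le_abs_self _).trans <|
    (le_ciSup (f := fun j => |f i - f j|) (Set.finite_range _).bddAbove j).trans <|
      le_ciSup (f := fun i => ⨆ j, |f i - f j|) (Set.finite_range _).bddAbove i

/-- Critical case `D_{θ0} = π/2`: if
`κ > (N/(N-2)) D(Ω)/(cos(R_ω τ) - sin(R_ω τ))` and `τ < δ/(2R_ω)` for some
`δ ∈ (0, π/2)`, then the phase diameter is eventually confined below some
`η < π/2`. -/
theorem delayed_kuramoto_critical_case
    {N : ℕ} (hN : 2 < N)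
    (θ : Fin N → ℝ → ℝ) (Ω : Fin N → ℝ) (κ τ δ Rω DΩ : ℝ)
    (hκ : 0 < κ) (hτ : 0 ≤ τ)
    (hC1 : ∀ i, ContDiff ℝ 1 (θ i))
    (hODE : ∀ i, ∀ t : ℝ, 0 < t →
      deriv (θ i) t = Ω i + (κ / (N : ℝ)) *
        ∑ k ∈ Finset.univ.erase i, Real.sin (θ k (t - τ) - θ i t))
    (hRω : IsLUB {x : ℝ | ∃ t : ℝ, -τ ≤ t ∧ ∃ i, x = |deriv (θ i) t|} Rω)
    (hDΩ : DΩ = ⨆ i, ⨆ j, |Ω i - Ω j|)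
    (hDθ0 : (⨆ i, ⨆ j, |θ i 0 - θ j 0|) = π / 2)
    (hδ : 0 < δ) (hδ' : δ < π / 2)
    (hκ2 : κ > ((N : ℝ) / ((N : ℝ) - 2)) * DΩ /
      (Real.cos (Rω * τ) - Real.sin (Rω * τ)))
    (hτδ : τ < δ / (2 * Rω)) :
    ∃ η : ℝ, 0 < η ∧ η < π / 2 ∧ ∃ tss > (0 : ℝ), ∀ t ≥ tss,
      (⨆ i, ⨆ j, |θ i t - θ j t|) ≤ η := by
  have hπ := Real.pi_pos
  have hN' : (2 : ℝ) < N := by exact_mod_cast hN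
  have hdiff : ∀ i, Differentiable ℝ (θ i) := fun i => (hC1 i).differentiable (by norm_num)
  have hbound : ∀ t, -τ ≤ t → ∀ i, |deriv (θ i) t| ≤ Rω := fun t ht i => hRω.1 ⟨t, ht, i, rfl⟩
  -- `Rω = 0` is impossible: then `δ / (2 * Rω) = 0` by convention, and `τ < 0`.
  have hR : 0 < Rω := by
    have h0 : 0 ≤ Rω := (abs_nonneg _).trans (hbound 0 (by linarith) ⟨0, by omega⟩)
    rcases h0.eq_or_lt with h | h
    · rw [← h] at hτδ
      simp at hτδ
      linarith
    · exact h
  obtain ⟨a, ha⟩ : ∃ a, a = Rω * τ := ⟨_, rfl⟩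
  rw [← ha] at hκ2
  have ha0 : 0 ≤ a := by rw [ha]; positivity
  have haπ : a < π / 4 := by
    rw [lt_div_iff₀ (by positivity)] at hτδ
    rw [ha]; linarith
  have hcs : 0 < Real.cos a - Real.sin a := by
    rw [← Real.sin_pi_div_two_sub, sub_pos]
    exact Real.sin_lt_sin_of_lt_of_le_pi_div_two (by linarith) (by linarith) (by linarith)
  have hdelay : ∀ t, 0 ≤ t → ∀ k, |θ k (t - τ) - θ k t| ≤ a := by
    intro t ht k
    have := Convex.norm_image_sub_le_of_norm_deriv_le (f := θ k) (C := Rω) (s := Icc (t - τ) t)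
      (x := t) (y := t - τ)
      (fun x _ => hdiff k x) (fun x hx => hbound x (by linarith [hx.1]) k) (convex_Icc _ _)
      ⟨by linarith, le_rfl⟩ ⟨le_rfl, by linarith⟩
    rw [ha]
    simpa [abs_of_nonneg hτ] using this
  -- The equation extends to `t = 0` by continuity of both sides.
  have hODE' : ∀ i, ∀ t : ℝ, 0 ≤ t → deriv (θ i) t = Ω i + (κ / (N : ℝ)) *
        ∑ k ∈ Finset.univ.erase i, Real.sin (θ k (t - τ) - θ i t) := by
    intro i t ht
    have hc : ∀ k, Continuous (θ k) := fun k => (hdiff k).continuous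
    have h := Set.EqOn.closure (s := Ioi (0 : ℝ)) (f := deriv (θ i))
      (g := fun t => Ω i + (κ / (N : ℝ)) *
        ∑ k ∈ Finset.univ.erase i, Real.sin (θ k (t - τ) - θ i t))
      (fun t ht => hODE i t ht) ((hC1 i).continuous_deriv (by norm_num)) (by fun_prop)
    rw [closure_Ioi] at h
    exact h ht
  obtain ⟨H, hH⟩ : ∃ H : ℝ → ℝ, H = fun D => DΩ - (κ / (N : ℝ)) *
      (((N : ℝ) - 2) * (Real.sin (D + a) - Real.sin a)) := ⟨_, rfl⟩
  have hHc : Continuous H := by rw [hH]; fun_prop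
  have hH0 : H (π / 2) < 0 := by
    rw [gt_iff_lt, div_lt_iff₀ hcs, div_mul_eq_mul_div, div_lt_iff₀ (by linarith)] at hκ2
    rw [hH]
    simp only
    rw [add_comm (π / 2), Real.sin_add_pi_div_two, sub_neg, div_mul_eq_mul_div,
      lt_div_iff₀ (by linarith)]
    linarith
  obtain ⟨s, hs⟩ : ∃ s, s = -H (π / 2) / 2 := ⟨_, rfl⟩
  have hs0 : 0 < s := by rw [hs]; linarith
  obtain ⟨η, hη1, hη2, hηH⟩ : ∃ η, π / 4 ≤ η ∧ η < π / 2 ∧ ∀ D ∈ Icc η (π / 2), H D < -s := by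
    have hev : ∀ᶠ D in nhds (π / 2), H D < -s :=
      hHc.continuousAt.eventually_lt_const (by rw [hs]; linarith)
    obtain ⟨ε, hε, hball⟩ := Metric.eventually_nhds_iff.1 hev
    refine ⟨max (π / 4) (π / 2 - ε / 2), le_max_left _ _,
      max_lt (by linarith) (by linarith), fun D hD => hball ?_⟩
    have := (le_max_right _ _).trans hD.1
    rw [Real.dist_eq, abs_lt]
    constructor <;> linarith [hD.2]
  have hdec : ∀ t, 0 ≤ t → ∀ B ∈ Icc η (π / 2),
      (∀ q : Fin N × Fin N, θ q.1 t - θ q.2 t ≤ B) → ∀ q : Fin N × Fin N,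
      θ q.1 t - θ q.2 t = B → deriv (fun t => θ q.1 t - θ q.2 t) t < -s := by
    intro t ht B hB hall q hq
    rw [deriv_fun_sub (hdiff _ t) (hdiff _ t), hODE' _ t ht, hODE' _ t ht]
    refine lt_of_le_of_lt (deriv_sub_le (fun k => θ k t) (fun k => θ k (t - τ)) Ω hκ haπ
      (hη1.trans hB.1) hB.2 (hdelay t ht) (fun k l => hall (k, l)) hq
      (hDΩ ▸ le_iSup_iSup_abs_sub Ω q.1 q.2)) ?_
    have := hηH B hB
    rwa [hH] at this
  have hgd : ∀ q : Fin N × Fin N, Differentiable ℝ (fun t => θ q.1 t - θ q.2 t) :=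
    fun q => (hdiff q.1).sub (hdiff q.2)
  -- The time at which the decreasing barrier `π / 2 - s * t` reaches `η`.
  obtain ⟨T, hT⟩ : ∃ T, T = (π / 2 - η) / s := ⟨_, rfl⟩
  have hT0 : 0 < T := by rw [hT]; exact div_pos (by linarith) hs0
  have hTs : s * T = π / 2 - η := by rw [hT]; field_simp
  have hphase1 := barrier (fun (q : Fin N × Fin N) t => θ q.1 t - θ q.2 t) hgd (π / 2) (-s) 0 T
    (fun q => by
      have := le_iSup_iSup_abs_sub (fun i => θ i 0) q.1 q.2
      rw [hDθ0] at this
      simpa using this)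
    (fun t ht hall q hq => by
      have h1 : s * t ≤ s * T := mul_le_mul_of_nonneg_left ht.2.le hs0.le
      have h2 : 0 ≤ s * t := mul_nonneg hs0.le ht.1
      exact hdec t ht.1 _ ⟨by linarith, by linarith⟩ hall q hq)
  have hatT : ∀ q : Fin N × Fin N, θ q.1 T - θ q.2 T ≤ η := fun q => by
    have := hphase1 T ⟨hT0.le, le_rfl⟩ q
    linarith
  have hphase2 : ∀ t ≥ T, ∀ q : Fin N × Fin N, θ q.1 t - θ q.2 t ≤ η := fun t ht q => by
    have := barrier (fun (q : Fin N × Fin N) t => θ q.1 t - θ q.2 t) hgd η 0 T t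
      (fun q => by simpa using hatT q)
      (fun t ht hall q hq => by
        simp only [zero_mul, add_zero] at hall hq
        linarith [hdec t (hT0.le.trans ht.1) η ⟨le_rfl, hη2.le⟩ hall q hq]) t ⟨ht, le_rfl⟩ q
    simpa using this
  have : Nonempty (Fin N) := ⟨⟨0, by omega⟩⟩
  refine ⟨η, by linarith, hη2, T, hT0, fun t ht => ?_⟩
  refine ciSup_le fun i => ciSup_le fun j => abs_le.2 ⟨?_, hphase2 t ht (i, j)⟩
  linarith [hphase2 t ht (j, i)]
end
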